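/- arXiv:2203.06268 — 2 statements merged into one kernel-verified Lean document; each statement's English description precedes it below -/
import Mathlib

section
/- There exists a constant δ > 0 and N ∈ ℕ such that for all n ≥ N, C(n) ≤ n!·(c + exp(−δ·(log n · log log n)^{1/2}))^n. -/
open Real Filter

/-- `C(n)`: the number of coprime permutations of `{1, …, n}`,
i.e. permutations `σ` with `gcd(m, σ(m)) = 1` for all `m ∈ {1, …, n}`. -/
noncomputable def coprimePermCount (n : ℕ) : ℕ :=
  Nat.card {σ : Equiv.Perm (Fin n) // ∀ m : Fin n, Nat.gcd (m.1 + 1) ((σ m).1 + 1) = 1}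

/-- The constant `c = ∏_p (p-1)^{2(1-1/p)} / (p · (p-2)^{1-2/p})`, where the factor at
`p = 2` is `1/2` (real powers, with `(0:ℝ) ^ (0:ℝ) = 1`). -/
noncomputable def coprimeConst : ℝ :=
  ∏' p : Nat.Primes,
    (((p : ℕ) : ℝ) - 1) ^ (2 * (1 - 1 / ((p : ℕ) : ℝ))) /
      (((p : ℕ) : ℝ) * (((p : ℕ) : ℝ) - 2) ^ (1 - 2 / ((p : ℕ) : ℝ)))

/-! Let `P` be the set of primes up to `exp y`, where `y = √(log n · log log n)`. The kernel
`K(a, b) = ∏_{p ∈ P} (1 - θ c_p(a) c_p(b) / (p - 1)²)`, with `c_p` the Ramanujan sum and `θ`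
slightly below `1`, is nonnegative. If `σ` is coprime then, for each `p ∈ P`, exactly `2⌊n/p⌋` of
the pairs `(σ m, m)` have an entry divisible by `p`, so `∏_m K(σ m, m)` does not depend on `σ`; it
is `(∏_{p ∈ P} c(p))⁻ⁿ` up to a subexponential factor, with `c(p)` the Euler factor of `c`. Hence
`C(n)` is at most `(∏_{p ∈ P} c(p))ⁿ` times the permanent of `K`, up to such factors.

The row of `K` at `a` depends only on the set of primes of `P` dividing `a`, and Rankin's trick
shows that few sets occur. A nonnegative matrix with few distinct rows has permanent at most about
`n!` times the product of its column averages, by double counting and Stirling's formula, and the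
column averages of `K` contribute little because `c_p` has mean zero over each period. Finally,
the primes beyond `exp y` change the Euler product by `O(exp (-y))`. -/

section Permanent

open Finset Equiv
open scoped Nat

variable {α β : Type*} [Fintype α] [DecidableEq β]

theorem card_perm_comp_eq_le [DecidableEq α] (t f : α → β) :
    #{σ : Perm α | t ∘ σ = f} ≤ ∏ c ∈ univ.image t, (#{a | t a = c})! := by
  rcases eq_empty_or_nonempty {σ : Perm α | t ∘ σ = f} with hempty | ⟨σ₀, hσ₀⟩
  · simp [hempty]
  · obtain rfl : t ∘ σ₀ = f := by simpa using hσ₀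
    have hstab := DomMulAct.stabilizer_card' t
    rw [Fintype.card_subtype] at hstab
    simp only [Fintype.card_subtype] at hstab
    rw [← hstab]
    refine card_le_card_of_injOn (· * σ₀⁻¹) (fun σ hσ => ?_) (mul_left_injective _).injOn
    have hσ : t ∘ σ = t ∘ σ₀ := by simpa using hσ
    simpa [Function.comp_assoc] using congrArg (· ∘ ⇑σ₀⁻¹) hσ

theorem card_fun_comp_eq [DecidableEq α] (t : α → β) (σ : Perm α) :
    #{g : α → α | t ∘ g = t ∘ σ} = ∏ a, #{b | t b = t a} := by
  have hpi : ({g : α → α | t ∘ g = t ∘ σ} : Finset (α → α)) =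
      Fintype.piFinset fun a => {b | t b = t (σ a)} := by
    ext g
    simp [funext_iff]
  rw [hpi, Fintype.card_piFinset]
  exact Equiv.prod_comp σ fun a => #{b | t b = t a}

/- Double counting of the pairs `(σ, g)` of a permutation and a self-map with `t ∘ σ = t ∘ g`:
each `σ` lies in `∏ a, #{b | t b = t a}` of them, each `g` in at most `∏ c, #{a | t a = c}!`. -/
theorem permanent_mul_prod_card_fiber_le [DecidableEq α] {R : Type*} [CommSemiring R]
    [PartialOrder R] [IsOrderedRing R] {M : Matrix α α R} (hM : ∀ i j, 0 ≤ M i j) {t : α → β}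
    (ht : ∀ i i', t i = t i' → M i = M i') :
    M.permanent * ∏ a, (#{b | t b = t a} : R) ≤
      (∏ c ∈ univ.image t, ((#{a | t a = c})! : R)) * ∏ j, ∑ i, M i j := by
  have hrow {g g' : α → α} (h : t ∘ g = t ∘ g') : ∏ j, M (g j) j = ∏ j, M (g' j) j :=
    prod_congr rfl fun j _ => congrFun (ht _ _ (congrFun h j)) j
  calc M.permanent * ∏ a, (#{b | t b = t a} : R)
      = ∑ σ : Perm α, ∑ g : α → α with t ∘ g = t ∘ σ, ∏ j, M (g j) j := by
        rw [Matrix.permanent, sum_mul]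
        refine sum_congr rfl fun σ _ => ?_
        rw [sum_congr rfl fun g hg => hrow (mem_filter.1 hg).2, sum_const, card_fun_comp_eq,
          nsmul_eq_mul, mul_comm, Nat.cast_prod]
    _ = ∑ g : α → α, ∑ σ ∈ {σ : Perm α | t ∘ σ = t ∘ g}, ∏ j, M (g j) j :=
        sum_comm' fun σ g => by simp only [mem_univ, mem_filter, true_and, and_true, eq_comm]
    _ ≤ ∑ g : α → α, (∏ c ∈ univ.image t, ((#{a | t a = c})! : R)) * ∏ j, M (g j) j := by
        refine sum_le_sum fun g _ => ?_
        rw [sum_const, nsmul_eq_mul]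
        refine mul_le_mul_of_nonneg_right ?_ (prod_nonneg fun j _ => hM _ _)
        exact_mod_cast Nat.mono_cast (α := R) (card_perm_comp_eq_le t (t ∘ g))
    _ = (∏ c ∈ univ.image t, ((#{a | t a = c})! : R)) * ∏ j, ∑ i, M i j := by
        rw [← mul_sum, prod_univ_sum, Fintype.piFinset_univ]

theorem factorial_le_exp_mul_sqrt_mul_pow {m : ℕ} (hm : m ≠ 0) :
    (m ! : ℝ) ≤ exp 1 * √m * (m / exp 1) ^ m := by
  obtain ⟨k, rfl⟩ := Nat.exists_eq_succ_of_ne_zero hm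
  have h : Stirling.stirlingSeq (k + 1) ≤ exp 1 / √2 := by
    simpa using Stirling.stirlingSeq'_antitone (Nat.zero_le k)
  rw [Stirling.stirlingSeq, div_le_iff₀ (by positivity)] at h
  refine h.trans_eq ?_
  rw [Real.sqrt_mul zero_le_two]
  field_simp

theorem div_exp_one_pow_le_factorial (n : ℕ) : ((n : ℝ) / exp 1) ^ n ≤ n ! := by
  have h := Real.pow_div_factorial_le_exp (n : ℝ) n.cast_nonneg n
  rw [← mul_one (n : ℝ), Real.exp_nat_mul, mul_one, div_le_comm₀ (by positivity) (by positivity)]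
    at h
  rwa [div_pow]

theorem prod_factorial_card_fiber_le (t : α → β) :
    ∏ c ∈ univ.image t, ((#{a | t a = c})! : ℝ) ≤
      (exp 1 * √(Fintype.card α)) ^ #(univ.image t) * ∏ a, (#{b | t b = t a} : ℝ) / exp 1 := by
  have hfiber : ∏ a, (#{b | t b = t a} : ℝ) / exp 1 =
      ∏ c ∈ univ.image t, ((#{a | t a = c} : ℝ) / exp 1) ^ #{a | t a = c} :=
    prod_comp (fun c => (#{b | t b = c} : ℝ) / exp 1) t
  rw [hfiber, ← prod_const, ← prod_mul_distrib]
  refine prod_le_prod (fun _ _ => by positivity) fun c hc => ?_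
  obtain ⟨a, -, rfl⟩ := mem_image.1 hc
  have hne : #{b | t b = t a} ≠ 0 := (card_pos.2 ⟨a, by simp⟩).ne'
  refine (factorial_le_exp_mul_sqrt_mul_pow hne).trans ?_
  gcongr
  exact card_le_univ _

theorem permanent_le_factorial_mul_prod_average [DecidableEq α] {M : Matrix α α ℝ}
    (hM : ∀ i j, 0 ≤ M i j) {t : α → β} (ht : ∀ i i', t i = t i' → M i = M i') :
    M.permanent ≤ (Fintype.card α)! * (exp 1 * √(Fintype.card α)) ^ #(univ.image t) *
      ∏ j, (∑ i, M i j) / Fintype.card α := by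
  have hfiber : 0 < ∏ a, (#{b | t b = t a} : ℝ) :=
    prod_pos fun a _ => by exact_mod_cast card_pos.2 ⟨a, by simp⟩
  have hcol : 0 ≤ ∏ j, ∑ i, M i j := prod_nonneg fun j _ => sum_nonneg fun i _ => hM i j
  have hcard : ∏ j, (∑ i, M i j) / exp 1 ≤
      (Fintype.card α)! * ∏ j, (∑ i, M i j) / Fintype.card α := by
    rw [prod_div_distrib, prod_div_distrib, prod_const, prod_const, card_univ]
    rcases isEmpty_or_nonempty α with _ | _
    · simp
    have : (0 : ℝ) < Fintype.card α := by exact_mod_cast Fintype.card_pos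
    have hfact := div_exp_one_pow_le_factorial (Fintype.card α)
    calc (∏ j, ∑ i, M i j) / exp 1 ^ Fintype.card α
        = (Fintype.card α / exp 1) ^ Fintype.card α *
            ((∏ j, ∑ i, M i j) / (Fintype.card α : ℝ) ^ Fintype.card α) := by
          rw [div_pow]
          field_simp
      _ ≤ _ := by gcongr
  refine le_of_mul_le_mul_right ?_ hfiber
  calc M.permanent * ∏ a, (#{b | t b = t a} : ℝ)
      ≤ (∏ c ∈ univ.image t, ((#{a | t a = c})! : ℝ)) * ∏ j, ∑ i, M i j :=
        permanent_mul_prod_card_fiber_le hM ht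
    _ ≤ ((exp 1 * √(Fintype.card α)) ^ #(univ.image t) *
          ∏ a, (#{b | t b = t a} : ℝ) / exp 1) * ∏ j, ∑ i, M i j :=
        mul_le_mul_of_nonneg_right (prod_factorial_card_fiber_le t) hcol
    _ = (exp 1 * √(Fintype.card α)) ^ #(univ.image t) * (∏ a, (#{b | t b = t a} : ℝ)) *
          ∏ j, (∑ i, M i j) / exp 1 := by
        rw [prod_div_distrib, prod_div_distrib]
        ring
    _ ≤ (exp 1 * √(Fintype.card α)) ^ #(univ.image t) * (∏ a, (#{b | t b = t a} : ℝ)) *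
          ((Fintype.card α)! * ∏ j, (∑ i, M i j) / Fintype.card α) := by gcongr
    _ = _ := by ring

theorem permanent_le_factorial_mul_exp [DecidableEq α] {M : Matrix α α ℝ}
    (hM : ∀ i j, 0 ≤ M i j) {t : α → β} (ht : ∀ i i', t i = t i' → M i = M i') :
    M.permanent ≤ (Fintype.card α)! * (exp 1 * √(Fintype.card α)) ^ #(univ.image t) *
      exp ((∑ j, ∑ i, M i j) / Fintype.card α - Fintype.card α) := by
  refine (permanent_le_factorial_mul_prod_average hM ht).trans ?_
  gcongr
  calc ∏ j, (∑ i, M i j) / Fintype.card α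
      ≤ ∏ j, exp ((∑ i, M i j) / Fintype.card α - 1) := by
        refine prod_le_prod (fun j _ => ?_) fun j _ => ?_
        · exact div_nonneg (sum_nonneg fun i _ => hM i j) (Nat.cast_nonneg _)
        · linarith [Real.add_one_le_exp ((∑ i, M i j) / Fintype.card α - 1)]
    _ = exp ((∑ j, ∑ i, M i j) / Fintype.card α - Fintype.card α) := by
        rw [← Real.exp_sum, sum_sub_distrib, sum_div]
        simp

end Permanent

section RamanujanSum

open Finset

/-- The Ramanujan sum `c_p(a)` for a prime `p`, i.e. the sum of `exp(2πiak/p)` over `0 < k < p`. -/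
def ramanujanSum (p a : ℕ) : ℝ := if p ∣ a then p - 1 else -1

theorem sum_prod_dvd_indicator {S : Finset ℕ} (hS : ∀ p ∈ S, p.Prime) (n : ℕ) :
    ∑ a ∈ range n, ∏ p ∈ S, (if p ∣ a + 1 then (p : ℝ) else 0) =
      n - (n % ∏ p ∈ S, p : ℕ) := by
  have hdvd (a : ℕ) : (∏ p ∈ S, p) ∣ a ↔ ∀ p ∈ S, p ∣ a :=
    ⟨fun h p hp => (dvd_prod_of_mem _ hp).trans h, prod_primes_dvd a fun p hp => (hS p hp).prime⟩
  simp_rw [prod_ite_zero, ← hdvd]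
  rw [← sum_filter, sum_const, Nat.card_multiples, nsmul_eq_mul, ← Nat.cast_prod,
    eq_sub_iff_add_eq]
  exact_mod_cast Nat.div_add_mod' n _

theorem sum_prod_ramanujanSum {S : Finset ℕ} (hS : ∀ p ∈ S, p.Prime) (n : ℕ) :
    ∑ a ∈ range n, ∏ p ∈ S, ramanujanSum p (a + 1) =
      ∑ U ∈ S.powerset, (-1) ^ #(S \ U) * ((n : ℝ) - (n % ∏ p ∈ U, p : ℕ)) := by
  have hexpand (a : ℕ) : ∏ p ∈ S, ramanujanSum p a =
      ∑ U ∈ S.powerset, (∏ p ∈ U, if p ∣ a then (p : ℝ) else 0) * (-1) ^ #(S \ U) := by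
    rw [← sum_congr rfl fun U _ => congrArg _ (prod_const _), ← prod_add]
    exact prod_congr rfl fun p _ => by unfold ramanujanSum; split_ifs <;> ring
  simp_rw [hexpand]
  rw [sum_comm]
  refine sum_congr rfl fun U hU => ?_
  rw [← sum_mul, sum_prod_dvd_indicator fun p hp => hS p (mem_powerset.1 hU hp), mul_comm]

theorem abs_sum_prod_ramanujanSum_le_two_pow_mul {S : Finset ℕ} (hS : ∀ p ∈ S, p.Prime) (n : ℕ) :
    |∑ a ∈ range n, ∏ p ∈ S, ramanujanSum p (a + 1)| ≤ 2 ^ #S * n := by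
  rw [sum_prod_ramanujanSum hS]
  refine (abs_sum_le_sum_abs _ _).trans ((sum_le_card_nsmul _ _ (n : ℝ) fun U _ => ?_).trans_eq ?_)
  · have hmod : ((n % ∏ p ∈ U, p : ℕ) : ℝ) ≤ n := by exact_mod_cast Nat.mod_le _ _
    rw [abs_mul, abs_pow, abs_neg, abs_one, one_pow, one_mul, abs_of_nonneg (sub_nonneg.2 hmod)]
    exact sub_le_self _ (Nat.cast_nonneg _)
  · simp [card_powerset]

/- The main terms `n` cancel because `∑ U ⊆ S, (-1) ^ #(S \ U) = 0`. -/
theorem abs_sum_prod_ramanujanSum_le_prod {S : Finset ℕ} (hS : ∀ p ∈ S, p.Prime)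
    (hne : S.Nonempty) (n : ℕ) :
    |∑ a ∈ range n, ∏ p ∈ S, ramanujanSum p (a + 1)| ≤ ∏ p ∈ S, ((p : ℝ) + 1) := by
  have hcancel : ∑ U ∈ S.powerset, (-1 : ℝ) ^ #(S \ U) = 0 := by
    simpa [hne.ne_empty] using (prod_add (fun _ => (1 : ℝ)) (fun _ => (-1 : ℝ)) S).symm
  rw [sum_prod_ramanujanSum hS]
  simp_rw [mul_sub]
  rw [sum_sub_distrib, ← sum_mul, hcancel, zero_mul, zero_sub, abs_neg, prod_add_one]
  refine (abs_sum_le_sum_abs _ _).trans (sum_le_sum fun U hU => ?_)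
  have hpos : 0 < ∏ p ∈ U, p := prod_pos fun p hp => (hS p (mem_powerset.1 hU hp)).pos
  rw [abs_mul, abs_pow, abs_neg, abs_one, one_pow, one_mul, Nat.abs_cast]
  rw [← Nat.cast_prod]
  exact_mod_cast (Nat.mod_lt n hpos).le

theorem sq_sum_prod_ramanujanSum_le {S : Finset ℕ} (hS : ∀ p ∈ S, p.Prime) (hne : S.Nonempty)
    (n : ℕ) :
    (∑ a ∈ range n, ∏ p ∈ S, ramanujanSum p (a + 1)) ^ 2 ≤
      n * ∏ p ∈ S, (2 * ((p : ℝ) + 1)) := by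
  rw [← sq_abs, sq]
  refine (mul_le_mul (abs_sum_prod_ramanujanSum_le_two_pow_mul hS n)
    (abs_sum_prod_ramanujanSum_le_prod hS hne n) (abs_nonneg _) (by positivity)).trans_eq ?_
  rw [prod_mul_distrib, prod_const]
  ring

/-- The factor at `p` of `sieveKernel`. The damping parameter `θ < 1` keeps it positive: at `θ = 1`
it vanishes when `p` divides both `a` and `b`, and for `p = 2` also when `p` divides neither. -/
noncomputable def localKernel (θ : ℝ) (p a b : ℕ) : ℝ :=
  1 - θ / ((p : ℝ) - 1) ^ 2 * ramanujanSum p a * ramanujanSum p b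

/-- The kernel, of mean about `1`, whose permanent bounds the number of coprime permutations. -/
noncomputable def sieveKernel (θ : ℝ) (P : Finset ℕ) (a b : ℕ) : ℝ :=
  ∏ p ∈ P, localKernel θ p a b

theorem sum_sum_sieveKernel_eq (θ : ℝ) (P : Finset ℕ) (n : ℕ) :
    ∑ a ∈ range n, ∑ b ∈ range n, sieveKernel θ P (a + 1) (b + 1) =
      ∑ S ∈ P.powerset, (∏ p ∈ S, -(θ / ((p : ℝ) - 1) ^ 2)) *
        (∑ a ∈ range n, ∏ p ∈ S, ramanujanSum p (a + 1)) ^ 2 := by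
  have hexpand (a b : ℕ) : sieveKernel θ P a b =
      ∑ S ∈ P.powerset, (∏ p ∈ S, -(θ / ((p : ℝ) - 1) ^ 2)) *
        ((∏ p ∈ S, ramanujanSum p a) * ∏ p ∈ S, ramanujanSum p b) := by
    simp_rw [sieveKernel, localKernel, sub_eq_add_neg, prod_one_add, ← prod_mul_distrib,
      neg_mul, mul_assoc]
  simp_rw [hexpand, sum_comm (s := range n) (t := P.powerset), ← mul_sum, ← sum_mul, sq]

theorem sum_sum_sieveKernel_le {θ : ℝ} (hθ : |θ| ≤ 1) {P : Finset ℕ} (hP : ∀ p ∈ P, p.Prime)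
    (n : ℕ) :
    ∑ a ∈ range n, ∑ b ∈ range n, sieveKernel θ P (a + 1) (b + 1) ≤
      (n : ℝ) ^ 2 + n * ∏ p ∈ P, (1 + 12 / (p : ℝ)) := by
  have hfactor {p : ℕ} (hp : p.Prime) :
      |-(θ / ((p : ℝ) - 1) ^ 2)| * (2 * ((p : ℝ) + 1)) ≤ 12 / p := by
    have h2 : (2 : ℝ) ≤ p := by exact_mod_cast hp.two_le
    have h1 : 0 < (p : ℝ) - 1 := by linarith
    rw [abs_neg, abs_div, abs_of_pos (pow_pos h1 2), div_mul_eq_mul_div,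
      div_le_div_iff₀ (by positivity) (by linarith)]
    calc |θ| * (2 * ((p : ℝ) + 1)) * p ≤ 1 * (2 * ((p : ℝ) + 1)) * p := by gcongr
      _ ≤ 12 * ((p : ℝ) - 1) ^ 2 := by nlinarith
  rw [sum_sum_sieveKernel_eq, ← add_sum_erase _ _ (empty_mem_powerset P), prod_one_add, mul_sum]
  refine add_le_add (by simp) ((sum_le_sum fun S hS => ?_).trans
    (sum_le_sum_of_subset_of_nonneg (erase_subset ∅ P.powerset) fun S _ _ => by positivity))
  obtain ⟨hne, hSP⟩ := mem_erase.1 hS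
  have hS' : ∀ p ∈ S, p.Prime := fun p hp => hP p (mem_powerset.1 hSP hp)
  calc (∏ p ∈ S, -(θ / ((p : ℝ) - 1) ^ 2)) *
        (∑ a ∈ range n, ∏ p ∈ S, ramanujanSum p (a + 1)) ^ 2
      ≤ (∏ p ∈ S, |-(θ / ((p : ℝ) - 1) ^ 2)|) * (n * ∏ p ∈ S, (2 * ((p : ℝ) + 1))) := by
        rw [← abs_prod]
        gcongr
        · exact le_abs_self _
        · exact sq_sum_prod_ramanujanSum_le hS' (nonempty_iff_ne_empty.2 hne) n
    _ = n * ∏ p ∈ S, |-(θ / ((p : ℝ) - 1) ^ 2)| * (2 * ((p : ℝ) + 1)) := by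
        rw [prod_mul_distrib (f := fun p : ℕ => |-(θ / ((p : ℝ) - 1) ^ 2)|), mul_left_comm]
    _ ≤ n * ∏ p ∈ S, 12 / (p : ℝ) := by
        gcongr with p hp
        exact hfactor (hS' p hp)

end RamanujanSum

section LocalFactors

/-- The value of `localKernel θ p` at pairs of which `p` divides neither entry. -/
noncomputable def neitherWeight (θ : ℝ) (p : ℕ) : ℝ := 1 - θ / ((p : ℝ) - 1) ^ 2

/-- The value of `localKernel θ p` at pairs of which `p` divides exactly one entry. -/
noncomputable def mixedWeight (θ : ℝ) (p : ℕ) : ℝ := 1 + θ / ((p : ℝ) - 1)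

/-- The Euler factor at `p` of `coprimeConst`. -/
noncomputable def coprimeFactor (p : ℕ) : ℝ :=
  ((p : ℝ) - 1) ^ (2 * (1 - 1 / (p : ℝ))) / ((p : ℝ) * ((p : ℝ) - 2) ^ (1 - 2 / (p : ℝ)))

variable {θ : ℝ} {p : ℕ}

theorem one_sub_le_neitherWeight (hθ : 0 ≤ θ) (hp : 2 ≤ p) : 1 - θ ≤ neitherWeight θ p := by
  have h2 : (2 : ℝ) ≤ p := by exact_mod_cast hp
  exact sub_le_sub_left (div_le_self hθ (by nlinarith)) 1

theorem mul_neitherWeight_one_le (hθ : θ ≤ 1) (p : ℕ) :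
    θ * neitherWeight 1 p ≤ neitherWeight θ p := by
  unfold neitherWeight
  have : θ / ((p : ℝ) - 1) ^ 2 = θ * (1 / ((p : ℝ) - 1) ^ 2) := by ring
  linarith

theorem neitherWeight_le_one (hθ : 0 ≤ θ) (p : ℕ) : neitherWeight θ p ≤ 1 :=
  sub_le_self _ (by positivity)

theorem one_le_mixedWeight (hθ : 0 ≤ θ) (hp : 2 ≤ p) : 1 ≤ mixedWeight θ p := by
  have h2 : (2 : ℝ) ≤ p := by exact_mod_cast hp
  exact le_add_of_nonneg_right (div_nonneg hθ (by linarith))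

theorem mixedWeight_le_two (hθ : θ ≤ 1) (hp : 2 ≤ p) : mixedWeight θ p ≤ 2 := by
  have h2 : (2 : ℝ) ≤ p := by exact_mod_cast hp
  have : θ / ((p : ℝ) - 1) ≤ 1 := (div_le_one (by linarith)).2 (by linarith)
  unfold mixedWeight
  linarith

theorem mul_mixedWeight_one_le (hθ : θ ≤ 1) (p : ℕ) : θ * mixedWeight 1 p ≤ mixedWeight θ p := by
  unfold mixedWeight
  have : θ / ((p : ℝ) - 1) = θ * (1 / ((p : ℝ) - 1)) := by ring
  linarith

theorem localKernel_of_not_dvd_both (θ : ℝ) (hp : 2 ≤ p) {a b : ℕ} (hab : ¬(p ∣ a ∧ p ∣ b)) :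
    localKernel θ p a b = if p ∣ a ∨ p ∣ b then mixedWeight θ p else neitherWeight θ p := by
  have h2 : (2 : ℝ) ≤ p := by exact_mod_cast hp
  have h1 : (p : ℝ) - 1 ≠ 0 := by linarith
  by_cases ha : p ∣ a <;> by_cases hb : p ∣ b
  · exact absurd ⟨ha, hb⟩ hab
  all_goals
    simp only [localKernel, ramanujanSum, mixedWeight, neitherWeight, ha, hb, if_true, if_false,
      or_self, or_true, true_or]
    field_simp
    try ring

theorem localKernel_nonneg (hθ₀ : 0 ≤ θ) (hθ₁ : θ ≤ 1) (hp : 2 ≤ p) (a b : ℕ) :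
    0 ≤ localKernel θ p a b := by
  by_cases hab : p ∣ a ∧ p ∣ b
  · have h2 : (2 : ℝ) ≤ p := by exact_mod_cast hp
    have h1 : (p : ℝ) - 1 ≠ 0 := by linarith
    have : localKernel θ p a b = 1 - θ := by
      simp only [localKernel, ramanujanSum, hab.1, hab.2, if_true]
      field_simp
    linarith
  · rw [localKernel_of_not_dvd_both θ hp hab]
    split_ifs
    · exact zero_le_one.trans (one_le_mixedWeight hθ₀ hp)
    · exact (sub_nonneg.2 hθ₁).trans (one_sub_le_neitherWeight hθ₀ hp)

theorem inv_coprimeFactor (hp : 2 ≤ p) :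
    (coprimeFactor p)⁻¹ =
      neitherWeight 1 p ^ (1 - 2 / (p : ℝ)) * mixedWeight 1 p ^ (2 / (p : ℝ)) := by
  have h2 : (2 : ℝ) ≤ p := by exact_mod_cast hp
  have h0 : (0 : ℝ) < p := by linarith
  have h1 : (0 : ℝ) < p - 1 := by linarith
  have hneither : neitherWeight 1 p = p * (p - 2) / ((p : ℝ) - 1) ^ (2 : ℝ) := by
    rw [neitherWeight, Real.rpow_two]
    field_simp
    ring
  have hmixed : mixedWeight 1 p = p / (p - 1) := by
    rw [mixedWeight]
    field_simp
    ring
  rw [coprimeFactor, inv_div, hneither, hmixed, Real.div_rpow (by nlinarith) (by positivity),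
    Real.mul_rpow h0.le (by linarith), Real.div_rpow h0.le h1.le, ← Real.rpow_mul h1.le,
    div_mul_div_comm, ← Real.rpow_add h1, mul_right_comm, ← Real.rpow_add h0, sub_add_cancel,
    Real.rpow_one]
  congr 2
  ring

theorem coprimeFactor_pos (hp : 2 ≤ p) : 0 < coprimeFactor p := by
  have h2 : (2 : ℝ) ≤ p := by exact_mod_cast hp
  have hpow : (0 : ℝ) < ((p : ℝ) - 2) ^ (1 - 2 / (p : ℝ)) := by
    rcases h2.eq_or_lt with h | h
    · norm_num [← h]
    · exact Real.rpow_pos_of_pos (by linarith) _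
  exact div_pos (Real.rpow_pos_of_pos (by linarith) _) (mul_pos (by linarith) hpow)

theorem coprimeFactor_le_one (hp : 2 ≤ p) : coprimeFactor p ≤ 1 := by
  have h2 : (2 : ℝ) ≤ p := by exact_mod_cast hp
  have h0 : (0 : ℝ) < p := by linarith
  have h1 : (0 : ℝ) < p - 1 := by linarith
  have hw : 0 ≤ 1 - 2 / (p : ℝ) := sub_nonneg.2 ((div_le_one h0).2 h2)
  have hneither : 0 ≤ neitherWeight 1 p := by
    simpa using one_sub_le_neitherWeight zero_le_one hp
  have hmixed : 0 ≤ mixedWeight 1 p := zero_le_one.trans (one_le_mixedWeight zero_le_one hp)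
  have hneither_inv : (1 - 2 / (p : ℝ)) * (neitherWeight 1 p)⁻¹ ≤ (p - 1) ^ 2 / p ^ 2 := by
    refine mul_inv_le_of_le_mul₀ hneither (by positivity) (le_of_eq ?_)
    rw [neitherWeight]
    field_simp
    ring
  calc coprimeFactor p
      = (neitherWeight 1 p)⁻¹ ^ (1 - 2 / (p : ℝ)) * (mixedWeight 1 p)⁻¹ ^ (2 / (p : ℝ)) := by
        rw [← inv_inv (coprimeFactor p), inv_coprimeFactor hp, mul_inv, Real.inv_rpow hneither,
          Real.inv_rpow hmixed]
    _ ≤ (1 - 2 / (p : ℝ)) * (neitherWeight 1 p)⁻¹ + 2 / p * (mixedWeight 1 p)⁻¹ :=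
        Real.geom_mean_le_arith_mean2_weighted hw (by positivity) (inv_nonneg.2 hneither)
          (inv_nonneg.2 hmixed) (sub_add_cancel _ _)
    _ ≤ (p - 1) ^ 2 / p ^ 2 + 2 / p * ((p - 1) / p) := by
        gcongr
        rw [mixedWeight, ← inv_div]
        apply le_of_eq
        field_simp
        ring
    _ ≤ 1 := by
        rw [div_mul_div_comm, ← sq, ← add_div, div_le_one (by positivity)]
        linarith

theorem exp_neg_four_div_sq_le_coprimeFactor (hp : 2 ≤ p) :
    exp (-(4 / (p : ℝ) ^ 2)) ≤ coprimeFactor p := by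
  have h2 : (2 : ℝ) ≤ p := by exact_mod_cast hp
  have h0 : (0 : ℝ) < p := by linarith
  have h1 : (0 : ℝ) < p - 1 := by linarith
  have hw : 0 ≤ 1 - 2 / (p : ℝ) := sub_nonneg.2 ((div_le_one h0).2 h2)
  rw [Real.exp_neg, inv_le_comm₀ (exp_pos _) (coprimeFactor_pos hp), inv_coprimeFactor hp]
  calc neitherWeight 1 p ^ (1 - 2 / (p : ℝ)) * mixedWeight 1 p ^ (2 / (p : ℝ))
      ≤ (1 - 2 / (p : ℝ)) * neitherWeight 1 p + 2 / p * mixedWeight 1 p :=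
        Real.geom_mean_le_arith_mean2_weighted hw (by positivity)
          (by simpa using one_sub_le_neitherWeight zero_le_one hp)
          (zero_le_one.trans (one_le_mixedWeight zero_le_one hp)) (sub_add_cancel _ _)
    _ = 1 / ((p : ℝ) - 1) ^ 2 + 1 := by
        rw [neitherWeight, mixedWeight]
        field_simp
        ring
    _ ≤ 4 / (p : ℝ) ^ 2 + 1 := by
        gcongr ?_ + 1
        rw [div_le_div_iff₀ (by positivity) (by positivity)]
        nlinarith
    _ ≤ exp (4 / (p : ℝ) ^ 2) := Real.add_one_le_exp _

/- The exponent `2n/p` of `y` is rounded down to `2⌊n/p⌋`, at a cost of at most `2`. -/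
theorem rpow_mul_rpow_pow_le {x y : ℝ} (hx : 0 < x) (hxy : x ≤ y) (hp : 2 ≤ p) (n : ℕ) :
    (x ^ (1 - 2 / (p : ℝ)) * y ^ (2 / (p : ℝ))) ^ n ≤
      (y / x) ^ 2 * (y ^ (2 * (n / p)) * x ^ (n - 2 * (n / p))) := by
  have hy : 0 < y := hx.trans_le hxy
  have hround : 2 / (p : ℝ) * n ≤ (2 + 2 * (n / p) : ℕ) := by
    have : (n : ℝ) / p ≤ (n / p : ℕ) + 1 := (Nat.lt_floor_add_one _).le.trans_eq (by
      rw [Nat.floor_div_natCast, Nat.floor_natCast])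
    push_cast
    calc 2 / (p : ℝ) * n = 2 * (n / p) := by ring
      _ ≤ _ := by linarith
  have hle : 2 * (n / p) ≤ n := (Nat.mul_le_mul_right _ hp).trans (Nat.mul_div_le n p)
  calc (x ^ (1 - 2 / (p : ℝ)) * y ^ (2 / (p : ℝ))) ^ n
      = (x * (y / x) ^ (2 / (p : ℝ))) ^ n := by
        rw [Real.rpow_sub hx, Real.rpow_one, Real.div_rpow hy.le hx.le]
        ring
    _ = x ^ n * (y / x) ^ (2 / (p : ℝ) * n) := by
        rw [mul_pow, Real.rpow_mul_natCast (div_nonneg hy.le hx.le)]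
    _ ≤ x ^ n * (y / x) ^ (2 + 2 * (n / p)) := by
        rw [← Real.rpow_natCast (y / x)]
        gcongr
        exact (one_le_div hx).2 hxy
    _ = (y / x) ^ 2 * (y ^ (2 * (n / p)) * x ^ (n - 2 * (n / p))) := by
        nth_rw 1 [← Nat.sub_add_cancel hle]
        rw [pow_add, pow_add, div_pow y x (2 * (n / p))]
        field_simp

theorem div_coprimeFactor_pow_le (hθ₀ : 0 ≤ θ) (hθ₁ : θ < 1) (hp : 2 ≤ p) (n : ℕ) :
    (θ / coprimeFactor p) ^ n ≤
      (2 / (1 - θ)) ^ 2 *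
        (mixedWeight θ p ^ (2 * (n / p)) * neitherWeight θ p ^ (n - 2 * (n / p))) := by
  have h2 : (2 : ℝ) ≤ p := by exact_mod_cast hp
  have hw : 0 ≤ 1 - 2 / (p : ℝ) := sub_nonneg.2 ((div_le_one (by linarith)).2 h2)
  have hw' : 0 ≤ 2 / (p : ℝ) := by positivity
  have hsub : 1 - θ ≤ neitherWeight θ p := one_sub_le_neitherWeight hθ₀ hp
  have hneither : 0 < neitherWeight θ p := (sub_pos.2 hθ₁).trans_le hsub
  have hneither₁ : 0 ≤ neitherWeight 1 p := by
    simpa using one_sub_le_neitherWeight zero_le_one hp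
  have hmixed : 1 ≤ mixedWeight θ p := one_le_mixedWeight hθ₀ hp
  have hmixed₁ : 0 ≤ mixedWeight 1 p := zero_le_one.trans (one_le_mixedWeight zero_le_one hp)
  have hroot : θ / coprimeFactor p ≤
      neitherWeight θ p ^ (1 - 2 / (p : ℝ)) * mixedWeight θ p ^ (2 / (p : ℝ)) :=
    calc θ / coprimeFactor p
        = (θ * neitherWeight 1 p) ^ (1 - 2 / (p : ℝ)) *
            (θ * mixedWeight 1 p) ^ (2 / (p : ℝ)) := by
          rw [Real.mul_rpow hθ₀ hneither₁, Real.mul_rpow hθ₀ hmixed₁, mul_mul_mul_comm,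
            ← Real.rpow_add_of_nonneg hθ₀ hw hw', sub_add_cancel, Real.rpow_one,
            ← inv_coprimeFactor hp, div_eq_mul_inv]
      _ ≤ _ := by
          gcongr
          · exact mul_neitherWeight_one_le hθ₁.le p
          · exact mul_mixedWeight_one_le hθ₁.le p
  have hc := (coprimeFactor_pos hp).le
  refine (pow_le_pow_left₀ (by positivity) hroot n).trans
    ((rpow_mul_rpow_pow_le hneither ((neitherWeight_le_one hθ₀ p).trans hmixed) hp n).trans ?_)
  have : 0 < 1 - θ := sub_pos.2 hθ₁
  gcongr
  exact mixedWeight_le_two hθ₁.le hp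

end LocalFactors

section Sieve

open Finset Equiv
open scoped Nat

theorem sieveKernel_congr (θ : ℝ) {P : Finset ℕ} {a a' : ℕ}
    (h : P.filter (· ∣ a) = P.filter (· ∣ a')) (b : ℕ) :
    sieveKernel θ P a b = sieveKernel θ P a' b := by
  refine prod_congr rfl fun p hp => ?_
  have : p ∣ a ↔ p ∣ a' := by simpa [hp] using Finset.ext_iff.1 h p
  simp only [localKernel, ramanujanSum, this]

theorem sieveKernel_nonneg {θ : ℝ} (hθ₀ : 0 ≤ θ) (hθ₁ : θ ≤ 1) {P : Finset ℕ}
    (hP : ∀ p ∈ P, p.Prime) (a b : ℕ) : 0 ≤ sieveKernel θ P a b :=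
  prod_nonneg fun _ hp => localKernel_nonneg hθ₀ hθ₁ (hP _ hp).two_le a b

variable {n p : ℕ} {σ : Perm (Fin n)}

theorem card_dvd_or_dvd_perm (hσ : ∀ m : Fin n, ¬(p ∣ m.1 + 1 ∧ p ∣ (σ m).1 + 1)) :
    #{m : Fin n | p ∣ m.1 + 1 ∨ p ∣ (σ m).1 + 1} = 2 * (n / p) := by
  have hcard : #{m : Fin n | p ∣ m.1 + 1} = n / p := by
    rw [← Nat.card_multiples n p, card_filter, card_filter, sum_range]
  have hcard_perm : #{m : Fin n | p ∣ (σ m).1 + 1} = n / p := by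
    rw [← hcard, card_filter, card_filter]
    exact Equiv.sum_comp σ fun m => if p ∣ m.1 + 1 then 1 else 0
  rw [filter_or, card_union_of_disjoint, hcard, hcard_perm, two_mul]
  exact disjoint_filter.2 fun m _ h h' => hσ m ⟨h, h'⟩

theorem prod_localKernel_perm (θ : ℝ) (hp : 2 ≤ p)
    (hσ : ∀ m : Fin n, ¬(p ∣ m.1 + 1 ∧ p ∣ (σ m).1 + 1)) :
    ∏ m : Fin n, localKernel θ p ((σ m).1 + 1) (m.1 + 1) =
      mixedWeight θ p ^ (2 * (n / p)) * neitherWeight θ p ^ (n - 2 * (n / p)) := by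
  simp_rw [fun m => localKernel_of_not_dvd_both θ hp (fun h => hσ m h.symm), or_comm]
  rw [prod_ite, prod_const, prod_const, filter_not,
    card_sdiff_of_subset (filter_subset _ _), card_univ, Fintype.card_fin, card_dvd_or_dvd_perm hσ]

theorem coprimePermCount_mul_prod_le_permanent {θ : ℝ} (hθ₀ : 0 ≤ θ) (hθ₁ : θ ≤ 1)
    {P : Finset ℕ} (hP : ∀ p ∈ P, p.Prime) (n : ℕ) :
    coprimePermCount n *
        ∏ p ∈ P, mixedWeight θ p ^ (2 * (n / p)) * neitherWeight θ p ^ (n - 2 * (n / p)) ≤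
      (Matrix.of fun i j : Fin n => sieveKernel θ P (i.1 + 1) (j.1 + 1)).permanent := by
  classical
  rw [coprimePermCount, Nat.card_eq_fintype_card, Fintype.card_subtype, ← nsmul_eq_mul,
    ← sum_const, Matrix.permanent]
  refine (sum_congr rfl fun σ hσ => ?_).trans_le (sum_le_sum_of_subset_of_nonneg
    (filter_subset _ _) fun σ _ _ => prod_nonneg fun _ _ => sieveKernel_nonneg hθ₀ hθ₁ hP _ _)
  simp_rw [Matrix.of_apply, sieveKernel]
  rw [Finset.prod_comm]
  refine prod_congr rfl fun p hp => (prod_localKernel_perm θ (hP p hp).two_le fun m hm => ?_).symm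
  exact Nat.not_coprime_of_dvd_of_dvd (hP p hp).one_lt hm.1 hm.2 ((mem_filter.1 hσ).2 m)

/-- The set of primes of `P` dividing an integer, for each integer up to `n`. -/
def divisibilityTypes (P : Finset ℕ) (n : ℕ) : Finset (Finset ℕ) :=
  univ.image fun m : Fin n => P.filter (· ∣ m.1 + 1)

theorem permanent_sieveKernel_le {θ : ℝ} (hθ₀ : 0 ≤ θ) (hθ₁ : θ ≤ 1)
    {P : Finset ℕ} (hP : ∀ p ∈ P, p.Prime) (n : ℕ) :
    (Matrix.of fun i j : Fin n => sieveKernel θ P (i.1 + 1) (j.1 + 1)).permanent ≤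
      n ! * (exp 1 * √n) ^ #(divisibilityTypes P n) * exp (∏ p ∈ P, (1 + 12 / (p : ℝ))) := by
  have hperm := permanent_le_factorial_mul_exp
    (M := Matrix.of fun i j : Fin n => sieveKernel θ P (i.1 + 1) (j.1 + 1))
    (t := fun m : Fin n => P.filter (· ∣ m.1 + 1)) (fun i j => sieveKernel_nonneg hθ₀ hθ₁ hP _ _)
    fun i i' h => funext fun j => sieveKernel_congr θ h _
  rw [Fintype.card_fin] at hperm
  refine hperm.trans ?_
  rw [divisibilityTypes]
  gcongr
  rcases n.eq_zero_or_pos with rfl | hn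
  · simpa using prod_nonneg fun p _ => by positivity
  have hn : (0 : ℝ) < n := by exact_mod_cast hn
  have hsum := sum_sum_sieveKernel_le (abs_le.2 ⟨by linarith, hθ₁⟩) hP n
  simp_rw [sum_range] at hsum
  simp_rw [Matrix.of_apply]
  rw [sum_comm, sub_le_iff_le_add, div_le_iff₀ hn]
  linarith

theorem one_le_mul_weight_mul_coprimeFactor_pow (hn : 0 < n) (hp : 2 ≤ p) :
    1 ≤ 32 * (n : ℝ) ^ 2 * (mixedWeight (1 - 1 / (2 * n)) p ^ (2 * (n / p)) *
      neitherWeight (1 - 1 / (2 * n)) p ^ (n - 2 * (n / p))) * coprimeFactor p ^ n := by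
  have hn : (1 : ℝ) ≤ n := by exact_mod_cast hn
  have hinv : 1 / (2 * (n : ℝ)) ≤ 1 / 2 := by gcongr; linarith
  have hθ : 0 < 1 / (2 * (n : ℝ)) := by positivity
  have hbernoulli : 1 / 2 ≤ (1 - 1 / (2 * (n : ℝ))) ^ n := by
    refine le_trans (le_of_eq ?_) (one_add_mul_sub_le_pow (by linarith) n)
    field_simp
    norm_num
  have h := div_coprimeFactor_pow_le (θ := 1 - 1 / (2 * n)) (by linarith) (by linarith) hp n
  rw [div_pow, div_le_iff₀ (pow_pos (coprimeFactor_pos hp) n)] at h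
  have hsq : (2 / (1 - (1 - 1 / (2 * (n : ℝ))))) ^ 2 = 16 * (n : ℝ) ^ 2 := by
    rw [sub_sub_cancel]
    field_simp
    norm_num
  rw [hsq] at h
  linarith

theorem coprimePermCount_le (hn : 0 < n) {P : Finset ℕ} (hP : ∀ p ∈ P, p.Prime) :
    coprimePermCount n ≤ n ! * (∏ p ∈ P, coprimeFactor p) ^ n * ((32 * (n : ℝ) ^ 2) ^ #P *
      (exp 1 * √n) ^ #(divisibilityTypes P n) * exp (∏ p ∈ P, (1 + 12 / (p : ℝ)))) := by
  have hn' : (1 : ℝ) ≤ n := by exact_mod_cast hn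
  have hθ₀ : 0 ≤ 1 - 1 / (2 * (n : ℝ)) := by
    rw [sub_nonneg, div_le_one (by positivity)]
    linarith
  have hθ₁ : 1 - 1 / (2 * (n : ℝ)) ≤ 1 := sub_le_self _ (by positivity)
  have hQ : 0 ≤ ∏ p ∈ P, coprimeFactor p :=
    prod_nonneg fun p hp => (coprimeFactor_pos (hP p hp).two_le).le
  have hweights : 1 ≤ ∏ p ∈ P, (32 * (n : ℝ) ^ 2 *
      (mixedWeight (1 - 1 / (2 * n)) p ^ (2 * (n / p)) *
        neitherWeight (1 - 1 / (2 * n)) p ^ (n - 2 * (n / p))) * coprimeFactor p ^ n) :=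
    one_le_prod fun p hp => one_le_mul_weight_mul_coprimeFactor_pow hn (hP p hp).two_le
  have hcount := (coprimePermCount_mul_prod_le_permanent hθ₀ hθ₁ hP n).trans
    (permanent_sieveKernel_le hθ₀ hθ₁ hP n)
  rw [prod_mul_distrib, prod_mul_distrib, prod_const, prod_pow] at hweights
  refine (le_mul_of_one_le_right (Nat.cast_nonneg _) hweights).trans ?_
  calc _ = (32 * (n : ℝ) ^ 2) ^ #P * (∏ p ∈ P, coprimeFactor p) ^ n * (coprimePermCount n *
        ∏ p ∈ P, mixedWeight (1 - 1 / (2 * n)) p ^ (2 * (n / p)) *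
          neitherWeight (1 - 1 / (2 * n)) p ^ (n - 2 * (n / p))) := by ring
    _ ≤ (32 * (n : ℝ) ^ 2) ^ #P * (∏ p ∈ P, coprimeFactor p) ^ n *
        (n ! * (exp 1 * √n) ^ #(divisibilityTypes P n) * exp (∏ p ∈ P, (1 + 12 / (p : ℝ)))) := by
        gcongr
    _ = _ := by ring

end Sieve

section Rankin

open Finset

theorem card_divisibilityTypes_le {P : Finset ℕ} (hP : ∀ p ∈ P, p.Prime) (n : ℕ) {η : ℝ}
    (hη : η ≤ 1) :
    (#(divisibilityTypes P n) : ℝ) ≤ (n : ℝ) ^ (1 - η) * ∏ p ∈ P, (1 + (p : ℝ) ^ (η - 1)) := by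
  have hterm {T : Finset ℕ} (hT : T ∈ divisibilityTypes P n) :
      1 ≤ (n : ℝ) ^ (1 - η) * ∏ p ∈ T, (p : ℝ) ^ (η - 1) := by
    obtain ⟨m, -, rfl⟩ := mem_image.1 hT
    have hprime : ∀ p ∈ P.filter (· ∣ m.1 + 1), p.Prime := fun p hp => hP p (mem_filter.1 hp).1
    have hdvd : ∏ p ∈ P.filter (· ∣ m.1 + 1), p ∣ m.1 + 1 :=
      prod_primes_dvd _ (fun p hp => (hprime p hp).prime) fun p hp => (mem_filter.1 hp).2
    have hpos : 0 < ∏ p ∈ P.filter (· ∣ m.1 + 1), p := prod_pos fun p hp => (hprime p hp).pos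
    have hle : ∏ p ∈ P.filter (· ∣ m.1 + 1), p ≤ n := (Nat.le_of_dvd m.1.succ_pos hdvd).trans m.2
    rw [Real.finsetProd_rpow _ _ fun p _ => p.cast_nonneg, ← Nat.cast_prod, ← neg_sub 1 η,
      Real.rpow_neg (Nat.cast_nonneg _), ← div_eq_mul_inv, one_le_div (by positivity)]
    have := sub_nonneg.2 hη
    gcongr
  have hsub : divisibilityTypes P n ⊆ P.powerset :=
    image_subset_iff.2 fun _ _ => mem_powerset.2 (filter_subset _ _)
  calc (#(divisibilityTypes P n) : ℝ)
      ≤ ∑ T ∈ divisibilityTypes P n, (n : ℝ) ^ (1 - η) * ∏ p ∈ T, (p : ℝ) ^ (η - 1) := by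
        simpa using sum_le_sum fun T => hterm (T := T)
    _ ≤ ∑ T ∈ P.powerset, (n : ℝ) ^ (1 - η) * ∏ p ∈ T, (p : ℝ) ^ (η - 1) :=
        sum_le_sum_of_subset_of_nonneg hsub fun T _ _ => by positivity
    _ = (n : ℝ) ^ (1 - η) * ∏ p ∈ P, (1 + (p : ℝ) ^ (η - 1)) := by rw [← mul_sum, prod_one_add]

theorem card_divisibilityTypes_le_exp {P : Finset ℕ} (hP : ∀ p ∈ P, p.Prime) {z : ℝ}
    (hz : ∀ p ∈ P, (p : ℝ) ≤ z) (n : ℕ) {η : ℝ} (hη₀ : 0 ≤ η) (hη₁ : η ≤ 1) :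
    (#(divisibilityTypes P n) : ℝ) ≤
      (n : ℝ) ^ (1 - η) * exp (z ^ η * ∑ p ∈ P, 1 / (p : ℝ)) := by
  refine (card_divisibilityTypes_le hP n hη₁).trans ?_
  rw [mul_sum, Real.exp_sum]
  gcongr with p hp
  have hpos : (0 : ℝ) < p := by exact_mod_cast (hP p hp).pos
  calc 1 + (p : ℝ) ^ (η - 1) = (p : ℝ) ^ η * (1 / p) + 1 := by
        rw [Real.rpow_sub_one hpos.ne', mul_one_div, add_comm]
    _ ≤ z ^ η * (1 / p) + 1 := by
        have := hz p hp
        gcongr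
    _ ≤ exp (z ^ η * (1 / p)) := Real.add_one_le_exp _

end Rankin

section PrimeSums

open Finset Nat

theorem lt_of_mem_primesLE_sdiff {p z N : ℕ} (hp : p ∈ primesLE N \ primesLE z) : z < p := by
  obtain ⟨hpN, hpz⟩ := Finset.mem_sdiff.1 hp
  exact lt_of_not_ge fun h => hpz (mem_primesLE.2 ⟨h, prime_of_mem_primesLE hpN⟩)

theorem sum_inv_primesLE_sdiff_two_pow_le {j : ℕ} (hj : j ≠ 0) :
    ∑ p ∈ primesLE (2 ^ (j + 1)) \ primesLE (2 ^ j), 1 / (p : ℝ) ≤ 4 / j := by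
  have : 0 < Real.log 2 := Real.log_pos one_lt_two
  have : (0 : ℝ) < j := by exact_mod_cast Nat.pos_of_ne_zero hj
  have hterm : ∀ p ∈ primesLE (2 ^ (j + 1)) \ primesLE (2 ^ j),
      1 / (p : ℝ) ≤ Real.log p / (2 ^ j * (j * Real.log 2)) := fun p hp => by
    have hlt : (2 : ℝ) ^ j < p := by exact_mod_cast lt_of_mem_primesLE_sdiff hp
    have hp0 : (0 : ℝ) < p := lt_trans (by positivity) hlt
    have hlog : j * Real.log 2 ≤ Real.log p := by
      rw [← Real.log_pow]
      exact Real.log_le_log (by positivity) hlt.le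
    rw [div_le_div_iff₀ hp0 (by positivity), one_mul, mul_comm (Real.log p)]
    gcongr
  calc ∑ p ∈ primesLE (2 ^ (j + 1)) \ primesLE (2 ^ j), 1 / (p : ℝ)
      ≤ ∑ p ∈ primesLE (2 ^ (j + 1)), Real.log p / (2 ^ j * (j * Real.log 2)) :=
        (sum_le_sum hterm).trans (sum_le_sum_of_subset_of_nonneg sdiff_subset fun _ _ _ =>
          div_nonneg (Real.log_natCast_nonneg _) (by positivity))
    _ ≤ Real.log 4 * 2 ^ (j + 1) / (2 ^ j * (j * Real.log 2)) := by
        rw [← sum_div, ← Chebyshev.theta_eq_sum_primesLE_log]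
        gcongr
        exact_mod_cast Chebyshev.theta_le_log4_mul_x (x := (2 ^ (j + 1) : ℕ)) (by positivity)
    _ = 4 / j := by
        rw [show (4 : ℝ) = 2 ^ 2 by norm_num, Real.log_pow, pow_succ]
        field_simp
        norm_num

theorem sum_inv_primesLE_two_pow_le (m : ℕ) :
    ∑ p ∈ primesLE (2 ^ (m + 1)), 1 / (p : ℝ) ≤ 1 + 4 * harmonic m := by
  induction m with
  | zero =>
    have : primesLE 2 = {2} := by decide
    norm_num [this]
  | succ m ih =>
    have hmono : primesLE (2 ^ (m + 1)) ⊆ primesLE (2 ^ (m + 1 + 1)) :=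
      primesLE_mono (Nat.pow_le_pow_right two_pos (Nat.le_succ _))
    have hblock := sum_inv_primesLE_sdiff_two_pow_le m.succ_ne_zero
    rw [← sum_sdiff hmono, harmonic_succ]
    push_cast at hblock ⊢
    rw [div_eq_mul_inv] at hblock
    linarith

theorem sum_inv_primesLE_exp_le {y : ℝ} (hy : 1 ≤ y) :
    ∑ p ∈ primesLE ⌊rexp y⌋₊, 1 / (p : ℝ) ≤ 5 + 4 * Real.log (2 * y) := by
  have hle : ⌊rexp y⌋₊ ≤ 2 ^ (⌊2 * y⌋₊ + 1) := by
    refine Nat.floor_le_of_le ?_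
    have hlog : 1 / 2 < Real.log 2 := by linarith [Real.log_two_gt_d9]
    calc rexp y ≤ rexp (Real.log 2 * (2 * y)) := by gcongr; nlinarith
      _ = 2 ^ (2 * y) := (Real.rpow_def_of_pos two_pos _).symm
      _ ≤ 2 ^ ((⌊2 * y⌋₊ + 1 : ℕ) : ℝ) := by
          gcongr
          · norm_num
          · exact_mod_cast (Nat.lt_floor_add_one (2 * y)).le
      _ = ((2 ^ (⌊2 * y⌋₊ + 1) : ℕ) : ℝ) := by rw [Real.rpow_natCast]; norm_num
  calc ∑ p ∈ primesLE ⌊rexp y⌋₊, 1 / (p : ℝ)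
      ≤ ∑ p ∈ primesLE (2 ^ (⌊2 * y⌋₊ + 1)), 1 / (p : ℝ) :=
        sum_le_sum_of_subset_of_nonneg (primesLE_mono hle) fun _ _ _ => by positivity
    _ ≤ 1 + 4 * harmonic ⌊2 * y⌋₊ := sum_inv_primesLE_two_pow_le _
    _ ≤ 5 + 4 * Real.log (2 * y) := by
        linarith [harmonic_floor_le_one_add_log (2 * y) (by linarith)]

theorem eventually_sum_inv_primesLE_exp_le_sqrt {ε : ℝ} (hε : 0 < ε) :
    ∀ᶠ y : ℝ in atTop, ∑ p ∈ primesLE ⌊rexp y⌋₊, 1 / (p : ℝ) ≤ ε * √y := by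
  have hlog : (fun y : ℝ => 5 + 4 * Real.log (2 * y)) =o[atTop] fun y => √y := by
    have hconst : (fun _ : ℝ => 5 + 4 * Real.log 2) =o[atTop] fun y => √y :=
      Asymptotics.isLittleO_const_left.2
        (Or.inr (tendsto_norm_atTop_atTop.comp Real.tendsto_sqrt_atTop))
    have hlog : Real.log =o[atTop] fun y => √y := by
      simpa only [Real.sqrt_eq_rpow] using isLittleO_log_rpow_atTop one_half_pos
    refine (hconst.add (hlog.const_mul_left 4)).congr' ?_ EventuallyEq.rfl
    filter_upwards [eventually_gt_atTop 0] with y hy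
    rw [Real.log_mul two_ne_zero hy.ne']
    ring
  filter_upwards [hlog.bound hε, eventually_ge_atTop 1] with y hbound hy
  refine (sum_inv_primesLE_exp_le hy).trans ((le_abs_self _).trans ?_)
  simpa [abs_of_nonneg (Real.sqrt_nonneg y)] using hbound

end PrimeSums

section EulerProduct

open Finset Nat

theorem summable_four_div_sq : Summable fun n : ℕ => 4 / (n : ℝ) ^ 2 := by
  simpa [div_eq_mul_inv] using (Real.summable_nat_pow_inv.2 one_lt_two).mul_left 4

theorem multipliable_coprimeFactor : Multipliable fun p : Nat.Primes => coprimeFactor p := by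
  have hsum : Summable fun p : Nat.Primes => coprimeFactor p - 1 := by
    refine (summable_four_div_sq.comp_injective Nat.Primes.coe_nat_injective).of_norm_bounded
      fun p => ?_
    rw [Real.norm_of_nonpos (sub_nonpos.2 (coprimeFactor_le_one p.2.two_le)), neg_sub,
      Function.comp_apply]
    linarith [exp_neg_four_div_sq_le_coprimeFactor p.2.two_le,
      Real.add_one_le_exp (-(4 / ((p : ℕ) : ℝ) ^ 2))]
  simpa using Real.multipliable_one_add_of_summable hsum

theorem tendsto_prod_primesLE_coprimeFactor :
    Tendsto (fun N => ∏ p ∈ primesLE N, coprimeFactor p) atTop (nhds coprimeConst) := by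
  have hprod : HasProd ({p | p.Prime}.mulIndicator coprimeFactor) coprimeConst :=
    hasProd_subtype_iff_mulIndicator.1 multipliable_coprimeFactor.hasProd
  refine (hprod.tendsto_prod_nat.comp (tendsto_add_atTop_nat 1)).congr fun N => ?_
  rw [Function.comp_apply, prod_mulIndicator_eq_prod_filter]
  rfl

theorem prod_primesLE_coprimeFactor_nonneg (z : ℕ) : 0 ≤ ∏ p ∈ primesLE z, coprimeFactor p :=
  prod_nonneg fun _ hp => (coprimeFactor_pos (two_le_of_mem_primesLE hp)).le

theorem prod_primesLE_coprimeFactor_le_one (z : ℕ) : ∏ p ∈ primesLE z, coprimeFactor p ≤ 1 :=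
  prod_le_one (fun _ hp => (coprimeFactor_pos (two_le_of_mem_primesLE hp)).le)
    fun _ hp => coprimeFactor_le_one (two_le_of_mem_primesLE hp)

theorem prod_primesLE_sdiff_coprimeFactor_ge (z N : ℕ) :
    1 - 8 / ((z : ℝ) + 1) ≤ ∏ p ∈ primesLE N \ primesLE z, coprimeFactor p := by
  have hsub : primesLE N \ primesLE z ⊆ Ioo z (N + 1) := fun p hp =>
    mem_Ioo.2 ⟨lt_of_mem_primesLE_sdiff hp,
      Nat.lt_succ_of_le (le_of_mem_primesLE (Finset.mem_sdiff.1 hp).1)⟩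
  calc 1 - 8 / ((z : ℝ) + 1) ≤ 1 - ∑ p ∈ Ioo z (N + 1), 4 / (p : ℝ) ^ 2 := by
        have := sum_Ioo_inv_sq_le (α := ℝ) z (N + 1)
        simp_rw [div_eq_mul_inv, ← mul_sum] at this ⊢
        linarith
    _ ≤ 1 - ∑ p ∈ primesLE N \ primesLE z, 4 / (p : ℝ) ^ 2 :=
        sub_le_sub_left (sum_le_sum_of_subset_of_nonneg hsub fun _ _ _ => by positivity) 1
    _ ≤ rexp (-∑ p ∈ primesLE N \ primesLE z, 4 / (p : ℝ) ^ 2) := by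
        rw [sub_eq_neg_add]
        exact Real.add_one_le_exp _
    _ = ∏ p ∈ primesLE N \ primesLE z, rexp (-(4 / (p : ℝ) ^ 2)) := by
        rw [← sum_neg_distrib, Real.exp_sum]
    _ ≤ ∏ p ∈ primesLE N \ primesLE z, coprimeFactor p :=
        prod_le_prod (fun _ _ => (exp_pos _).le) fun p hp =>
          exp_neg_four_div_sq_le_coprimeFactor (two_le_of_mem_primesLE (mem_sdiff.1 hp).1)

theorem prod_primesLE_coprimeFactor_le (z : ℕ) :
    ∏ p ∈ primesLE z, coprimeFactor p ≤ coprimeConst + 8 / ((z : ℝ) + 1) := by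
  have hnonneg := prod_primesLE_coprimeFactor_nonneg z
  have hle_one := prod_primesLE_coprimeFactor_le_one z
  rw [← sub_le_iff_le_add]
  refine ge_of_tendsto tendsto_prod_primesLE_coprimeFactor ?_
  filter_upwards [eventually_ge_atTop z] with N hN
  rw [← prod_sdiff (primesLE_mono hN)]
  have : 0 ≤ 8 / ((z : ℝ) + 1) := by positivity
  nlinarith [mul_le_mul_of_nonneg_right (prod_primesLE_sdiff_coprimeFactor_ge z N) hnonneg]

end EulerProduct

section Asymptotics

open Finset
open Nat (primesLE)
open scoped Nat

/-- The logarithm `√(log n · log log n)` of the sieving limit: coprimality of `m` and `σ m` is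
imposed at the primes up to `exp (sieveScale n)`. -/
noncomputable def sieveScale (n : ℕ) : ℝ := √(log n * log (log n))

theorem tendsto_log_natCast_atTop : Tendsto (fun n : ℕ => log (n : ℝ)) atTop atTop :=
  Real.tendsto_log_atTop.comp tendsto_natCast_atTop_atTop

theorem tendsto_log_log_natCast_atTop : Tendsto (fun n : ℕ => log (log (n : ℝ))) atTop atTop :=
  Real.tendsto_log_atTop.comp tendsto_log_natCast_atTop

theorem tendsto_sieveScale : Tendsto sieveScale atTop atTop :=
  Real.tendsto_sqrt_atTop.comp
    (tendsto_log_natCast_atTop.atTop_mul_atTop₀ tendsto_log_log_natCast_atTop)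

theorem eventually_sieveScale_sq :
    ∀ᶠ n : ℕ in atTop, sieveScale n ^ 2 = log n * log (log n) := by
  filter_upwards [tendsto_log_natCast_atTop.eventually_ge_atTop 0,
    tendsto_log_log_natCast_atTop.eventually_ge_atTop 0] with n hlog hloglog
  exact Real.sq_sqrt (mul_nonneg hlog hloglog)

theorem eventually_log_le_sieveScale_sq : ∀ᶠ n : ℕ in atTop, log n ≤ sieveScale n ^ 2 := by
  filter_upwards [eventually_sieveScale_sq, tendsto_log_natCast_atTop.eventually_ge_atTop 0,
    tendsto_log_log_natCast_atTop.eventually_ge_atTop 1] with n hsq hlog hloglog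
  rw [hsq]
  exact le_mul_of_one_le_right hlog hloglog

theorem eventually_two_mul_sieveScale_le_log :
    ∀ᶠ n : ℕ in atTop, 2 * sieveScale n ≤ log n := by
  have hsmall : ∀ᶠ n : ℕ in atTop, ‖log (log (n : ℝ))‖ ≤ 1 / 4 * ‖log (n : ℝ)‖ :=
    tendsto_log_natCast_atTop.eventually
      (Real.isLittleO_log_id_atTop.bound (by norm_num : (0 : ℝ) < 1 / 4))
  filter_upwards [hsmall, eventually_sieveScale_sq,
    tendsto_log_natCast_atTop.eventually_ge_atTop 0] with n hsmall hsq hlog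
  rw [Real.norm_of_nonneg hlog] at hsmall
  have hloglog : log (log n) ≤ 1 / 4 * log n := (le_abs_self _).trans hsmall
  refine le_of_sq_le_sq ?_ hlog
  calc (2 * sieveScale n) ^ 2 = 4 * (log n * log (log n)) := by rw [mul_pow, hsq]; norm_num
    _ ≤ 4 * (log n * (1 / 4 * log n)) := by gcongr
    _ = log n ^ 2 := by ring

theorem eventually_exp_sieveScale_le :
    ∀ᶠ n : ℕ in atTop, exp (sieveScale n) ≤ n * exp (-sieveScale n) := by
  filter_upwards [eventually_two_mul_sieveScale_le_log, eventually_gt_atTop 0] with n hle hn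
  rw [← Real.exp_log (Nat.cast_pos.2 hn), ← Real.exp_add]
  gcongr
  linarith

theorem cast_le_of_mem_primesLE_floor {p : ℕ} {z : ℝ} (hz : 0 ≤ z) (hp : p ∈ primesLE ⌊z⌋₊) :
    (p : ℝ) ≤ z :=
  (Nat.le_floor_iff hz).1 (Nat.le_of_mem_primesLE hp)

theorem card_primesLE_le (z : ℕ) : #(primesLE z) ≤ z := by
  have hsub : primesLE z ⊆ Icc 1 z := fun p hp =>
    mem_Icc.2 ⟨(Nat.prime_of_mem_primesLE hp).one_le, Nat.le_of_mem_primesLE hp⟩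
  simpa using card_le_card hsub

theorem eventually_prod_one_add_twelve_div_le :
    ∀ᶠ y : ℝ in atTop, ∏ p ∈ primesLE ⌊exp y⌋₊, (1 + 12 / (p : ℝ)) ≤ exp y := by
  filter_upwards [eventually_sum_inv_primesLE_exp_le_sqrt (by norm_num : (0 : ℝ) < 1 / 12),
    eventually_ge_atTop 1] with y hsum hy
  have hsqrt : √y ≤ y := Real.sqrt_le_iff.2 ⟨by linarith, le_self_pow₀ hy two_ne_zero⟩
  calc ∏ p ∈ primesLE ⌊exp y⌋₊, (1 + 12 / (p : ℝ))
      ≤ exp (∑ p ∈ primesLE ⌊exp y⌋₊, 12 / (p : ℝ)) :=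
        Real.prod_one_add_le_exp_sum _ fun _ => by positivity
    _ = exp (12 * ∑ p ∈ primesLE ⌊exp y⌋₊, 1 / (p : ℝ)) := by simp_rw [mul_sum, mul_one_div]
    _ ≤ exp y := by gcongr; linarith

/-- The exponent `η` used in Rankin's trick. With `y = sieveScale n`, it is chosen to turn
`n ^ (-η)` into `exp (-y / 4)` while keeping `(exp y) ^ η = (log n) ^ (1 / 4)` below `√y`. -/
noncomputable def rankinExponent (n : ℕ) : ℝ := log (log n) / (4 * sieveScale n)

theorem eventually_rankinExponent_mem_Icc :
    ∀ᶠ n : ℕ in atTop, rankinExponent n ∈ Set.Icc (0 : ℝ) 1 := by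
  filter_upwards [eventually_sieveScale_sq, eventually_two_mul_sieveScale_le_log,
    tendsto_sieveScale.eventually_gt_atTop 0,
    tendsto_log_log_natCast_atTop.eventually_ge_atTop 0] with n hsq hlog hy hloglog
  refine ⟨by unfold rankinExponent; positivity, ?_⟩
  rw [rankinExponent, div_le_one (by positivity)]
  nlinarith

theorem eventually_rpow_one_sub_rankinExponent :
    ∀ᶠ n : ℕ in atTop, (n : ℝ) ^ (1 - rankinExponent n) = n * exp (-(sieveScale n / 4)) := by
  filter_upwards [eventually_sieveScale_sq, tendsto_sieveScale.eventually_gt_atTop 0,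
    eventually_gt_atTop 0] with n hsq hy hn
  have hmul : log n * rankinExponent n = sieveScale n / 4 := by
    rw [rankinExponent, ← mul_div_assoc, ← hsq]
    field_simp
  rw [Real.rpow_def_of_pos (by positivity), mul_sub, mul_one, hmul, sub_eq_add_neg, Real.exp_add,
    Real.exp_log (by positivity)]

theorem eventually_exp_sieveScale_rpow_rankinExponent_le :
    ∀ᶠ n : ℕ in atTop, exp (sieveScale n) ^ rankinExponent n ≤ √(sieveScale n) := by
  filter_upwards [eventually_log_le_sieveScale_sq, tendsto_sieveScale.eventually_gt_atTop 0,
    tendsto_log_natCast_atTop.eventually_gt_atTop 0] with n hlog_le hy hlog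
  have hmul : sieveScale n * rankinExponent n = log (log n) / 4 := by
    rw [rankinExponent]
    field_simp
  have hloglog : log (log n) ≤ 2 * log (sieveScale n) := by
    simpa using Real.log_le_log hlog hlog_le
  rw [← Real.exp_mul, hmul, ← Real.le_log_iff_exp_le (Real.sqrt_pos.2 hy), Real.log_sqrt hy.le]
  linarith

theorem eventually_card_divisibilityTypes_le :
    ∀ᶠ n : ℕ in atTop, (#(divisibilityTypes (primesLE ⌊exp (sieveScale n)⌋₊) n) : ℝ) ≤
      n * exp (-(3 / 16) * sieveScale n) := by
  have hsum := tendsto_sieveScale.eventually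
    (eventually_sum_inv_primesLE_exp_le_sqrt (by norm_num : (0 : ℝ) < 1 / 16))
  filter_upwards [hsum, tendsto_sieveScale.eventually_ge_atTop 0,
    eventually_rankinExponent_mem_Icc, eventually_rpow_one_sub_rankinExponent,
    eventually_exp_sieveScale_rpow_rankinExponent_le] with n hsum hy hη hpow hsqrt
  set y := sieveScale n
  set S := ∑ p ∈ primesLE ⌊exp y⌋₊, 1 / (p : ℝ)
  calc (#(divisibilityTypes (primesLE ⌊exp y⌋₊) n) : ℝ)
      ≤ n ^ (1 - rankinExponent n) * exp (exp y ^ rankinExponent n * S) :=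
        card_divisibilityTypes_le_exp (fun p => Nat.prime_of_mem_primesLE)
          (fun p => cast_le_of_mem_primesLE_floor (exp_pos _).le) n hη.1 hη.2
    _ ≤ n * exp (-(y / 4)) * exp (√y * (1 / 16 * √y)) := by
        rw [hpow]
        gcongr
    _ = n * exp (-(3 / 16) * y) := by
        rw [mul_assoc, ← Real.exp_add, mul_left_comm, Real.mul_self_sqrt hy]
        ring_nf

theorem eventually_quadratic_mul_exp_le :
    ∀ᶠ y : ℝ in atTop, (6 + 3 * y ^ 2) * exp (-(3 / 16) * y) ≤ exp (-(1 / 8) * y) := by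
  filter_upwards [(isLittleO_pow_exp_pos_mul_atTop 2 (by norm_num : (0 : ℝ) < 1 / 16)).bound
    (by norm_num : (0 : ℝ) < 1 / 4), eventually_ge_atTop 3] with y hpow hy
  rw [Real.norm_of_nonneg (by positivity), Real.norm_of_nonneg (exp_pos _).le] at hpow
  calc (6 + 3 * y ^ 2) * exp (-(3 / 16) * y)
      ≤ exp (1 / 16 * y) * exp (-(3 / 16) * y) := by gcongr; nlinarith
    _ = exp (-(1 / 8) * y) := by rw [← Real.exp_add]; ring_nf

theorem thirty_two_mul_sq_le_exp {x a : ℝ} (hx : 0 ≤ x) (hxa : x ≤ exp a) :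
    32 * x ^ 2 ≤ exp (4 + 2 * a) := by
  have h32 : (32 : ℝ) ≤ exp 4 := by
    calc (32 : ℝ) ≤ 2.7 ^ 4 := by norm_num
      _ ≤ exp 1 ^ 4 := by gcongr; linarith [Real.exp_one_gt_d9]
      _ = exp 4 := by rw [← Real.exp_nat_mul]; norm_num
  calc 32 * x ^ 2 ≤ exp 4 * exp a ^ 2 := by gcongr
    _ = exp (4 + 2 * a) := by rw [Real.exp_add, ← Real.exp_nat_mul, Nat.cast_ofNat]

theorem exp_one_mul_sqrt_le_exp {x a : ℝ} (hx : 1 ≤ x) (hxa : x ≤ exp a) :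
    exp 1 * √x ≤ exp (1 + a) := by
  have hsqrt : √x ≤ x := Real.sqrt_le_iff.2 ⟨by linarith, le_self_pow₀ hx two_ne_zero⟩
  rw [Real.exp_add]
  gcongr
  exact hsqrt.trans hxa

theorem eventually_sieve_error_le :
    ∀ᶠ n : ℕ in atTop, (32 * (n : ℝ) ^ 2) ^ #(primesLE ⌊exp (sieveScale n)⌋₊) *
        (exp 1 * √n) ^ #(divisibilityTypes (primesLE ⌊exp (sieveScale n)⌋₊) n) *
        exp (∏ p ∈ primesLE ⌊exp (sieveScale n)⌋₊, (1 + 12 / (p : ℝ))) ≤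
      exp (n * exp (-(1 / 8) * sieveScale n)) := by
  filter_upwards [eventually_card_divisibilityTypes_le, eventually_exp_sieveScale_le,
    tendsto_sieveScale.eventually eventually_prod_one_add_twelve_div_le,
    tendsto_sieveScale.eventually eventually_quadratic_mul_exp_le,
    eventually_log_le_sieveScale_sq, tendsto_sieveScale.eventually_ge_atTop 0,
    eventually_gt_atTop 0] with n htypes hexp hprod hquad hlog hy hn
  set y := sieveScale n
  set P := primesLE ⌊exp y⌋₊
  have hn_le : (n : ℝ) ≤ exp (y ^ 2) := (Real.log_le_iff_le_exp (Nat.cast_pos.2 hn)).1 hlog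
  have hmono : exp (-y) ≤ exp (-(3 / 16) * y) := by gcongr; linarith
  have hexp' : exp y ≤ n * exp (-(3 / 16) * y) := hexp.trans (by gcongr)
  have hcard : (#P : ℝ) ≤ n * exp (-(3 / 16) * y) :=
    ((Nat.cast_le.2 (card_primesLE_le _)).trans (Nat.floor_le (exp_pos _).le)).trans hexp'
  have hbase := thirty_two_mul_sq_le_exp n.cast_nonneg hn_le
  have hbase' := exp_one_mul_sqrt_le_exp (Nat.one_le_cast.2 hn) hn_le
  calc (32 * (n : ℝ) ^ 2) ^ #P * (exp 1 * √n) ^ #(divisibilityTypes P n) *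
        exp (∏ p ∈ P, (1 + 12 / (p : ℝ)))
      ≤ exp (4 + 2 * y ^ 2) ^ #P * exp (1 + y ^ 2) ^ #(divisibilityTypes P n) * exp (exp y) := by
        gcongr
    _ = exp (#P * (4 + 2 * y ^ 2) + #(divisibilityTypes P n) * (1 + y ^ 2) + exp y) := by
        simp only [Real.exp_add _ (exp y), Real.exp_add (_ * _), Real.exp_nat_mul]
    _ ≤ exp (n * exp (-(3 / 16) * y) * (4 + 2 * y ^ 2) + n * exp (-(3 / 16) * y) * (1 + y ^ 2) +
          n * exp (-(3 / 16) * y)) := by gcongr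
    _ = exp (n * ((6 + 3 * y ^ 2) * exp (-(3 / 16) * y))) := by ring_nf
    _ ≤ exp (n * exp (-(1 / 8) * y)) := by gcongr

theorem eventually_prod_coprimeFactor_mul_exp_le :
    ∀ᶠ y : ℝ in atTop, (∏ p ∈ primesLE ⌊exp y⌋₊, coprimeFactor p) * exp (exp (-(1 / 8) * y)) ≤
      coprimeConst + exp (-(1 / 16) * y) := by
  filter_upwards [eventually_ge_atTop 160] with y hy
  set Q := ∏ p ∈ primesLE ⌊exp y⌋₊, coprimeFactor p
  have hQ : Q ≤ coprimeConst + 8 * exp (-y) := by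
    refine (prod_primesLE_coprimeFactor_le _).trans ?_
    rw [Real.exp_neg, ← div_eq_mul_inv]
    gcongr
    exact (Nat.lt_floor_add_one _).le
  have hQ₁ : Q ≤ 1 := prod_primesLE_coprimeFactor_le_one _
  set ε := exp (-(1 / 16) * y)
  have hε : 0 < ε := exp_pos _
  have hε_sq : exp (-(1 / 8) * y) = ε ^ 2 := by rw [← Real.exp_nat_mul]; ring_nf
  have hε_small : 10 * ε ≤ 1 := by
    rw [← le_div_iff₀ hε, one_div, ← Real.exp_neg]
    linarith [Real.add_one_le_exp (-(-(1 / 16) * y))]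
  have hexp_y : exp (-y) ≤ ε ^ 2 := by
    rw [← hε_sq]
    gcongr
    linarith
  have hexp : exp (ε ^ 2) ≤ 1 + 2 * ε ^ 2 := by
    have h := Real.abs_exp_sub_one_le (x := ε ^ 2) (by rw [abs_of_pos (by positivity)]; nlinarith)
    rw [abs_of_pos (pow_pos hε 2)] at h
    linarith [le_of_abs_le h]
  calc Q * exp (exp (-(1 / 8) * y)) ≤ Q * (1 + 2 * ε ^ 2) := by
        rw [hε_sq]
        gcongr
        exact prod_primesLE_coprimeFactor_nonneg _
    _ ≤ Q + 2 * ε ^ 2 := by nlinarith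
    _ ≤ coprimeConst + 10 * ε ^ 2 := by linarith
    _ ≤ coprimeConst + ε := by nlinarith

theorem eventually_coprimePermCount_le :
    ∀ᶠ n : ℕ in atTop, (coprimePermCount n : ℝ) ≤
      n ! * ((∏ p ∈ primesLE ⌊exp (sieveScale n)⌋₊, coprimeFactor p) *
        exp (exp (-(1 / 8) * sieveScale n))) ^ n := by
  filter_upwards [eventually_sieve_error_le, eventually_gt_atTop 0] with n herror hn
  have hprod := prod_primesLE_coprimeFactor_nonneg ⌊exp (sieveScale n)⌋₊
  refine (coprimePermCount_le (P := primesLE ⌊exp (sieveScale n)⌋₊) hn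
    fun p => Nat.prime_of_mem_primesLE).trans ?_
  rw [mul_pow _ (exp _), ← Real.exp_nat_mul, ← mul_assoc (n ! : ℝ)]
  gcongr

end Asymptotics

/-- Upper bound: there are `δ > 0` and `N` such that for all `n ≥ N`,
`C(n) ≤ n!·(c + exp(−δ√(log n log log n)))^n`. -/
theorem coprimePermCount_upper :
    ∃ δ : ℝ, 0 < δ ∧ ∃ N : ℕ, ∀ n : ℕ, N ≤ n →
      (coprimePermCount n : ℝ) ≤
        (n.factorial : ℝ) *
          (coprimeConst + Real.exp (-δ * Real.sqrt (Real.log n * Real.log (Real.log n)))) ^ n := by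
  refine ⟨1 / 16, by norm_num, eventually_atTop.1 ?_⟩
  filter_upwards [eventually_coprimePermCount_le,
    tendsto_sieveScale.eventually eventually_prod_coprimeFactor_mul_exp_le] with n hcount hprod
  have hprod_nonneg := prod_primesLE_coprimeFactor_nonneg ⌊exp (sieveScale n)⌋₊
  refine hcount.trans ?_
  gcongr
  exact hprod
end

section
/- There exists a constant δ > 0 and N ∈ ℕ such that for all n ≥ N, C(n) ≥ n!·(c − exp(−δ·(log n · log log n)^{1/2}))^n. -/
open Real Filter

/-!
A doubly stochastic matrix `B` supported on the pairs `(i, j)` with `gcd i j = 1` certifies many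
coprime permutations: Gurvits' capacity inequality for stable polynomials gives
`C(n) ≥ exp (H(B) - n)`, where `H(B)` is the entropy of `B`. To find `B` of large entropy, pair odd
with even numbers through the kernel `w i * w j * 1_{gcd i j = 1}`, where the multiplicative weight
`w` makes the row sums constant up to a small error, remove that error with the help of primes
`p ∈ (n / 4, n / 2]`, which are coprime to all but a few numbers, and symmetrise. The entropy of the
result is at least `n log n + n log c - O(n ^ a log n)` for every `a > 1 / 2`, while
`n! = exp (n log n - n + O(log n))`.
-/

section Capacity

open Polynomial Multiset

theorem coeff_one_div_eval_zero_eq_sum_roots {P : ℂ[X]} (h0 : P.eval 0 ≠ 0) :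
    P.coeff 1 / P.eval 0 = (P.roots.map fun r ↦ -r⁻¹).sum := by
  have hlog := (IsAlgClosed.splits P).eval_derivative_div_eval_of_ne_zero h0
  have hderiv : P.derivative.eval 0 = P.coeff 1 := by
    simp [← coeff_zero_eq_eval_zero, coeff_derivative]
  simpa only [hderiv, zero_sub, one_div, inv_neg] using hlog

theorem re_coeff_one_div_eval_zero_pos {P : ℂ[X]} (hdeg : P.natDegree ≠ 0)
    (hroots : ∀ r ∈ P.roots, r.re < 0) (h0 : P.eval 0 ≠ 0) : 0 < (P.coeff 1 / P.eval 0).re := by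
  have hne : P.roots ≠ ∅ := fun h ↦ hdeg <| by
    rw [(IsAlgClosed.splits P).natDegree_eq_card_roots, h, empty_eq_zero, card_zero]
  rw [coeff_one_div_eval_zero_eq_sum_roots h0, ← Complex.coe_reAddGroupHom, map_multiset_sum,
    Multiset.map_map, ← sum_map_zero (m := P.roots)]
  refine sum_lt_sum_of_nonempty hne fun r hr ↦ ?_
  have hr0 : r ≠ 0 := by rintro rfl; simpa using hroots 0 hr
  simpa [Complex.inv_re, neg_div] using
    div_neg_of_neg_of_pos (hroots r hr) (Complex.normSq_pos.2 hr0)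

theorem norm_eval_le_mul_exp_of_roots_neg {P : ℂ[X]}
    (hroots : ∀ r ∈ P.roots, r.im = 0 ∧ r.re < 0) (h0 : P.eval 0 ≠ 0) {t : ℝ} (ht : 0 ≤ t) :
    ‖P.eval (t : ℂ)‖ ≤ ‖P.eval 0‖ * exp (t * (P.coeff 1 / P.eval 0).re) := by
  have hfactor : ∀ r ∈ P.roots, ‖(t : ℂ) - r‖ ≤ ‖0 - r‖ * exp (t * (-r⁻¹).re) := by
    intro r hr
    obtain ⟨x, rfl⟩ : ∃ x : ℝ, (x : ℂ) = r := ⟨r.re, Complex.ext rfl (hroots r hr).1.symm⟩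
    have hx : x < 0 := (hroots _ hr).2
    rw [zero_sub, norm_neg, ← Complex.ofReal_sub, ← Complex.ofReal_inv, ← Complex.ofReal_neg,
      Complex.ofReal_re, Complex.norm_real, Complex.norm_real, norm_of_nonneg (by linarith),
      norm_of_nonpos hx.le]
    calc t - x = -x * (t * -x⁻¹ + 1) := by field_simp [hx.ne]; ring
      _ ≤ -x * exp (t * -x⁻¹) := by gcongr; exacts [by linarith, add_one_le_exp _]
  have hs := IsAlgClosed.splits P
  rw [coeff_one_div_eval_zero_eq_sum_roots h0, hs.eval_eq_prod_roots, hs.eval_eq_prod_roots,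
    norm_mul, norm_mul, mul_assoc]
  gcongr
  generalize P.roots = s at hfactor
  induction s using Multiset.induction_on with
  | empty => simp
  | cons a s ih =>
    simp only [map_cons, prod_cons, sum_cons, Complex.add_re, norm_mul, mul_add, exp_add]
    calc _ ≤ (‖0 - a‖ * exp (t * (-a⁻¹).re)) * _ :=
          mul_le_mul (hfactor a (mem_cons_self a s))
            (ih fun r hr ↦ hfactor r (mem_cons_of_mem hr)) (norm_nonneg _) (by positivity)
      _ = _ := by ring

theorem le_norm_coeff_one_of_eval_zero_eq_zero {P : ℂ[X]} (h0 : P.eval 0 = 0) {c : ℝ}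
    (hc : ∀ t : ℝ, 0 < t → c * t ≤ ‖P.eval (t : ℂ)‖) : c ≤ ‖P.coeff 1‖ := by
  have hdiv : ∀ t : ℝ, 0 < t → c ≤ ‖P.divX.eval (t : ℂ)‖ := fun t ht ↦ by
    have hP := P.divX_mul_X_add
    rw [coeff_zero_eq_eval_zero, h0, C_0, add_zero] at hP
    have := hc t ht
    rwa [← hP, eval_mul, eval_X, norm_mul, Complex.norm_real, norm_of_nonneg ht.le,
      mul_le_mul_iff_left₀ ht] at this
  have hcont : Continuous fun t : ℝ ↦ ‖P.divX.eval (t : ℂ)‖ := by fun_prop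
  have hlim := ge_of_tendsto (hcont.continuousWithinAt.tendsto (x := 0) (s := Set.Ioi 0))
    (by filter_upwards [self_mem_nhdsWithin] with t ht using hdiv t ht)
  rwa [Complex.ofReal_zero, ← coeff_zero_eq_eval_zero, coeff_divX, zero_add] at hlim

theorem mul_exp_neg_one_le_norm_coeff_one {P : ℂ[X]}
    (hroots : ∀ r ∈ P.roots, r.im = 0 ∧ r.re ≤ 0) {c : ℝ} (hc0 : 0 ≤ c)
    (hc : ∀ t : ℝ, 0 < t → c * t ≤ ‖P.eval (t : ℂ)‖) : c * exp (-1) ≤ ‖P.coeff 1‖ := by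
  by_cases h0 : P.eval 0 = 0
  · exact (mul_le_of_le_one_right hc0 (exp_le_one_iff.2 (by norm_num))).trans
      (le_norm_coeff_one_of_eval_zero_eq_zero h0 hc)
  obtain rfl | hc_pos := hc0.eq_or_lt
  · simp
  have hneg : ∀ r ∈ P.roots, r.im = 0 ∧ r.re < 0 := fun r hr ↦
    ⟨(hroots r hr).1, (hroots r hr).2.lt_of_ne fun hre ↦ h0 <| by
      have hr0 : r = 0 := Complex.ext hre (hroots r hr).1
      simpa [hr0] using isRoot_of_mem_roots hr⟩
  have hbound : ∀ t : ℝ, 0 < t → c * t ≤ ‖P.eval 0‖ * exp (t * (P.coeff 1 / P.eval 0).re) :=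
    fun t ht ↦ (hc t ht).trans (norm_eval_le_mul_exp_of_roots_neg hneg h0 ht.le)
  have hle : (P.coeff 1 / P.eval 0).re * ‖P.eval 0‖ ≤ ‖P.coeff 1‖ := by
    rw [← le_div_iff₀ (norm_pos_iff.2 h0), ← norm_div]
    exact Complex.re_le_norm _
  set a := (P.coeff 1 / P.eval 0).re
  obtain ha | ha := le_or_gt a 0
  · have ht : 0 < (‖P.eval 0‖ + 1) / c := by positivity
    have hexp := exp_le_one_iff.2 (mul_nonpos_of_nonneg_of_nonpos ht.le ha)
    have := (hbound _ ht).trans (mul_le_of_le_one_right (norm_nonneg _) hexp)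
    rw [mul_div_cancel₀ _ hc_pos.ne'] at this
    linarith
  -- `t = 1 / a` minimises `exp (a * t) / t`.
  · have hopt := hbound a⁻¹ (inv_pos.2 ha)
    rw [inv_mul_cancel₀ ha.ne', ← div_eq_mul_inv, div_le_iff₀ ha] at hopt
    calc c * exp (-1) ≤ ‖P.eval 0‖ * exp 1 * a * exp (-1) := by gcongr
      _ = a * ‖P.eval 0‖ := by rw [exp_neg]; field_simp
      _ ≤ ‖P.coeff 1‖ := hle

theorem eval_smul_of_isHomogeneous {R σ : Type*} [CommSemiring R] {p : MvPolynomial σ R} {n : ℕ}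
    (hp : p.IsHomogeneous n) (w : R) (z : σ → R) :
    MvPolynomial.eval (w • z) p = w ^ n * MvPolynomial.eval z p := by
  rw [MvPolynomial.eval_eq, MvPolynomial.eval_eq, Finset.mul_sum]
  refine Finset.sum_congr rfl fun d hd ↦ ?_
  have hdeg : ∑ i ∈ d.support, d i = n := by
    by_contra hne
    exact MvPolynomial.mem_support_iff.1 hd (hp.coeff_eq_zero hne)
  simp only [Pi.smul_apply, smul_eq_mul, mul_pow, Finset.prod_mul_distrib,
    Finset.prod_pow_eq_pow_sum, hdeg]
  ring

/-- Nonvanishing on the closed right half-space minus the imaginary space. This is Gurvits'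
H-stability strengthened at the boundary, which is what makes it pass to `linearPart`. -/
def IsHalfPlaneStable {σ : Type*} (p : MvPolynomial σ ℂ) : Prop :=
  ∀ z : σ → ℂ, (∀ i, 0 ≤ (z i).re) → (∃ i, 0 < (z i).re) → p.eval z ≠ 0

section LinearPart

variable {n : ℕ}

/-- The polynomial `p(·, z)` in the first variable. -/
noncomputable def slice (p : MvPolynomial (Fin (n + 1)) ℂ) (z : Fin n → ℂ) : ℂ[X] :=
  (MvPolynomial.finSuccEquiv ℂ n p).map (MvPolynomial.eval z)

/-- The coefficient of the first power of the first variable, i.e. `∂p/∂x₀` at `x₀ = 0`: the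
operation by which Gurvits' induction eliminates a variable. -/
noncomputable def linearPart (p : MvPolynomial (Fin (n + 1)) ℂ) : MvPolynomial (Fin n) ℂ :=
  (MvPolynomial.finSuccEquiv ℂ n p).coeff 1

variable {p : MvPolynomial (Fin (n + 1)) ℂ}

theorem eval_slice (p : MvPolynomial (Fin (n + 1)) ℂ) (z : Fin n → ℂ) (t : ℂ) :
    (slice p z).eval t = p.eval (Fin.cons t z : Fin (n + 1) → ℂ) :=
  (MvPolynomial.eval_eq_eval_mv_eval' z t p).symm

theorem coeff_one_slice (p : MvPolynomial (Fin (n + 1)) ℂ) (z : Fin n → ℂ) :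
    (slice p z).coeff 1 = (linearPart p).eval z := by
  rw [slice, Polynomial.coeff_map, linearPart]

namespace IsHalfPlaneStable

theorem natDegree_slice_ne_zero (hp : IsHalfPlaneStable p) {d : ℕ} (hd : d ≠ 0)
    (hom : p.IsHomogeneous d) (z : Fin n → ℂ) : (slice p z).natDegree ≠ 0 := by
  intro hdeg
  obtain ⟨a, ha⟩ := natDegree_eq_zero.1 hdeg
  have hconst : ∀ t : ℂ, p.eval (Fin.cons t z : Fin (n + 1) → ℂ) = a := fun t ↦ by
    rw [← eval_slice, ← ha, eval_C]
  have hscale : (fun s : ℂ ↦ p.eval (Fin.cons 1 (s • z) : Fin (n + 1) → ℂ)) =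
      fun s ↦ s ^ d * a := by
    refine Continuous.ext_on (dense_compl_singleton (0 : ℂ)) ?_ (by fun_prop) fun s hs ↦ ?_
    · exact (MvPolynomial.continuous_eval p).comp
        (Continuous.finCons continuous_const (by fun_prop))
    · have hcons : (Fin.cons 1 (s • z) : Fin (n + 1) → ℂ) =
          s • (Fin.cons s⁻¹ z : Fin (n + 1) → ℂ) := by
        rw [← mul_inv_cancel₀ (show s ≠ 0 from hs)]
        exact (Matrix.smul_cons s s⁻¹ z).symm
      simp only [hcons, eval_smul_of_isHomogeneous hom, hconst]
  have hzero := congrFun hscale 0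
  simp only [zero_pow hd, zero_mul] at hzero
  exact hp _ (Fin.forall_fin_succ.2 ⟨by simp, by simp⟩) ⟨0, by simp⟩ hzero

theorem re_nonpos_of_mem_roots_slice (hp : IsHalfPlaneStable p) {z : Fin n → ℂ}
    (hz : ∀ i, 0 ≤ (z i).re) {r : ℂ} (hr : r ∈ (slice p z).roots) : r.re ≤ 0 := by
  by_contra! h
  refine hp (Fin.cons r z) (Fin.forall_fin_succ.2 ⟨h.le, hz⟩) ⟨0, h⟩ ?_
  rw [← eval_slice]
  exact isRoot_of_mem_roots hr

theorem eval_slice_ne_zero (hp : IsHalfPlaneStable p) {z : Fin n → ℂ} (hz : ∀ i, 0 ≤ (z i).re)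
    (hz' : ∃ i, 0 < (z i).re) {t : ℂ} (ht : 0 ≤ t.re) : (slice p z).eval t ≠ 0 := by
  rw [eval_slice]
  exact hp _ (Fin.forall_fin_succ.2 ⟨ht, hz⟩) (hz'.imp' Fin.succ fun _ ↦ id)

theorem im_eq_zero_of_mem_roots_slice (hp : IsHalfPlaneStable p) {d : ℕ}
    (hom : p.IsHomogeneous d) {x : Fin n → ℝ} (hx : ∀ i, 0 ≤ x i) {r : ℂ}
    (hr : r ∈ (slice p fun i ↦ (x i : ℂ)).roots) : r.im = 0 := by
  by_contra him
  -- A rotation taking `r` into the right half-plane while keeping the `x i` there.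
  set w : ℂ := ⟨1, (r.re - 1) / r.im⟩
  have hr_rot : (w * r).re = 1 := by simp [w, him]
  have hx_rot : ∀ i, 0 ≤ (w * (x i : ℂ)).re := fun i ↦ by simpa [w] using hx i
  refine hp (w • (Fin.cons r fun i ↦ (x i : ℂ) : Fin (n + 1) → ℂ))
    (Fin.forall_fin_succ.2 ⟨hr_rot.symm ▸ zero_le_one, hx_rot⟩)
    ⟨0, hr_rot.symm ▸ zero_lt_one⟩ ?_
  rw [eval_smul_of_isHomogeneous hom, ← eval_slice, isRoot_of_mem_roots hr, mul_zero]

protected theorem linearPart (hp : IsHalfPlaneStable p) {d : ℕ} (hd : d ≠ 0)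
    (hom : p.IsHomogeneous d) : IsHalfPlaneStable (linearPart p) := by
  intro z hz hz' h
  have hroots : ∀ r ∈ (slice p z).roots, r.re < 0 := fun r hr ↦ by
    by_contra! hre
    exact hp.eval_slice_ne_zero hz hz' hre (isRoot_of_mem_roots hr)
  have := re_coeff_one_div_eval_zero_pos (hp.natDegree_slice_ne_zero hd hom z) hroots
    (hp.eval_slice_ne_zero hz hz' le_rfl)
  rw [coeff_one_slice, h, zero_div] at this
  exact lt_irrefl _ this

theorem mul_exp_neg_one_le_norm_eval_linearPart (hp : IsHalfPlaneStable p) {d : ℕ}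
    (hom : p.IsHomogeneous d) {x : Fin n → ℝ} (hx : ∀ i, 0 ≤ x i) {c : ℝ} (hc0 : 0 ≤ c)
    (hc : ∀ t : ℝ, 0 < t → c * t ≤ ‖p.eval (Fin.cons (t : ℂ) fun i ↦ (x i : ℂ))‖) :
    c * exp (-1) ≤ ‖(linearPart p).eval fun i ↦ (x i : ℂ)‖ := by
  rw [← coeff_one_slice]
  refine mul_exp_neg_one_le_norm_coeff_one (fun r hr ↦ ⟨hp.im_eq_zero_of_mem_roots_slice hom hx hr,
    hp.re_nonpos_of_mem_roots_slice (fun i ↦ by simpa using hx i) hr⟩) hc0 fun t ht ↦ ?_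
  rw [eval_slice]
  exact hc t ht

end IsHalfPlaneStable

end LinearPart

/-- Gurvits' capacity inequality. -/
theorem IsHalfPlaneStable.mul_exp_neg_le_norm_coeff {n : ℕ} {p : MvPolynomial (Fin n) ℂ}
    (hp : IsHalfPlaneStable p) (hom : p.IsHomogeneous n) {c : ℝ} (hc0 : 0 ≤ c)
    (hc : ∀ x : Fin n → ℝ, (∀ i, 0 < x i) → c * ∏ i, x i ≤ ‖p.eval fun i ↦ (x i : ℂ)‖) :
    c * exp (-n) ≤ ‖p.coeff (Finsupp.equivFunOnFinite.symm fun _ ↦ 1)‖ := by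
  induction n generalizing c with
  | zero =>
    have h := hc 0 (fun i ↦ i.elim0)
    rw [MvPolynomial.eq_C_of_isEmpty p] at h ⊢
    simpa [Subsingleton.elim (Finsupp.equivFunOnFinite.symm fun _ : Fin 0 ↦ 1) 0] using h
  | succ n ih =>
    have hlin : ∀ x : Fin n → ℝ, (∀ i, 0 < x i) →
        c * exp (-1) * ∏ i, x i ≤ ‖(linearPart p).eval fun i ↦ (x i : ℂ)‖ := by
      intro x hx
      rw [mul_right_comm]
      refine hp.mul_exp_neg_one_le_norm_eval_linearPart hom (fun i ↦ (hx i).le)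
        (mul_nonneg hc0 (Finset.prod_nonneg fun i _ ↦ (hx i).le)) fun t ht ↦ ?_
      have hcons : (fun i ↦ ((Fin.cons t x : Fin (n + 1) → ℝ) i : ℂ)) =
          Fin.cons (t : ℂ) fun i ↦ (x i : ℂ) :=
        funext (Fin.forall_fin_succ.2 ⟨rfl, fun _ ↦ rfl⟩)
      have h := hc (Fin.cons t x) (Fin.forall_fin_succ.2 ⟨ht, hx⟩)
      rwa [hcons, Fin.prod_cons, mul_comm t, ← mul_assoc] at h
    have h := ih (hp.linearPart n.succ_ne_zero hom)
      (hom.finSuccEquiv_coeff_isHomogeneous 1 n (add_comm 1 n)) (by positivity) hlin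
    rw [linearPart, MvPolynomial.finSuccEquiv_coeff_coeff, mul_assoc, ← exp_add] at h
    convert h using 3
    · push_cast; ring
    · congr 1
      ext i
      refine Fin.cases ?_ (fun j ↦ ?_) i <;> simp

end Capacity

section Permanent

open Matrix MvPolynomial

/-- The product of the linear forms given by the rows of `A`; its multilinear coefficient is the
permanent of `A`. -/
noncomputable def rowFormProd {ι R : Type*} [Fintype ι] [CommSemiring R] (A : Matrix ι ι R) :
    MvPolynomial ι R :=
  ∏ i, ∑ j, C (A i j) * X j

section

variable {ι R : Type*} [Fintype ι] [CommSemiring R]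

theorem eval_rowFormProd (A : Matrix ι ι R) (x : ι → R) :
    (rowFormProd A).eval x = ∏ i, (A *ᵥ x) i := by
  simp [rowFormProd, mulVec, dotProduct]

theorem isHomogeneous_rowFormProd (A : Matrix ι ι R) :
    (rowFormProd A).IsHomogeneous (Fintype.card ι) := by
  have h := IsHomogeneous.prod Finset.univ (fun i ↦ ∑ j, C (A i j) * X j) (fun _ ↦ 1)
    fun i _ ↦ IsHomogeneous.sum _ _ _ fun j _ ↦ isHomogeneous_C_mul_X (A i j) j
  simpa [rowFormProd] using h

theorem coeff_rowFormProd [DecidableEq ι] (A : Matrix ι ι R) :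
    (rowFormProd A).coeff (Finsupp.equivFunOnFinite.symm fun _ ↦ 1) = A.permanent := by
  have hmonomial : ∀ f : ι → ι, ∏ i, C (A i (f i)) * X (f i) =
      monomial (∑ i, Finsupp.single (f i) 1) (∏ i, A i (f i)) := fun f ↦ by
    simp_rw [C_mul_X_eq_monomial, monomial_sum_prod]
  rw [← permanent_transpose, permanent, rowFormProd]
  simp_rw [Finset.prod_univ_sum, coeff_sum, hmonomial, coeff_monomial, Fintype.piFinset_univ]
  refine (Fintype.sum_of_injective (fun σ : Equiv.Perm ι ↦ (σ : ι → ι))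
    DFunLike.coe_injective _ _ (fun f hf ↦ if_neg fun hmon ↦ hf ?_) fun σ ↦ ?_).symm
  · have hsurj : f.Surjective := fun k ↦ by
      by_contra! hk
      simpa [hk] using DFunLike.congr_fun hmon k
    exact ⟨Equiv.ofBijective f (Finite.surjective_iff_bijective.1 hsurj), rfl⟩
  · refine (if_pos (Finsupp.ext fun k ↦ ?_)).symm
    simp only [Finsupp.coe_finsetSum, Finset.sum_apply, Finsupp.single_apply]
    rw [Equiv.sum_comp σ fun i ↦ if i = k then 1 else 0]
    simp

theorem isHalfPlaneStable_rowFormProd {A : Matrix ι ι ℝ} (hA : ∀ i j, 0 < A i j) :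
    IsHalfPlaneStable (rowFormProd (A.map ((↑) : ℝ → ℂ))) := by
  rintro z hz ⟨k, hk⟩
  rw [eval_rowFormProd]
  refine Finset.prod_ne_zero_iff.2 fun i _ h0 ↦ ?_
  have hre : 0 < ((A.map ((↑) : ℝ → ℂ) *ᵥ z) i).re := by
    simp only [mulVec, dotProduct, map_apply, Complex.re_sum, Complex.re_ofReal_mul]
    exact Finset.sum_pos' (fun j _ ↦ mul_nonneg (hA i j).le (hz j))
      ⟨k, Finset.mem_univ k, mul_pos (hA i k) hk⟩
  exact hre.ne' (by rw [h0, Complex.zero_re])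

end

variable {n : ℕ}

theorem mul_exp_neg_le_permanent_of_pos {A : Matrix (Fin n) (Fin n) ℝ} (hA : ∀ i j, 0 < A i j)
    {c : ℝ} (hc0 : 0 ≤ c) (hc : ∀ x : Fin n → ℝ, (∀ i, 0 < x i) → c * ∏ i, x i ≤ ∏ i, (A *ᵥ x) i) :
    c * exp (-n) ≤ A.permanent := by
  have hperm : (A.map ((↑) : ℝ → ℂ)).permanent = (A.permanent : ℂ) := by simp [permanent]
  have hhom : (rowFormProd (A.map ((↑) : ℝ → ℂ))).IsHomogeneous n := by
    simpa using isHomogeneous_rowFormProd (A.map ((↑) : ℝ → ℂ))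
  have h := (isHalfPlaneStable_rowFormProd hA).mul_exp_neg_le_norm_coeff hhom hc0 fun x hx ↦ by
    have heval : (rowFormProd (A.map ((↑) : ℝ → ℂ))).eval (fun i ↦ (x i : ℂ)) =
        ((∏ i, (A *ᵥ x) i : ℝ) : ℂ) := by
      simp [eval_rowFormProd, mulVec, dotProduct]
    rw [heval, Complex.norm_real]
    exact (hc x hx).trans (le_norm_self _)
  rwa [coeff_rowFormProd, hperm, Complex.norm_real, norm_of_nonneg] at h
  exact Finset.sum_nonneg fun σ _ ↦ Finset.prod_nonneg fun i _ ↦ (hA _ _).le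

theorem mul_exp_neg_le_permanent {A : Matrix (Fin n) (Fin n) ℝ} (hA : ∀ i j, 0 ≤ A i j)
    {c : ℝ} (hc0 : 0 ≤ c) (hc : ∀ x : Fin n → ℝ, (∀ i, 0 < x i) → c * ∏ i, x i ≤ ∏ i, (A *ᵥ x) i) :
    c * exp (-n) ≤ A.permanent := by
  have hcont : Continuous fun ε : ℝ ↦ (A.map (· + ε)).permanent := by
    simp only [permanent, map_apply]; fun_prop
  have hpos : ∀ ε > 0, c * exp (-n) ≤ (A.map (· + ε)).permanent := fun ε hε ↦
    mul_exp_neg_le_permanent_of_pos (fun i j ↦ add_pos_of_nonneg_of_pos (hA i j) hε) hc0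
      fun x hx ↦ (hc x hx).trans <| by
        simp only [mulVec, dotProduct]
        gcongr with i _ j
        · exact fun i _ ↦ Finset.sum_nonneg fun j _ ↦ mul_nonneg (hA i j) (hx j).le
        · exact (hx j).le
        · linarith
  have hlim := ge_of_tendsto (hcont.continuousWithinAt.tendsto (x := 0) (s := Set.Ioi 0))
    (by filter_upwards [self_mem_nhdsWithin] with ε hε using hpos ε hε)
  simpa using hlim

theorem exp_sum_negMulLog_mul_prod_le {ι : Type*} [Fintype ι] [DecidableEq ι]
    {D A : Matrix ι ι ℝ} (hD : D ∈ doublyStochastic ℝ ι) (hA : ∀ i j, 0 ≤ A i j)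
    (hDA : ∀ i j, D i j ≠ 0 → 1 ≤ A i j) {x : ι → ℝ} (hx : ∀ i, 0 < x i) :
    exp (∑ i, ∑ j, negMulLog (D i j)) * ∏ j, x j ≤ ∏ i, (A *ᵥ x) i := by
  have hD0 : ∀ i j, 0 ≤ D i j := fun i j ↦ nonneg_of_mem_doublyStochastic hD
  have hrow : ∀ i, ∏ j, (x j / D i j) ^ D i j ≤ (A *ᵥ x) i := fun i ↦ by
    refine (geom_mean_le_arith_mean_weighted Finset.univ (D i) (fun j ↦ x j / D i j)
      (fun j _ ↦ hD0 i j) (sum_row_of_mem_doublyStochastic hD i)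
      fun j _ ↦ div_nonneg (hx j).le (hD0 i j)).trans (Finset.sum_le_sum fun j _ ↦ ?_)
    by_cases h : D i j = 0
    · simpa [h] using mul_nonneg (hA i j) (hx j).le
    · rw [mul_div_cancel₀ _ h]
      exact le_mul_of_one_le_left (hx j).le (hDA i j h)
  have hfactor : ∀ i j, (x j / D i j) ^ D i j = exp (negMulLog (D i j)) * x j ^ D i j := by
    intro i j
    obtain h | h := (hD0 i j).eq_or_lt
    · simp [← h]
    · rw [div_rpow (hx j).le h.le, rpow_def_of_pos h, negMulLog, div_eq_mul_inv, ← exp_neg,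
        mul_comm]
      ring_nf
  have hcols : ∏ i, ∏ j, x j ^ D i j = ∏ j, x j := by
    rw [Finset.prod_comm]
    exact Finset.prod_congr rfl fun j _ ↦ by
      rw [← rpow_sum_of_pos (hx j), sum_col_of_mem_doublyStochastic hD j, rpow_one]
  calc exp (∑ i, ∑ j, negMulLog (D i j)) * ∏ j, x j
      = ∏ i, ∏ j, (x j / D i j) ^ D i j := by
        simp_rw [hfactor, Finset.prod_mul_distrib, hcols, exp_sum]
    _ ≤ ∏ i, (A *ᵥ x) i := Finset.prod_le_prod (fun i _ ↦ Finset.prod_nonneg fun j _ ↦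
        rpow_nonneg (div_nonneg (hx j).le (hD0 i j)) _) fun i _ ↦ hrow i

theorem permanent_ite {ι R : Type*} [Fintype ι] [DecidableEq ι] [CommSemiring R]
    (r : ι → ι → Prop) [∀ i j, Decidable (r i j)] :
    permanent (of fun i j ↦ if r i j then (1 : R) else 0) =
      Nat.card {σ : Equiv.Perm ι // ∀ i, r i (σ i)} := by
  rw [← permanent_transpose]
  simp [permanent, Finset.prod_ite_zero, Nat.card_eq_fintype_card, Fintype.card_subtype]

theorem exp_sum_negMulLog_sub_le_card_perm {r : Fin n → Fin n → Prop}
    {D : Matrix (Fin n) (Fin n) ℝ} (hD : D ∈ doublyStochastic ℝ (Fin n))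
    (hr : ∀ i j, D i j ≠ 0 → r i j) :
    exp (∑ i, ∑ j, negMulLog (D i j) - n) ≤
      (Nat.card {σ : Equiv.Perm (Fin n) // ∀ i, r i (σ i)} : ℝ) := by
  classical
  have hA : ∀ i j, 0 ≤ of (fun i j ↦ if r i j then (1 : ℝ) else 0) i j := fun i j ↦ by
    rw [of_apply]; positivity
  rw [← permanent_ite, sub_eq_add_neg, exp_add]
  exact mul_exp_neg_le_permanent hA (exp_pos _).le fun x hx ↦
    exp_sum_negMulLog_mul_prod_le hD hA (fun i j h ↦ by simp [hr i j h]) hx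

end Permanent

section CoprimeKernel

open Finset

/-- The odd primes up to `n`. -/
def oddPrimes (n : ℕ) : Finset ℕ := {p ∈ Icc 3 n | p.Prime}

theorem mem_oddPrimes {n p : ℕ} : p ∈ oddPrimes n ↔ (3 ≤ p ∧ p ≤ n) ∧ p.Prime := by
  simp [oddPrimes]

theorem three_le_of_mem_oddPrimes {n p : ℕ} (hp : p ∈ oddPrimes n) : (3 : ℝ) ≤ p := by
  exact_mod_cast (mem_oddPrimes.1 hp).1.1

theorem odd_of_mem_oddPrimes {n p : ℕ} (hp : p ∈ oddPrimes n) : Odd p := by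
  obtain ⟨⟨hp3, -⟩, hprime⟩ := mem_oddPrimes.1 hp
  exact hprime.odd_of_ne_two (by lia)

theorem coprime_iff_forall_mem_oddPrimes {n i j : ℕ} (hi : i ≠ 0) (hin : i ≤ n)
    (hodd : Odd i ∨ Odd j) : i.Coprime j ↔ ∀ p ∈ oddPrimes n, ¬(p ∣ i ∧ p ∣ j) := by
  refine ⟨fun h p hp hdvd ↦
    Nat.not_coprime_of_dvd_of_dvd (mem_oddPrimes.1 hp).2.one_lt hdvd.1 hdvd.2 h, fun h ↦
    Nat.coprime_of_dvd fun p hp hpi hpj ↦ h p (mem_oddPrimes.2 ⟨⟨?_, ?_⟩, hp⟩) ⟨hpi, hpj⟩⟩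
  · have hp2 : p ≠ 2 := by
      rintro rfl
      exact hodd.elim (Nat.not_odd_iff_even.2 (even_iff_two_dvd.2 hpi))
        (Nat.not_odd_iff_even.2 (even_iff_two_dvd.2 hpj))
    exact lt_of_le_of_ne hp.two_le hp2.symm
  · exact (Nat.le_of_dvd (Nat.pos_of_ne_zero hi) hpi).trans hin

theorem prod_oddPrimes_dvd_iff {n j : ℕ} {U : Finset ℕ} (hU : U ⊆ oddPrimes n) :
    ∏ p ∈ U, p ∣ j ↔ ∀ p ∈ U, p ∣ j :=
  ⟨fun h _ hp ↦ (dvd_prod_of_mem _ hp).trans h,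
    prod_primes_dvd _ fun _ hp ↦ (mem_oddPrimes.1 (hU hp)).2.prime⟩

theorem prod_range_sq_le (K : ℕ) :
    ∏ k ∈ range K, ((2 * (k : ℝ) + 2) / (2 * k + 1)) ^ 2 ≤ 4 * (K : ℝ) + 1 := by
  induction K with
  | zero => simp
  | succ K ih =>
    rw [prod_range_succ]
    calc _ ≤ (4 * K + 1 : ℝ) * ((2 * K + 2) / (2 * K + 1)) ^ 2 := by gcongr
      _ ≤ 4 * ((K + 1 : ℕ) : ℝ) + 1 := by
        rw [div_pow, mul_div_assoc', div_le_iff₀ (by positivity)]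
        push_cast
        nlinarith

/-- An upper bound of order `√n` suffices in place of Mertens' theorem: odd primes are compared with
all odd numbers. -/
theorem prod_oddPrimes_le_two_mul_sqrt {n : ℕ} (hn : n ≠ 0) :
    ∏ p ∈ oddPrimes n, ((p : ℝ) - 1) / (p - 2) ≤ 2 * √n := by
  let odds : Finset ℕ := (range ((n - 1) / 2)).image fun k ↦ 2 * k + 3
  have hsub : oddPrimes n ⊆ odds := fun p hp ↦ by
    obtain ⟨k, rfl⟩ := odd_of_mem_oddPrimes hp
    obtain ⟨⟨hk3, hkn⟩, -⟩ := mem_oddPrimes.1 hp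
    exact mem_image.2 ⟨k - 1, by simp; lia, by lia⟩
  have hone : ∀ p ∈ odds, 1 ≤ ((p : ℝ) - 1) / (p - 2) := fun p hp ↦ by
    obtain ⟨k, -, rfl⟩ := mem_image.1 hp
    push_cast
    rw [le_div_iff₀] <;> linarith
  have hcard : 4 * (((n - 1) / 2 : ℕ) : ℝ) + 1 ≤ 4 * n := by
    have : 4 * ((n - 1) / 2) + 1 ≤ 4 * n := by lia
    exact_mod_cast this
  calc ∏ p ∈ oddPrimes n, ((p : ℝ) - 1) / (p - 2)
      ≤ ∏ p ∈ odds, ((p : ℝ) - 1) / (p - 2) :=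
        prod_le_prod_of_subset_of_one_le hsub
          (fun p hp ↦ div_nonneg (by linarith [three_le_of_mem_oddPrimes hp])
            (by linarith [three_le_of_mem_oddPrimes hp])) fun p hp _ ↦ hone p hp
    _ = ∏ k ∈ range ((n - 1) / 2), (2 * (k : ℝ) + 2) / (2 * k + 1) := by
        rw [prod_image fun _ _ _ _ h ↦ by simpa using h]
        exact prod_congr rfl fun k _ ↦ by push_cast; ring_nf
    _ ≤ √(4 * n) := le_sqrt_of_sq_le (by
        rw [← prod_pow]
        exact (prod_range_sq_le _).trans hcard)
    _ = 2 * √n := by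
        rw [sqrt_mul (by norm_num), show (4 : ℝ) = 2 ^ 2 by norm_num, sqrt_sq (by norm_num)]

/-- The factor `∏_{p ∣ m} (p - 1) / (p - 2)` over odd primes, which compensates `m` for having
fewer coprime partners; only primes up to the cutoff `n ≥ m` are inspected. -/
noncomputable def coprimeWeight (n m : ℕ) : ℝ :=
  ∏ p ∈ oddPrimes n with p ∣ m, ((p : ℝ) - 1) / (p - 2)

/-- The truncation `∏_{2 < p ≤ n} p (p - 2) / (p - 1)²` of the twin prime constant, which normalises
`coprimeKernel`. -/
noncomputable def coprimeDensity (n : ℕ) : ℝ :=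
  ∏ p ∈ oddPrimes n, (p : ℝ) * (p - 2) / (p - 1) ^ 2

/-- The kernel supported on coprime pairs whose row sums over either parity class are nearly `1`
for rows of the other parity. -/
noncomputable def coprimeKernel (n i j : ℕ) : ℝ :=
  if i.Coprime j then 2 * coprimeDensity n * coprimeWeight n i * coprimeWeight n j / n else 0

theorem one_le_coprimeWeight (n m : ℕ) : 1 ≤ coprimeWeight n m := by
  refine one_le_prod fun p hp ↦ ?_
  have := three_le_of_mem_oddPrimes (mem_filter.1 hp).1
  rw [le_div_iff₀] <;> linarith

theorem coprimeWeight_le (n m : ℕ) : coprimeWeight n m ≤ 2 ^ #{p ∈ oddPrimes n | p ∣ m} := by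
  rw [coprimeWeight, ← prod_const]
  refine prod_le_prod (fun p hp ↦ ?_) fun p hp ↦ ?_
  all_goals have := three_le_of_mem_oddPrimes (mem_filter.1 hp).1
  · exact div_nonneg (by linarith) (by linarith)
  · rw [div_le_iff₀] <;> linarith

theorem coprimeDensity_le_one (n : ℕ) : coprimeDensity n ≤ 1 := by
  refine prod_le_one (fun p hp ↦ ?_) fun p hp ↦ ?_
  all_goals have := three_le_of_mem_oddPrimes hp
  · exact div_nonneg (mul_nonneg (by linarith) (by linarith)) (sq_nonneg _)
  · rw [div_le_one (by nlinarith)]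
    nlinarith

theorem half_le_coprimeDensity (n : ℕ) : 1 / 2 ≤ coprimeDensity n := by
  have hfactor : ∀ m ∈ Icc 3 n, 0 ≤ (m : ℝ) * (m - 2) / (m - 1) ^ 2 ∧
      (m : ℝ) * (m - 2) / (m - 1) ^ 2 ≤ 1 := fun m hm ↦ by
    have hm3 : (3 : ℝ) ≤ m := by exact_mod_cast (mem_Icc.1 hm).1
    exact ⟨div_nonneg (mul_nonneg (by linarith) (by linarith)) (sq_nonneg _),
      (div_le_one (by nlinarith)).2 (by nlinarith)⟩
  have htelescope : ∀ k : ℕ, ∏ m ∈ Icc 3 (k + 2), (m : ℝ) * (m - 2) / (m - 1) ^ 2 =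
      ((k : ℝ) + 2) / (2 * (k + 1)) := fun k ↦ by
    induction k with
    | zero => norm_num
    | succ k ih =>
      rw [show k + 1 + 2 = k + 2 + 1 by ring, prod_Icc_succ_top (by lia), ih]
      push_cast
      rw [show (k : ℝ) + 2 + 1 - 2 = k + 1 by ring, show (k : ℝ) + 2 + 1 - 1 = k + 2 by ring]
      field_simp
      ring
  refine le_trans ?_ (prod_le_prod_of_subset_of_le_one (filter_subset _ _)
    (fun m hm ↦ (hfactor m hm).1) fun m hm _ ↦ (hfactor m hm).2)
  obtain hn | ⟨k, rfl⟩ := (lt_or_ge n 2).imp_right Nat.exists_eq_add_of_le'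
  · rw [Icc_eq_empty (by lia), prod_empty]; norm_num
  · rw [htelescope, div_le_div_iff₀ (by norm_num) (by positivity)]
    linarith

theorem coprimeDensity_pos (n : ℕ) : 0 < coprimeDensity n :=
  (half_le_coprimeDensity n).trans_lt' (by norm_num)

theorem coprimeWeight_pos (n m : ℕ) : 0 < coprimeWeight n m :=
  zero_lt_one.trans_le (one_le_coprimeWeight n m)

theorem coprimeKernel_comm (n i j : ℕ) : coprimeKernel n i j = coprimeKernel n j i := by
  simp only [coprimeKernel, Nat.coprime_comm (n := i), mul_right_comm]

theorem coprimeKernel_nonneg (n i j : ℕ) : 0 ≤ coprimeKernel n i j := by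
  have hd := coprimeDensity_pos n
  have hi := coprimeWeight_pos n i
  have hj := coprimeWeight_pos n j
  unfold coprimeKernel
  split_ifs <;> positivity

theorem coprimeKernel_le {n i j : ℕ} {G : ℝ} (hi : coprimeWeight n i ≤ G)
    (hj : coprimeWeight n j ≤ G) : coprimeKernel n i j ≤ 2 * G ^ 2 / n := by
  have := coprimeWeight_pos n
  have hG : 0 ≤ G := (this i).le.trans hi
  unfold coprimeKernel
  split_ifs
  · calc 2 * coprimeDensity n * coprimeWeight n i * coprimeWeight n j / n
        ≤ 2 * 1 * G * G / n := by gcongr; exacts [(this j).le, (this i).le, coprimeDensity_le_one n]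
      _ = 2 * G ^ 2 / n := by ring
  · positivity

theorem inv_le_coprimeKernel {n i j : ℕ} (h : i.Coprime j) : 1 / (n : ℝ) ≤ coprimeKernel n i j := by
  have hd := half_le_coprimeDensity n
  have hww := one_le_mul_of_one_le_of_one_le (one_le_coprimeWeight n i) (one_le_coprimeWeight n j)
  rw [coprimeKernel, if_pos h]
  gcongr
  rw [mul_assoc]
  exact one_le_mul_of_one_le_of_one_le (by linarith) hww

theorem coprime_of_coprimeKernel_ne_zero {n i j : ℕ} (h : coprimeKernel n i j ≠ 0) :
    i.Coprime j := by
  by_contra hij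
  exact h (if_neg hij)

/-- The coefficient at `p` when the function `j ↦ if i.Coprime j then coprimeWeight n j else 0` is
expanded as a product over `p` of `1 + localFactor i p * (if p ∣ j then 1 else 0)`. -/
noncomputable def localFactor (i p : ℕ) : ℝ := if p ∣ i then -1 else 1 / ((p : ℝ) - 2)

theorem ite_coprime_coprimeWeight {n i j : ℕ} (hi : i ≠ 0) (hin : i ≤ n)
    (hodd : Odd i ∨ Odd j) :
    (if i.Coprime j then coprimeWeight n j else 0) =
      ∏ p ∈ oddPrimes n, (1 + localFactor i p * if p ∣ j then 1 else 0) := by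
  have hcoprime := coprime_iff_forall_mem_oddPrimes hi hin hodd
  split_ifs with h
  · rw [coprimeWeight, prod_filter]
    refine prod_congr rfl fun p hp ↦ ?_
    split_ifs with hpj
    · rw [localFactor, if_neg fun hpi ↦ hcoprime.1 h p hp ⟨hpi, hpj⟩]
      have : (p : ℝ) - 2 ≠ 0 := by linarith [three_le_of_mem_oddPrimes hp]
      field_simp
      ring
    · rw [mul_zero, add_zero]
  · obtain ⟨p, hp, hpi, hpj⟩ : ∃ p ∈ oddPrimes n, p ∣ i ∧ p ∣ j := by simpa [hcoprime] using h
    exact (prod_eq_zero hp (by simp [localFactor, hpi, hpj])).symm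

theorem sum_ite_coprime_coprimeWeight {n i : ℕ} (hi : i ≠ 0) (hin : i ≤ n) {J : Finset ℕ}
    (hodd : ∀ j ∈ J, Odd i ∨ Odd j) :
    ∑ j ∈ J, (if i.Coprime j then coprimeWeight n j else 0) =
      ∑ U ∈ (oddPrimes n).powerset, (∏ p ∈ U, localFactor i p) * #{j ∈ J | ∏ p ∈ U, p ∣ j} := by
  calc _ = ∑ j ∈ J, ∑ U ∈ (oddPrimes n).powerset, (∏ p ∈ U, localFactor i p) *
        if ∏ p ∈ U, p ∣ j then 1 else 0 := by
        refine sum_congr rfl fun j hj ↦ ?_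
        rw [ite_coprime_coprimeWeight hi hin (hodd j hj), prod_one_add]
        refine sum_congr rfl fun U hU ↦ ?_
        rw [prod_mul_distrib, prod_ite_zero, prod_const_one]
        simp_rw [prod_oddPrimes_dvd_iff (mem_powerset.1 hU)]
    _ = _ := by
        rw [sum_comm]
        refine sum_congr rfl fun U _ ↦ ?_
        rw [← mul_sum, natCast_card_filter]

theorem prod_one_add_localFactor_div (n i : ℕ) :
    ∏ p ∈ oddPrimes n, (1 + localFactor i p / p) = 1 / (coprimeDensity n * coprimeWeight n i) := by
  rw [coprimeDensity, coprimeWeight, prod_filter, ← prod_mul_distrib, one_div, ← prod_inv_distrib]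
  refine prod_congr rfl fun p hp ↦ ?_
  have hp3 := three_le_of_mem_oddPrimes hp
  have : (p : ℝ) ≠ 0 := by linarith
  have : (p : ℝ) - 1 ≠ 0 := by linarith
  have : (p : ℝ) - 2 ≠ 0 := by linarith
  unfold localFactor
  split_ifs <;> field_simp <;> ring

theorem prod_one_add_abs_localFactor_le {n : ℕ} (hn : n ≠ 0) (i : ℕ) :
    ∏ p ∈ oddPrimes n, (1 + |localFactor i p|) ≤ 2 ^ #{p ∈ oddPrimes n | p ∣ i} * (2 * √n) := by
  have hfactor : ∀ p ∈ oddPrimes n, 1 + |localFactor i p| ≤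
      (if p ∣ i then 2 else 1) * (((p : ℝ) - 1) / (p - 2)) := fun p hp ↦ by
    have hp2 : (0 : ℝ) < p - 2 := by linarith [three_le_of_mem_oddPrimes hp]
    have hone : 1 ≤ ((p : ℝ) - 1) / (p - 2) := by rw [le_div_iff₀ hp2]; linarith
    unfold localFactor
    split_ifs
    · rw [abs_neg, abs_one]
      linarith
    · rw [abs_of_pos (by positivity)]
      field_simp
      linarith
  refine (prod_le_prod (fun p _ ↦ by positivity) hfactor).trans ?_
  rw [prod_mul_distrib, ← prod_filter, prod_const]
  gcongr
  exact prod_oddPrimes_le_two_mul_sqrt hn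

section RowSum

variable {n i : ℕ} {J : Finset ℕ} {G : ℝ}

theorem abs_sum_ite_coprime_coprimeWeight_sub_le (hi : i ≠ 0) (hin : i ≤ n)
    (hodd : ∀ j ∈ J, Odd i ∨ Odd j)
    (hJ : ∀ d : ℕ, Odd d → |(#{j ∈ J | d ∣ j} : ℝ) - n / (2 * d)| ≤ 2)
    (hG : 2 ^ #{p ∈ oddPrimes n | p ∣ i} ≤ G) :
    |∑ j ∈ J, (if i.Coprime j then coprimeWeight n j else 0) -
      n / (2 * coprimeDensity n * coprimeWeight n i)| ≤ 4 * G * √n := by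
  have hmain : ∑ U ∈ (oddPrimes n).powerset,
      (∏ p ∈ U, localFactor i p) * ((n : ℝ) / (2 * (∏ p ∈ U, p : ℕ))) =
        n / (2 * coprimeDensity n * coprimeWeight n i) := by
    rw [mul_assoc, ← div_div, div_eq_mul_one_div (n / 2 : ℝ) (coprimeDensity n * _),
      ← prod_one_add_localFactor_div, prod_one_add, mul_sum]
    refine sum_congr rfl fun U _ ↦ ?_
    rw [prod_div_distrib]
    push_cast
    ring
  rw [sum_ite_coprime_coprimeWeight hi hin hodd, ← hmain, ← sum_sub_distrib]
  calc _ ≤ ∑ U ∈ (oddPrimes n).powerset, (∏ p ∈ U, |localFactor i p|) * 2 := by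
        refine (abs_sum_le_sum_abs _ _).trans (sum_le_sum fun U hU ↦ ?_)
        rw [← mul_sub, abs_mul, abs_prod]
        refine mul_le_mul_of_nonneg_left (hJ _ ?_) (prod_nonneg fun _ _ ↦ abs_nonneg _)
        exact prod_induction _ Odd (fun _ _ ↦ Odd.mul) odd_one fun p hp ↦
          odd_of_mem_oddPrimes (mem_powerset.1 hU hp)
    _ = 2 * ∏ p ∈ oddPrimes n, (1 + |localFactor i p|) := by
        rw [← sum_mul, prod_one_add, mul_comm]
    _ ≤ 2 * (G * (2 * √n)) := by
        gcongr
        exact (prod_one_add_abs_localFactor_le (by lia) i).trans (by gcongr)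
    _ = 4 * G * √n := by ring

theorem abs_sum_coprimeKernel_sub_one_le (hi : i ≠ 0) (hin : i ≤ n)
    (hodd : ∀ j ∈ J, Odd i ∨ Odd j)
    (hJ : ∀ d : ℕ, Odd d → |(#{j ∈ J | d ∣ j} : ℝ) - n / (2 * d)| ≤ 2)
    (hG : 2 ^ #{p ∈ oddPrimes n | p ∣ i} ≤ G) :
    |∑ j ∈ J, coprimeKernel n i j - 1| ≤ 8 * G ^ 2 / √n := by
  have hn : (0 : ℝ) < n := Nat.cast_pos.2 (by lia)
  have hd := coprimeDensity_pos n
  have hw := coprimeWeight_pos n i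
  have hwG : coprimeWeight n i ≤ G := (coprimeWeight_le n i).trans hG
  have hG0 : 0 ≤ G := hw.le.trans hwG
  have hsum : ∑ j ∈ J, coprimeKernel n i j = 2 * coprimeDensity n * coprimeWeight n i / n *
      ∑ j ∈ J, (if i.Coprime j then coprimeWeight n j else 0) := by
    rw [mul_sum]
    refine sum_congr rfl fun j _ ↦ ?_
    rw [coprimeKernel]
    split_ifs <;> ring
  have hone : (1 : ℝ) = 2 * coprimeDensity n * coprimeWeight n i / n *
      (n / (2 * coprimeDensity n * coprimeWeight n i)) := by
    field_simp
  rw [hsum, hone, ← mul_sub, abs_mul, abs_of_nonneg (by positivity)]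
  calc _ ≤ 2 * 1 * G / n * (4 * G * √n) := by
        gcongr
        exacts [coprimeDensity_le_one n, abs_sum_ite_coprime_coprimeWeight_sub_le hi hin hodd hJ hG]
    _ = 8 * G ^ 2 / √n := by
        rw [← div_sqrt (x := (n : ℝ))]
        field_simp
        rw [sq_sqrt hn.le]
        ring

end RowSum

end CoprimeKernel

section ParityClass

open Finset

/-- The even numbers in `{1, …, n}`. -/
def evenClass (n : ℕ) : Finset ℕ := {j ∈ Ioc (n % 2) n | Even j}

/-- The odd numbers in `{1, …, n}`, except that `1` is left out for odd `n` so as to have as many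
odd as even numbers. -/
def oddClass (n : ℕ) : Finset ℕ := {j ∈ Ioc (n % 2) n | Odd j}

theorem disjoint_oddClass_evenClass (n : ℕ) : Disjoint (oddClass n) (evenClass n) :=
  disjoint_filter.2 fun _ _ ↦ Nat.not_even_iff_odd.2

theorem card_evenClass (n : ℕ) : #(evenClass n) = n / 2 := by
  have : evenClass n = (Ioc 0 (n / 2)).image (2 * ·) := by
    ext j
    simp only [evenClass, mem_filter, mem_Ioc, mem_image]
    exact ⟨fun h ↦ ⟨j / 2, by grind⟩, by grind⟩
  rw [this, card_image_of_injective _ (mul_right_injective₀ two_ne_zero), Nat.card_Ioc,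
    Nat.sub_zero]

theorem card_oddClass (n : ℕ) : #(oddClass n) = n / 2 := by
  have : oddClass n = (range (n / 2)).image fun k ↦ 2 * k + 1 + 2 * (n % 2) := by
    ext j
    simp only [oddClass, mem_filter, mem_Ioc, mem_image, mem_range]
    exact ⟨fun h ↦ ⟨(j - 1) / 2 - n % 2, by grind⟩, by grind⟩
  rw [this, card_image_of_injective _ fun _ _ h ↦ by simpa using h, card_range]

theorem abs_card_filter_modEq_sub_le {a b r : ℕ} (hab : a ≤ b) (hr : 0 < r) (v : ℕ) :
    |(#{j ∈ Ioc a b | j ≡ v [MOD r]} : ℝ) - (b - a) / r| ≤ 1 := by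
  have hcard := Nat.Ioc_filter_modEq_card a b hr v
  set k := #{j ∈ Ioc a b | j ≡ v [MOD r]}
  have hr' : (0 : ℚ) < r := by exact_mod_cast hr
  have hmono : ⌊((a : ℚ) - v) / r⌋ ≤ ⌊((b : ℚ) - v) / r⌋ := by gcongr
  rw [max_eq_left (by lia)] at hcard
  have hk : (k : ℚ) = ⌊((b : ℚ) - v) / r⌋ - ⌊((a : ℚ) - v) / r⌋ := by exact_mod_cast hcard
  have hsplit : ((b : ℚ) - a) / r = (b - v) / r - (a - v) / r := by ring
  have hq : |(k : ℚ) - (b - a) / r| ≤ 1 := by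
    rw [hk, hsplit, abs_le]
    have := Int.floor_le (((b : ℚ) - v) / r)
    have := Int.floor_le (((a : ℚ) - v) / r)
    have := Int.lt_floor_add_one (((b : ℚ) - v) / r)
    have := Int.lt_floor_add_one (((a : ℚ) - v) / r)
    constructor <;> linarith
  have hr := (Rat.cast_le (K := ℝ)).2 hq
  push_cast at hr
  exact hr

theorem abs_card_filter_modEq_two_mul_sub_le {n d : ℕ} (hd : 0 < d) (v : ℕ) :
    |(#{j ∈ Ioc (n % 2) n | j ≡ v [MOD 2 * d]} : ℝ) - n / (2 * d)| ≤ 2 := by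
  have h := abs_card_filter_modEq_sub_le (Nat.mod_le n 2) (show 0 < 2 * d by lia) v
  have hmod : ((n % 2 : ℕ) : ℝ) / (2 * d) ≤ 1 := by
    rw [div_le_one (by positivity)]
    exact_mod_cast show n % 2 ≤ 2 * d by lia
  have hmod0 : 0 ≤ ((n % 2 : ℕ) : ℝ) / (2 * d) := by positivity
  push_cast at h
  rw [abs_le, sub_div] at h
  rw [abs_le]
  constructor <;> linarith

theorem modEq_zero_two_mul_iff {d j : ℕ} (hd : Odd d) :
    j ≡ 0 [MOD 2 * d] ↔ Even j ∧ d ∣ j := by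
  rw [← Nat.modEq_and_modEq_iff_modEq_mul (Nat.coprime_two_left.2 hd), Nat.modEq_zero_iff_dvd,
    Nat.modEq_zero_iff_dvd, even_iff_two_dvd]

theorem modEq_two_mul_iff {d j : ℕ} (hd : Odd d) : j ≡ d [MOD 2 * d] ↔ Odd j ∧ d ∣ j := by
  rw [← Nat.modEq_and_modEq_iff_modEq_mul (Nat.coprime_two_left.2 hd)]
  have h1 : j ≡ d [MOD 2] ↔ Odd j := by
    rw [Nat.odd_iff, Nat.ModEq, Nat.odd_iff.1 hd]
  have h2 : j ≡ d [MOD d] ↔ d ∣ j := by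
    rw [Nat.ModEq, Nat.mod_self, Nat.dvd_iff_mod_eq_zero]
  rw [h1, h2]

theorem abs_card_filter_dvd_evenClass_sub_le (n : ℕ) {d : ℕ} (hd : Odd d) :
    |(#{j ∈ evenClass n | d ∣ j} : ℝ) - n / (2 * d)| ≤ 2 := by
  simpa only [evenClass, filter_filter, modEq_zero_two_mul_iff hd] using
    abs_card_filter_modEq_two_mul_sub_le (n := n) hd.pos 0

theorem abs_card_filter_dvd_oddClass_sub_le (n : ℕ) {d : ℕ} (hd : Odd d) :
    |(#{j ∈ oddClass n | d ∣ j} : ℝ) - n / (2 * d)| ≤ 2 := by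
  simpa only [oddClass, filter_filter, modEq_two_mul_iff hd] using
    abs_card_filter_modEq_two_mul_sub_le (n := n) hd.pos d

end ParityClass

section Completion

open Finset

variable {ι κ : Type*} [DecidableEq ι] {R T Q : Finset ι} {E V : Finset κ}

/-- A nonnegative matrix supported on `A × C` whose rows in `A` and columns in `C` sum to `1`. -/
structure IsBistochasticOn (A : Finset ι) (C : Finset κ) (W : ι → κ → ℝ) : Prop where
  nonneg : ∀ i j, 0 ≤ W i j
  sum_row : ∀ i ∈ A, ∑ j ∈ C, W i j = 1
  sum_col : ∀ j ∈ C, ∑ i ∈ A, W i j = 1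
  mem_of_ne_zero : ∀ i j, W i j ≠ 0 → i ∈ A ∧ j ∈ C

section Dilation

variable [DecidableEq κ]

/-- The dilation of a doubly substochastic matrix `K` on `R × E`: the defects of its row sums are
spread evenly over the new columns `V`, those of its column sums over the new rows `Q`. -/
noncomputable def bistochasticDilation (R Q : Finset ι) (E V : Finset κ) (K : ι → κ → ℝ)
    (i : ι) (j : κ) : ℝ :=
  if i ∈ R then
    if j ∈ E then K i j else if j ∈ V then (1 - ∑ k ∈ E, K i k) / #V else 0
  else if i ∈ Q ∧ j ∈ E then (1 - ∑ k ∈ R, K k j) / #Q else 0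

variable {K : ι → κ → ℝ}

theorem bistochasticDilation_apply_core {i : ι} {j : κ} (hi : i ∈ R) (hj : j ∈ E) :
    bistochasticDilation R Q E V K i j = K i j := by
  rw [bistochasticDilation, if_pos hi, if_pos hj]

theorem bistochasticDilation_apply_right (hEV : Disjoint E V) {i : ι} {j : κ} (hi : i ∈ R)
    (hj : j ∈ V) :
    bistochasticDilation R Q E V K i j = (1 - ∑ k ∈ E, K i k) / #V := by
  rw [bistochasticDilation, if_pos hi, if_neg (disjoint_right.1 hEV hj), if_pos hj]

theorem bistochasticDilation_apply_bottom (hRQ : Disjoint R Q) {i : ι} {j : κ} (hi : i ∈ Q)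
    (hj : j ∈ E) :
    bistochasticDilation R Q E V K i j = (1 - ∑ k ∈ R, K k j) / #Q := by
  rw [bistochasticDilation, if_neg (disjoint_right.1 hRQ hi), if_pos ⟨hi, hj⟩]

theorem bistochasticDilation_apply_corner (hRQ : Disjoint R Q) (hEV : Disjoint E V) {i : ι} {j : κ}
    (hi : i ∈ Q) (hj : j ∈ V) : bistochasticDilation R Q E V K i j = 0 := by
  rw [bistochasticDilation, if_neg (disjoint_right.1 hRQ hi),
    if_neg fun h ↦ disjoint_right.1 hEV hj h.2]

theorem cases_of_bistochasticDilation_ne_zero {i : ι} {j : κ}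
    (h : bistochasticDilation R Q E V K i j ≠ 0) :
    (i ∈ R ∧ j ∈ E ∧ K i j ≠ 0) ∨ (i ∈ R ∧ j ∈ V ∧ ∑ k ∈ E, K i k ≠ 1) ∨ (i ∈ Q ∧ j ∈ E) := by
  rw [bistochasticDilation] at h
  split_ifs at h with hR hE hV hQE
  · exact Or.inl ⟨hR, hE, h⟩
  · exact Or.inr (Or.inl ⟨hR, hV, fun h1 ↦ h (by rw [h1, sub_self, zero_div])⟩)
  · exact absurd rfl h
  · exact Or.inr (Or.inr hQE)
  · exact absurd rfl h

theorem sum_row_bistochasticDilation (hRQ : Disjoint R Q) (hEV : Disjoint E V) (hQ : Q.Nonempty)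
    (hQV : #Q = #V) (hRE : #R = #E) (hmass : ∑ i ∈ R, ∑ j ∈ E, K i j = #R - #Q) {i : ι}
    (hi : i ∈ R ∪ Q) : ∑ j ∈ E ∪ V, bistochasticDilation R Q E V K i j = 1 := by
  have hQ0 : (#Q : ℝ) ≠ 0 := by exact_mod_cast hQ.card_ne_zero
  rw [sum_union hEV]
  rcases mem_union.1 hi with hi | hi
  · rw [sum_congr rfl fun j hj ↦ bistochasticDilation_apply_core hi hj,
      sum_congr rfl fun j hj ↦ bistochasticDilation_apply_right hEV hi hj, sum_const,
      nsmul_eq_mul, ← hQV, mul_div_cancel₀ _ hQ0, add_sub_cancel]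
  · rw [sum_congr rfl fun j hj ↦ bistochasticDilation_apply_bottom hRQ hi hj,
      sum_congr rfl fun j hj ↦ bistochasticDilation_apply_corner hRQ hEV hi hj, sum_const_zero,
      ← sum_div, sum_sub_distrib, sum_comm, hmass, sum_const, nsmul_one, hRE, sub_sub_cancel,
      div_self hQ0, add_zero]

theorem sum_col_bistochasticDilation (hRQ : Disjoint R Q) (hEV : Disjoint E V) (hQ : Q.Nonempty)
    (hQV : #Q = #V) (hmass : ∑ i ∈ R, ∑ j ∈ E, K i j = #R - #Q) {j : κ}
    (hj : j ∈ E ∪ V) : ∑ i ∈ R ∪ Q, bistochasticDilation R Q E V K i j = 1 := by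
  have hQ0 : (#Q : ℝ) ≠ 0 := by exact_mod_cast hQ.card_ne_zero
  rw [sum_union hRQ]
  rcases mem_union.1 hj with hj | hj
  · rw [sum_congr rfl fun i hi ↦ bistochasticDilation_apply_core hi hj,
      sum_congr rfl fun i hi ↦ bistochasticDilation_apply_bottom hRQ hi hj, sum_const,
      nsmul_eq_mul, mul_div_cancel₀ _ hQ0, add_sub_cancel]
  · rw [sum_congr rfl fun i hi ↦ bistochasticDilation_apply_right hEV hi hj,
      sum_congr rfl fun i hi ↦ bistochasticDilation_apply_corner hRQ hEV hi hj, sum_const_zero,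
      ← sum_div, sum_sub_distrib, hmass, sum_const, nsmul_one, sub_sub_cancel, ← hQV,
      div_self hQ0, add_zero]

theorem isBistochasticOn_bistochasticDilation (hRQ : Disjoint R Q) (hEV : Disjoint E V)
    (hQ : Q.Nonempty) (hQV : #Q = #V) (hRE : #R = #E) (hK : ∀ i j, 0 ≤ K i j)
    (hrow : ∀ i ∈ R, ∑ j ∈ E, K i j ≤ 1) (hcol : ∀ j ∈ E, ∑ i ∈ R, K i j ≤ 1)
    (hmass : ∑ i ∈ R, ∑ j ∈ E, K i j = #R - #Q) :
    IsBistochasticOn (R ∪ Q) (E ∪ V) (bistochasticDilation R Q E V K) where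
  nonneg i j := by
    rw [bistochasticDilation]
    split_ifs with hR hE hV hQE
    · exact hK i j
    · exact div_nonneg (sub_nonneg.2 (hrow i hR)) (Nat.cast_nonneg _)
    · exact le_rfl
    · exact div_nonneg (sub_nonneg.2 (hcol j hQE.2)) (Nat.cast_nonneg _)
    · exact le_rfl
  sum_row _ := sum_row_bistochasticDilation hRQ hEV hQ hQV hRE hmass
  sum_col _ := sum_col_bistochasticDilation hRQ hEV hQ hQV hmass
  mem_of_ne_zero i j h := by
    have := cases_of_bistochasticDilation_ne_zero h
    simp only [mem_union]
    tauto

end Dilation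

/-- The factor that brings the mass of `B` on `(R \ T) × E` to `#(R \ T) - #Q`. -/
noncomputable def coreScale (R T Q : Finset ι) (E : Finset κ) (B : ι → κ → ℝ) : ℝ :=
  (#(R \ T) - #Q) / ∑ i ∈ R \ T, ∑ j ∈ E, B i j

/-- The kernel `B` on `R × E`, with the rows in `T` normalised, so that their dilation vanishes on
`T × V`, and the other rows multiplied by a common factor that fixes the total mass. -/
noncomputable def rescaledCore (R T Q : Finset ι) (E : Finset κ) (B : ι → κ → ℝ)
    (i : ι) (j : κ) : ℝ :=
  if i ∈ T then B i j / ∑ k ∈ E, B i k else coreScale R T Q E B * B i j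

theorem rescaledCore_of_notMem {B : ι → κ → ℝ} {i : ι} {j : κ} (hi : i ∉ T) :
    rescaledCore R T Q E B i j = coreScale R T Q E B * B i j := if_neg hi

variable [DecidableEq κ]

/-- A kernel `B` with rows `R ∪ Q` and columns `E ∪ V` whose entries are at most `b` and whose
marginals are within `η` of `1`. Its entries are at least `ν` on `(R \ T) × V` and `Q × E`, which
leaves room for corrections there. -/
structure IsNearlyBistochastic (R T Q : Finset ι) (E V : Finset κ) (B : ι → κ → ℝ)
    (η b ν : ℝ) : Prop where
  subset : T ⊆ R
  disjoint_rows : Disjoint R Q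
  disjoint_cols : Disjoint E V
  nonempty : Q.Nonempty
  card_eq_card : #Q = #V
  card_core_eq : #R = #E
  card_le_card : #T ≤ #Q
  four_mul_card_le : 4 * #Q ≤ #R
  nonneg : ∀ i j, 0 ≤ B i j
  le_of_mem : ∀ i ∈ R, ∀ j ∈ E ∪ V, B i j ≤ b
  abs_sum_row_sub_one_le : ∀ i ∈ R, |∑ j ∈ E ∪ V, B i j - 1| ≤ η
  abs_sum_col_sub_one_le : ∀ j ∈ E ∪ V, |∑ i ∈ R ∪ Q, B i j - 1| ≤ η
  le_right : ∀ i ∈ R \ T, ∀ j ∈ V, ν ≤ B i j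
  le_bottom : ∀ i ∈ Q, ∀ j ∈ E, ν ≤ B i j

variable {B : ι → κ → ℝ} {η b ν : ℝ}

namespace IsNearlyBistochastic

theorem bound_nonneg (h : IsNearlyBistochastic R T Q E V B η b ν) : 0 ≤ b := by
  obtain ⟨i, hi⟩ := card_pos.1 (by linarith [h.nonempty.card_pos, h.four_mul_card_le] : 0 < #R)
  obtain ⟨j, hj⟩ := card_pos.1 (h.card_eq_card ▸ h.nonempty.card_pos)
  exact (h.nonneg i j).trans (h.le_of_mem i hi j (mem_union_right _ hj))

theorem tolerance_nonneg (h : IsNearlyBistochastic R T Q E V B η b ν) : 0 ≤ η := by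
  obtain ⟨j, hj⟩ := card_pos.1 (h.card_eq_card ▸ h.nonempty.card_pos)
  exact (abs_nonneg _).trans (h.abs_sum_col_sub_one_le j (mem_union_right _ hj))

theorem card_pos_real (h : IsNearlyBistochastic R T Q E V B η b ν) : (0 : ℝ) < #Q := by
  exact_mod_cast h.nonempty.card_pos

theorem three_mul_card_le (h : IsNearlyBistochastic R T Q E V B η b ν) :
    3 * (#Q : ℝ) ≤ #(R \ T) := by
  have := card_sdiff_add_card_eq_card h.subset
  have := h.card_le_card
  have := h.four_mul_card_le
  exact_mod_cast (by lia : 3 * #Q ≤ #(R \ T))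

theorem le_sum_row (h : IsNearlyBistochastic R T Q E V B η b ν) {i : ι} (hi : i ∈ R) :
    1 - η ≤ ∑ j ∈ E, B i j + ∑ j ∈ V, B i j := by
  have := (abs_le.1 (h.abs_sum_row_sub_one_le i hi)).1
  rw [sum_union h.disjoint_cols] at this
  linarith

theorem sum_row_le (h : IsNearlyBistochastic R T Q E V B η b ν) {i : ι} (hi : i ∈ R) :
    ∑ j ∈ E, B i j + ∑ j ∈ V, B i j ≤ 1 + η := by
  have := (abs_le.1 (h.abs_sum_row_sub_one_le i hi)).2
  rw [sum_union h.disjoint_cols] at this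
  linarith

theorem sum_col_le (h : IsNearlyBistochastic R T Q E V B η b ν) {j : κ} (hj : j ∈ E ∪ V) :
    ∑ i ∈ R \ T, B i j + ∑ i ∈ T, B i j + ∑ i ∈ Q, B i j ≤ 1 + η := by
  have := (abs_le.1 (h.abs_sum_col_sub_one_le j hj)).2
  rw [sum_union h.disjoint_rows, ← sum_sdiff h.subset] at this
  linarith

theorem le_sum_row_core (h : IsNearlyBistochastic R T Q E V B η b ν) {i : ι} (hi : i ∈ R) :
    1 - η - #Q * b ≤ ∑ j ∈ E, B i j := by
  have hV : ∑ j ∈ V, B i j ≤ #Q * b := by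
    rw [h.card_eq_card, ← nsmul_eq_mul]
    exact sum_le_card_nsmul _ _ _ fun j hj ↦ h.le_of_mem i hi j (mem_union_right _ hj)
  linarith [h.le_sum_row hi]

theorem sum_row_core_le (h : IsNearlyBistochastic R T Q E V B η b ν) {i : ι} (hi : i ∈ R \ T) :
    ∑ j ∈ E, B i j ≤ 1 + η - #Q * ν := by
  have hV : #Q * ν ≤ ∑ j ∈ V, B i j := by
    rw [h.card_eq_card, ← nsmul_eq_mul]
    exact card_nsmul_le_sum _ _ _ fun j hj ↦ h.le_right i hi j hj
  linarith [h.sum_row_le (sdiff_subset hi)]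

theorem sum_col_core_le (h : IsNearlyBistochastic R T Q E V B η b ν) {j : κ} (hj : j ∈ E) :
    ∑ i ∈ R \ T, B i j ≤ 1 + η - #Q * ν - ∑ i ∈ T, B i j := by
  have hQ : #Q * ν ≤ ∑ i ∈ Q, B i j := by
    rw [← nsmul_eq_mul]
    exact card_nsmul_le_sum _ _ _ fun i hi ↦ h.le_bottom i hi j hj
  linarith [h.sum_col_le (mem_union_left _ hj)]

theorem le_sum_core (h : IsNearlyBistochastic R T Q E V B η b ν) :
    #(R \ T) * (1 - η) - #Q * (1 + η) ≤ ∑ i ∈ R \ T, ∑ j ∈ E, B i j := by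
  have hrows : #(R \ T) * (1 - η) ≤ ∑ i ∈ R \ T, (∑ j ∈ E, B i j + ∑ j ∈ V, B i j) := by
    rw [← nsmul_eq_mul]
    exact card_nsmul_le_sum _ _ _ fun i hi ↦ h.le_sum_row (sdiff_subset hi)
  have hright : ∑ j ∈ V, ∑ i ∈ R \ T, B i j ≤ #Q * (1 + η) := by
    rw [h.card_eq_card, ← nsmul_eq_mul]
    refine sum_le_card_nsmul _ _ _ fun j hj ↦ ?_
    linarith [h.sum_col_le (mem_union_right _ hj), sum_nonneg fun i (_ : i ∈ T) ↦ h.nonneg i j,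
      sum_nonneg fun i (_ : i ∈ Q) ↦ h.nonneg i j]
  rw [sum_add_distrib, sum_comm (s := R \ T) (t := V)] at hrows
  linarith

theorem sum_core_pos (h : IsNearlyBistochastic R T Q E V B η b ν) (hη : η ≤ 1 / 4) :
    0 < ∑ i ∈ R \ T, ∑ j ∈ E, B i j := by
  refine lt_of_lt_of_le ?_ h.le_sum_core
  nlinarith [h.card_pos_real, h.three_mul_card_le]

theorem coreScale_mul_sum (h : IsNearlyBistochastic R T Q E V B η b ν) (hη : η ≤ 1 / 4) :
    coreScale R T Q E B * ∑ i ∈ R \ T, ∑ j ∈ E, B i j = #(R \ T) - #Q :=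
  div_mul_cancel₀ _ (h.sum_core_pos hη).ne'

theorem coreScale_pos (h : IsNearlyBistochastic R T Q E V B η b ν) (hη : η ≤ 1 / 4) :
    0 < coreScale R T Q E B :=
  div_pos (by linarith [h.card_pos_real, h.three_mul_card_le]) (h.sum_core_pos hη)

theorem coreScale_le (h : IsNearlyBistochastic R T Q E V B η b ν) (hη : η ≤ 1 / 4) :
    coreScale R T Q E B ≤ 1 + 4 * η := by
  rw [coreScale, div_le_iff₀ (h.sum_core_pos hη)]
  have hmass := h.le_sum_core
  have hη0 := h.tolerance_nonneg
  have hS := h.three_mul_card_le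
  calc (#(R \ T) : ℝ) - #Q
      ≤ (1 + 4 * η) * (#(R \ T) * (1 - η) - #Q * (1 + η)) := by
        have : 0 ≤ η * (#(R \ T) * (3 - 4 * η) - #Q * (5 + 4 * η)) :=
          mul_nonneg hη0 (by nlinarith)
        linarith
    _ ≤ _ := by gcongr

theorem rescaledCore_nonneg (h : IsNearlyBistochastic R T Q E V B η b ν) (hη : η ≤ 1 / 4)
    (i : ι) (j : κ) : 0 ≤ rescaledCore R T Q E B i j := by
  rw [rescaledCore]
  split_ifs
  · exact div_nonneg (h.nonneg i j) (sum_nonneg fun k _ ↦ h.nonneg i k)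
  · exact mul_nonneg (h.coreScale_pos hη).le (h.nonneg i j)

theorem sum_row_rescaledCore_of_mem (h : IsNearlyBistochastic R T Q E V B η b ν)
    (hηb : η + #Q * b ≤ 1 / 2) {i : ι} (hi : i ∈ T) :
    ∑ j ∈ E, rescaledCore R T Q E B i j = 1 := by
  simp only [rescaledCore, if_pos hi, ← sum_div]
  exact div_self (by linarith [h.le_sum_row_core (h.subset hi)])

theorem sum_row_rescaledCore_le (h : IsNearlyBistochastic R T Q E V B η b ν) (hη : η ≤ 1 / 4)
    (hηb : η + #Q * b ≤ 1 / 2) (hν : 6 * η + 2 * (#Q * b) ^ 2 ≤ #Q * ν) {i : ι} (hi : i ∈ R) :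
    ∑ j ∈ E, rescaledCore R T Q E B i j ≤ 1 := by
  by_cases hT : i ∈ T
  · exact (h.sum_row_rescaledCore_of_mem hηb hT).le
  simp only [rescaledCore_of_notMem hT, ← mul_sum]
  have hη0 := h.tolerance_nonneg
  calc coreScale R T Q E B * ∑ j ∈ E, B i j
      ≤ (1 + 4 * η) * (1 + η - #Q * ν) :=
        mul_le_mul (h.coreScale_le hη) (h.sum_row_core_le (mem_sdiff.2 ⟨hi, hT⟩))
          (sum_nonneg fun j _ ↦ h.nonneg i j) (by positivity)
    _ ≤ 1 := by nlinarith [sq_nonneg (#Q * b)]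

theorem sum_rescaledCore_normalised_le (h : IsNearlyBistochastic R T Q E V B η b ν)
    (hηb : η + #Q * b ≤ 1 / 2) {j : κ} :
    ∑ i ∈ T, rescaledCore R T Q E B i j ≤ (∑ i ∈ T, B i j) * (1 + 2 * (η + #Q * b)) := by
  rw [sum_mul]
  refine sum_le_sum fun i hi ↦ ?_
  have hsum := h.le_sum_row_core (h.subset hi)
  have hη0 := h.tolerance_nonneg
  have hb : 0 ≤ #Q * b := mul_nonneg h.card_pos_real.le h.bound_nonneg
  rw [rescaledCore, if_pos hi, div_eq_mul_one_div]
  refine mul_le_mul_of_nonneg_left ?_ (h.nonneg i j)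
  rw [div_le_iff₀ (by linarith)]
  nlinarith

theorem sum_col_rescaledCore_le (h : IsNearlyBistochastic R T Q E V B η b ν) (hη : η ≤ 1 / 4)
    (hηb : η + #Q * b ≤ 1 / 2) (hν : 6 * η + 2 * (#Q * b) ^ 2 ≤ #Q * ν) {j : κ} (hj : j ∈ E) :
    ∑ i ∈ R, rescaledCore R T Q E B i j ≤ 1 := by
  have hη0 := h.tolerance_nonneg
  have hb0 := h.bound_nonneg
  have hy0 : 0 ≤ ∑ i ∈ T, B i j := sum_nonneg fun i _ ↦ h.nonneg i j
  have hyb : ∑ i ∈ T, B i j ≤ #Q * b := by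
    calc ∑ i ∈ T, B i j ≤ #T • b :=
          sum_le_card_nsmul _ _ _ fun i hi ↦ h.le_of_mem i (h.subset hi) j (mem_union_left _ hj)
      _ ≤ #Q * b := by
          rw [nsmul_eq_mul]
          exact mul_le_mul_of_nonneg_right (mod_cast h.card_le_card) hb0
  have hT := h.sum_rescaledCore_normalised_le hηb (j := j)
  have hS : ∑ i ∈ R \ T, rescaledCore R T Q E B i j ≤
      (1 + 4 * η) * (1 + η - #Q * ν - ∑ i ∈ T, B i j) := by
    rw [sum_congr rfl fun i hi ↦ rescaledCore_of_notMem (mem_sdiff.1 hi).2, ← mul_sum]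
    exact mul_le_mul (h.coreScale_le hη) (h.sum_col_core_le hj)
      (sum_nonneg fun i _ ↦ h.nonneg i j) (by positivity)
  have hsq : (∑ i ∈ T, B i j) * (#Q * b) ≤ (#Q * b) ^ 2 := by
    rw [sq]
    exact mul_le_mul_of_nonneg_right hyb (by positivity)
  rw [← sum_sdiff h.subset]
  nlinarith [mul_nonneg hη0 hy0, sq_nonneg (#Q * b)]

theorem sum_rescaledCore (h : IsNearlyBistochastic R T Q E V B η b ν) (hη : η ≤ 1 / 4)
    (hηb : η + #Q * b ≤ 1 / 2) : ∑ i ∈ R, ∑ j ∈ E, rescaledCore R T Q E B i j = #R - #Q := by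
  have hS : ∑ i ∈ R \ T, ∑ j ∈ E, rescaledCore R T Q E B i j = #(R \ T) - #Q := by
    rw [← h.coreScale_mul_sum hη, mul_sum]
    refine sum_congr rfl fun i hi ↦ ?_
    simp only [rescaledCore_of_notMem (mem_sdiff.1 hi).2, mul_sum]
  rw [← sum_sdiff h.subset, hS, sum_congr rfl fun i hi ↦ h.sum_row_rescaledCore_of_mem hηb hi,
    sum_const, nsmul_one, ← card_sdiff_add_card_eq_card h.subset]
  push_cast
  ring

theorem exists_isBistochasticOn (h : IsNearlyBistochastic R T Q E V B η b ν) (hν0 : 0 < ν)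
    (hη : η ≤ 1 / 4) (hηb : η + #Q * b ≤ 1 / 2) (hν : 6 * η + 2 * (#Q * b) ^ 2 ≤ #Q * ν) :
    ∃ W, IsBistochasticOn (R ∪ Q) (E ∪ V) W ∧
      (∀ i ∈ R \ T, ∀ j ∈ E, W i j = coreScale R T Q E B * B i j) ∧
      ∀ i j, W i j ≠ 0 → B i j ≠ 0 := by
  refine ⟨bistochasticDilation R Q E V (rescaledCore R T Q E B),
    isBistochasticOn_bistochasticDilation h.disjoint_rows h.disjoint_cols h.nonempty
      h.card_eq_card h.card_core_eq (h.rescaledCore_nonneg hη)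
      (fun i ↦ h.sum_row_rescaledCore_le hη hηb hν) (fun j ↦ h.sum_col_rescaledCore_le hη hηb hν)
      (h.sum_rescaledCore hη hηb), fun i hi j hj ↦ ?_, fun i j hW ↦ ?_⟩
  · rw [bistochasticDilation_apply_core (sdiff_subset hi) hj,
      rescaledCore_of_notMem (mem_sdiff.1 hi).2]
  · rcases cases_of_bistochasticDilation_ne_zero hW with ⟨-, -, hK⟩ | ⟨hi, hj, hK⟩ | ⟨hi, hj⟩
    · contrapose! hK
      rw [rescaledCore, hK, zero_div, mul_zero, ite_self]
    · have hT : i ∉ T := fun hT ↦ hK (h.sum_row_rescaledCore_of_mem hηb hT)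
      exact (hν0.trans_le (h.le_right i (mem_sdiff.2 ⟨hi, hT⟩) j hj)).ne'
    · exact (hν0.trans_le (h.le_bottom i hi j hj)).ne'

end IsNearlyBistochastic

end Completion

section Symmetrization

open Finset

section General

theorem two_mul_sum_le_sum_of_disjoint {ι : Type*} {I S E : Finset ι} {f : ι → ι → ℝ}
    (hf : ∀ i ∈ I, ∀ j ∈ I, 0 ≤ f i j) (hsymm : ∀ i j, f i j = f j i)
    (hS : S ⊆ I) (hE : E ⊆ I) (hSE : Disjoint S E) :
    2 * ∑ i ∈ S, ∑ j ∈ E, f i j ≤ ∑ i ∈ I, ∑ j ∈ I, f i j := by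
  classical
  calc 2 * ∑ i ∈ S, ∑ j ∈ E, f i j = ∑ i ∈ S, ∑ j ∈ E, f i j + ∑ i ∈ E, ∑ j ∈ S, f i j := by
        rw [two_mul, sum_comm (s := E)]
        simp only [hsymm]
    _ ≤ ∑ i ∈ S, ∑ j ∈ I, f i j + ∑ i ∈ E, ∑ j ∈ I, f i j := by
        gcongr with i hi i hi
        · exact fun j hj _ ↦ hf i (hS hi) j hj
        · exact fun j hj _ ↦ hf i (hE hi) j hj
    _ = ∑ i ∈ S ∪ E, ∑ j ∈ I, f i j := (sum_union hSE).symm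
    _ ≤ ∑ i ∈ I, ∑ j ∈ I, f i j :=
        sum_le_sum_of_subset_of_nonneg (union_subset hS hE) fun i hi _ ↦
          sum_nonneg fun j hj ↦ hf i hi j hj

variable {ι : Type*} [DecidableEq ι] {A C I S E : Finset ι} {W : ι → ι → ℝ}

/-- The symmetrisation of a matrix supported on `A × C`, completed by the identity off `A ∪ C`. -/
def symmetrization (A C : Finset ι) (W : ι → ι → ℝ) (i j : ι) : ℝ :=
  W i j + W j i + if i = j ∧ i ∉ A ∪ C then 1 else 0

theorem symmetrization_comm (i j : ι) : symmetrization A C W i j = symmetrization A C W j i := by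
  rw [symmetrization, symmetrization, add_comm (W i j)]
  congr 1
  exact if_congr ⟨fun h ↦ ⟨h.1.symm, h.1 ▸ h.2⟩, fun h ↦ ⟨h.1.symm, h.1 ▸ h.2⟩⟩ rfl rfl

namespace IsBistochasticOn

theorem symmetrization_nonneg (hW : IsBistochasticOn A C W) (i j : ι) :
    0 ≤ symmetrization A C W i j := by
  have := hW.nonneg i j
  have := hW.nonneg j i
  unfold symmetrization
  positivity

theorem symmetrization_of_mem (hW : IsBistochasticOn A C W) (hAC : Disjoint A C) {i : ι}
    (hi : i ∈ A) (j : ι) : symmetrization A C W i j = W i j := by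
  have hji : W j i = 0 := by
    by_contra h
    exact disjoint_left.1 hAC hi (hW.mem_of_ne_zero j i h).2
  rw [symmetrization, hji, if_neg fun h ↦ h.2 (mem_union_left _ hi), add_zero, add_zero]

theorem sum_symmetrization (hW : IsBistochasticOn A C W) (hAC : Disjoint A C) (hI : A ∪ C ⊆ I)
    {i : ι} (hi : i ∈ I) : ∑ j ∈ I, symmetrization A C W i j = 1 := by
  have hrow : ∑ j ∈ I, W i j = if i ∈ A then 1 else 0 := by
    split_ifs with hA
    · rw [← hW.sum_row i hA]
      refine (sum_subset (union_subset_right hI) fun j _ hj ↦ ?_).symm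
      by_contra h
      exact hj (hW.mem_of_ne_zero i j h).2
    · refine sum_eq_zero fun j _ ↦ ?_
      by_contra h
      exact hA (hW.mem_of_ne_zero i j h).1
  have hcol : ∑ j ∈ I, W j i = if i ∈ C then 1 else 0 := by
    split_ifs with hC
    · rw [← hW.sum_col i hC]
      refine (sum_subset (union_subset_left hI) fun j _ hj ↦ ?_).symm
      by_contra h
      exact hj (hW.mem_of_ne_zero j i h).1
    · refine sum_eq_zero fun j _ ↦ ?_
      by_contra h
      exact hC (hW.mem_of_ne_zero j i h).2
  have hdiag : ∑ j ∈ I, (if i = j ∧ i ∉ A ∪ C then (1 : ℝ) else 0) =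
      if i ∉ A ∪ C then 1 else 0 := by
    simp only [ite_and, sum_ite_eq, hi, if_true]
  have : i ∈ A → i ∉ C := fun h ↦ disjoint_left.1 hAC h
  simp only [symmetrization, sum_add_distrib, hrow, hcol, hdiag]
  by_cases hA : i ∈ A <;> by_cases hC : i ∈ C <;> simp_all

end IsBistochasticOn

theorem IsBistochasticOn.two_mul_sum_negMulLog_le (hW : IsBistochasticOn A C W)
    (hAC : Disjoint A C) (hI : A ∪ C ⊆ I) (hS : S ⊆ A) (hE : E ⊆ C) :
    2 * ∑ i ∈ S, ∑ j ∈ E, negMulLog (W i j) ≤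
      ∑ i ∈ I, ∑ j ∈ I, negMulLog (symmetrization A C W i j) := by
  have hle : ∀ i ∈ I, ∀ j ∈ I, symmetrization A C W i j ≤ 1 := fun i hi j hj ↦ by
    rw [← hW.sum_symmetrization hAC hI hi]
    exact single_le_sum (fun j _ ↦ hW.symmetrization_nonneg i j) hj
  rw [← sum_congr rfl fun i hi ↦ sum_congr rfl fun j _ ↦
    congr_arg negMulLog (hW.symmetrization_of_mem hAC (hS hi) j)]
  exact two_mul_sum_le_sum_of_disjoint
    (fun i hi j hj ↦ negMulLog_nonneg (hW.symmetrization_nonneg i j) (hle i hi j hj))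
    (fun i j ↦ by rw [symmetrization_comm]) (hS.trans (union_subset_left hI))
    (hE.trans (union_subset_right hI)) (hAC.mono hS hE)

end General

theorem sum_fin_add_one {M : Type*} [AddCommMonoid M] (n : ℕ) (f : ℕ → M) :
    ∑ i : Fin n, f (i + 1) = ∑ i ∈ Ioc 0 n, f i := by
  rw [Fin.sum_univ_eq_sum_range (fun i ↦ f (i + 1)) n, range_eq_Ico, sum_Ico_add' f 0 n 1]
  rfl

theorem oddClass_union_evenClass (n : ℕ) : oddClass n ∪ evenClass n = Ioc (n % 2) n := by
  rw [union_comm, evenClass, oddClass]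
  simp only [← Nat.not_even_iff_odd]
  exact filter_union_filter_not_eq _ _

theorem oddClass_union_evenClass_subset (n : ℕ) : oddClass n ∪ evenClass n ⊆ Ioc 0 n :=
  (oddClass_union_evenClass n).trans_subset (Ioc_subset_Ioc_left (Nat.zero_le _))

theorem coprime_of_symmetrization_ne_zero {n i j : ℕ} {W : ℕ → ℕ → ℝ}
    (hcop : ∀ i j, W i j ≠ 0 → i.Coprime j) (hi : i ∈ Ioc 0 n)
    (h : symmetrization (oddClass n) (evenClass n) W i j ≠ 0) : i.Coprime j := by
  contrapose! h
  have hij : W i j = 0 := by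
    by_contra h'
    exact h (hcop i j h')
  have hji : W j i = 0 := by
    by_contra h'
    exact h (hcop j i h').symm
  rw [symmetrization, hij, hji, oddClass_union_evenClass, if_neg, add_zero, add_zero]
  rintro ⟨rfl, hi'⟩
  have hone : i = 1 := by
    rw [mem_Ioc] at hi hi'
    lia
  exact h (by rw [hone]; exact Nat.coprime_one_left 1)

theorem symmetrization_mem_doublyStochastic {n : ℕ} {W : ℕ → ℕ → ℝ}
    (hW : IsBistochasticOn (oddClass n) (evenClass n) W) :
    (fun i j : Fin n ↦ symmetrization (oddClass n) (evenClass n) W (i + 1) (j + 1)) ∈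
      doublyStochastic ℝ (Fin n) := by
  have hrow : ∀ i : Fin n,
      ∑ j : Fin n, symmetrization (oddClass n) (evenClass n) W (i + 1) (j + 1) = 1 := fun i ↦ by
    rw [sum_fin_add_one n fun j ↦ symmetrization (oddClass n) (evenClass n) W (i + 1) j]
    exact hW.sum_symmetrization (disjoint_oddClass_evenClass n) (oddClass_union_evenClass_subset n)
      (mem_Ioc.2 (by lia))
  exact mem_doublyStochastic_iff_sum.2 ⟨fun i j ↦ hW.symmetrization_nonneg _ _, hrow, fun j ↦ by
    simpa only [symmetrization_comm] using hrow j⟩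

theorem exp_sum_negMulLog_sub_le_coprimePermCount {n : ℕ} {W : ℕ → ℕ → ℝ}
    (hW : IsBistochasticOn (oddClass n) (evenClass n) W) (hcop : ∀ i j, W i j ≠ 0 → i.Coprime j)
    {S E : Finset ℕ} (hS : S ⊆ oddClass n) (hE : E ⊆ evenClass n) :
    exp (2 * ∑ i ∈ S, ∑ j ∈ E, negMulLog (W i j) - n) ≤ coprimePermCount n := by
  have hperm := exp_sum_negMulLog_sub_le_card_perm
    (r := fun i j : Fin n ↦ Nat.gcd (i.1 + 1) (j.1 + 1) = 1)
    (symmetrization_mem_doublyStochastic hW) fun i j h ↦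
      coprime_of_symmetrization_ne_zero hcop (mem_Ioc.2 (by lia)) h
  refine (exp_le_exp.2 (sub_le_sub_right ?_ _)).trans hperm
  rw [sum_congr rfl fun (i : Fin n) _ ↦ sum_fin_add_one n fun j ↦
      negMulLog (symmetrization (oddClass n) (evenClass n) W (i + 1) j),
    sum_fin_add_one n fun i ↦ ∑ j ∈ Ioc 0 n,
      negMulLog (symmetrization (oddClass n) (evenClass n) W i j)]
  exact hW.two_mul_sum_negMulLog_le (disjoint_oddClass_evenClass n)
    (oddClass_union_evenClass_subset n) hS hE

end Symmetrization

section PrimeBlocks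

open Finset

theorem mul_sum_sub_sum_le_sum_negMulLog {ι κ : Type*} {S : Finset ι} {E : Finset κ}
    {w : ι → κ → ℝ} {L : ℝ} {x : ι → ℝ} {y : κ → ℝ} (hrow : ∀ i ∈ S, ∑ j ∈ E, w i j ≤ 1)
    (hcol : ∀ j ∈ E, ∑ i ∈ S, w i j ≤ 1) (hx : ∀ i ∈ S, 0 ≤ x i) (hy : ∀ j ∈ E, 0 ≤ y j)
    (h : ∀ i ∈ S, ∀ j ∈ E, w i j * (L - x i - y j) ≤ negMulLog (w i j)) :
    L * ∑ i ∈ S, ∑ j ∈ E, w i j - ∑ i ∈ S, x i - ∑ j ∈ E, y j ≤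
      ∑ i ∈ S, ∑ j ∈ E, negMulLog (w i j) := by
  have hsplit : ∑ i ∈ S, ∑ j ∈ E, w i j * (L - x i - y j) = L * ∑ i ∈ S, ∑ j ∈ E, w i j -
      ∑ i ∈ S, x i * ∑ j ∈ E, w i j - ∑ j ∈ E, y j * ∑ i ∈ S, w i j := by
    simp_rw [mul_sum]
    rw [sum_comm (s := E)]
    simp_rw [← sum_sub_distrib]
    exact sum_congr rfl fun i _ ↦ sum_congr rfl fun j _ ↦ by ring
  linarith [sum_le_sum fun i hi ↦ sum_le_sum fun j hj ↦ h i hi j hj,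
    sum_le_sum fun i hi ↦ mul_le_of_le_one_right (hx i hi) (hrow i hi),
    sum_le_sum fun j hj ↦ mul_le_of_le_one_right (hy j hj) (hcol j hj)]

theorem mul_le_negMulLog_mul_coprimeKernel {n : ℕ} (hn : n ≠ 0) {τ η : ℝ} (hτ : 0 < τ)
    (hτη : τ ≤ 1 + 4 * η) (i j : ℕ) :
    τ * coprimeKernel n i j * (log (n / (2 * coprimeDensity n)) - 4 * η -
      log (coprimeWeight n i) - log (coprimeWeight n j)) ≤
      negMulLog (τ * coprimeKernel n i j) := by
  have hd := coprimeDensity_pos n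
  have hi := coprimeWeight_pos n i
  have hj := coprimeWeight_pos n j
  have hn0 : (0 : ℝ) < n := by positivity
  by_cases h : i.Coprime j
  · rw [negMulLog, neg_mul_comm]
    refine mul_le_mul_of_nonneg_left ?_ (mul_nonneg hτ.le (coprimeKernel_nonneg n i j))
    rw [coprimeKernel, if_pos h, log_mul hτ.ne' (by positivity), log_div (by positivity) hn0.ne',
      log_mul (by positivity) hj.ne', log_mul (by positivity) hi.ne',
      log_div hn0.ne' (by positivity)]
    linarith [log_le_sub_one_of_pos hτ]
  · simp [coprimeKernel, h]

/-- The primes in `(n / 4, n / 2]`. An odd multiple of such a prime `q` that is at most `n` is `q`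
or `3 * q`, an even one is `2 * q`. -/
def middlePrimes (n : ℕ) : Finset ℕ := {q ∈ Ioc (n / 4) (n / 2) | q.Prime}

theorem mem_middlePrimes {n q : ℕ} : q ∈ middlePrimes n ↔ (n < 4 * q ∧ 2 * q ≤ n) ∧ q.Prime := by
  rw [middlePrimes, mem_filter, mem_Ioc, Nat.div_lt_iff_lt_mul four_pos,
    Nat.le_div_iff_mul_le two_pos, mul_comm q, mul_comm q]

/-- The rows `i ∉ Q` divisible by an element of `Q`; these are not coprime to all the columns
`2 * q`. -/
def oddMultiples (n : ℕ) (Q : Finset ℕ) : Finset ℕ := {i ∈ oddClass n \ Q | ∃ q ∈ Q, q ∣ i}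

/-- The columns `2 * q` with `q ∈ Q`. -/
def doubles (Q : Finset ℕ) : Finset ℕ := Q.image (2 * ·)

variable {n : ℕ} {Q : Finset ℕ}

theorem card_doubles (Q : Finset ℕ) : #(doubles Q) = #Q :=
  card_image_of_injective _ (mul_right_injective₀ two_ne_zero)

theorem subset_oddClass (hn : 8 ≤ n) (hQ : Q ⊆ middlePrimes n) : Q ⊆ oddClass n := fun q hq ↦ by
  obtain ⟨⟨hlo, hhi⟩, hprime⟩ := mem_middlePrimes.1 (hQ hq)
  exact mem_filter.2 ⟨mem_Ioc.2 (by lia), hprime.odd_of_ne_two (by lia)⟩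

theorem doubles_subset_evenClass (hQ : Q ⊆ middlePrimes n) : doubles Q ⊆ evenClass n := by
  refine image_subset_iff.2 fun q hq ↦ mem_filter.2 ⟨mem_Ioc.2 ?_, even_two_mul q⟩
  obtain ⟨⟨-, hhi⟩, hprime⟩ := mem_middlePrimes.1 (hQ hq)
  have := hprime.two_le
  lia

theorem oddMultiples_subset_image (hQ : Q ⊆ middlePrimes n) :
    oddMultiples n Q ⊆ Q.image (3 * ·) := fun i hi ↦ by
  simp only [oddMultiples, oddClass, mem_filter, Finset.mem_sdiff, mem_Ioc] at hi
  obtain ⟨⟨⟨⟨-, hin⟩, hodd⟩, hiQ⟩, q, hq, k, rfl⟩ := hi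
  obtain ⟨⟨hlo, -⟩, -⟩ := mem_middlePrimes.1 (hQ hq)
  have hk : k < 4 := by
    by_contra! hk
    nlinarith
  have hk_odd : Odd k := (Nat.odd_mul.1 hodd).2
  have hk_one : k ≠ 1 := by
    rintro rfl
    exact hiQ (by rwa [mul_one])
  obtain rfl : k = 3 := by
    rw [Nat.odd_iff] at hk_odd
    lia
  exact mem_image.2 ⟨q, hq, mul_comm _ _⟩

theorem card_oddMultiples_le (hQ : Q ⊆ middlePrimes n) : #(oddMultiples n Q) ≤ #Q :=
  (card_le_card (oddMultiples_subset_image hQ)).trans card_image_le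

theorem coprime_of_mem_doubles (hQ : Q ⊆ middlePrimes n) {i j : ℕ}
    (hi : i ∈ (oddClass n \ Q) \ oddMultiples n Q) (hj : j ∈ doubles Q) : i.Coprime j := by
  obtain ⟨q, hq, rfl⟩ := mem_image.1 hj
  obtain ⟨hiR, hiT⟩ := mem_sdiff.1 hi
  have hodd : Odd i := (mem_filter.1 (mem_sdiff.1 hiR).1).2
  have hdvd : ¬q ∣ i := fun h ↦ hiT (mem_filter.2 ⟨hiR, q, hq, h⟩)
  exact (Nat.coprime_two_right.2 hodd).mul_right
    (((mem_middlePrimes.1 (hQ hq)).2.coprime_iff_not_dvd.2 hdvd).symm)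

theorem coprime_of_mem_evenClass_sdiff (hn : 8 ≤ n) (hQ : Q ⊆ middlePrimes n) {q j : ℕ}
    (hq : q ∈ Q) (hj : j ∈ evenClass n \ doubles Q) : q.Coprime j := by
  obtain ⟨⟨hlo, -⟩, hprime⟩ := mem_middlePrimes.1 (hQ hq)
  have hodd : Odd q := (mem_filter.1 (subset_oddClass hn hQ hq)).2
  simp only [evenClass, Finset.mem_sdiff, mem_filter, mem_Ioc] at hj
  obtain ⟨⟨⟨hj0, hjn⟩, heven⟩, hjV⟩ := hj
  refine hprime.coprime_iff_not_dvd.2 ?_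
  rintro ⟨k, rfl⟩
  have hk : k < 4 := by
    by_contra! hk
    nlinarith
  have hk_even : Even k := (Nat.even_mul.1 heven).resolve_left (Nat.not_even_iff_odd.2 hodd)
  have hk_two : k ≠ 2 := by
    rintro rfl
    exact hjV (mem_image.2 ⟨q, hq, mul_comm _ _⟩)
  obtain rfl : k = 0 := by
    rw [Nat.even_iff] at hk_even
    lia
  lia

theorem isNearlyBistochastic_coprimeKernel (hQ : Q ⊆ middlePrimes n) (hQ0 : Q.Nonempty)
    (hQn : 5 * #Q ≤ n / 2) {G : ℝ} (hG : ∀ m ∈ Ioc 0 n, 2 ^ #{p ∈ oddPrimes n | p ∣ m} ≤ G) :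
    IsNearlyBistochastic (oddClass n \ Q) (oddMultiples n Q) Q (evenClass n \ doubles Q)
      (doubles Q) (coprimeKernel n) (8 * G ^ 2 / √n) (2 * G ^ 2 / n) (1 / n) := by
  have hn : 8 ≤ n := by
    have := hQ0.card_pos
    lia
  have hodd := sdiff_union_of_subset (subset_oddClass hn hQ)
  have heven := sdiff_union_of_subset (doubles_subset_evenClass hQ)
  have hIoc := union_subset_iff.1 (oddClass_union_evenClass_subset n)
  have hweight : ∀ m ∈ Ioc 0 n, coprimeWeight n m ≤ G := fun m hm ↦
    (coprimeWeight_le n m).trans (hG m hm)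
  have hcard_odd := card_sdiff_of_subset (subset_oddClass hn hQ)
  have hcard_even := card_sdiff_of_subset (doubles_subset_evenClass hQ)
  rw [card_oddClass] at hcard_odd
  rw [card_evenClass, card_doubles] at hcard_even
  refine ⟨filter_subset _ _, sdiff_disjoint, sdiff_disjoint, hQ0, (card_doubles Q).symm,
    by rw [hcard_odd, hcard_even], card_oddMultiples_le hQ, by lia, coprimeKernel_nonneg n,
    fun i hi j hj ↦ ?_, fun i hi ↦ ?_, fun j hj ↦ ?_,
    fun i hi j hj ↦ inv_le_coprimeKernel (coprime_of_mem_doubles hQ hi hj),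
    fun q hq j hj ↦ inv_le_coprimeKernel (coprime_of_mem_evenClass_sdiff hn hQ hq hj)⟩
  · exact coprimeKernel_le (hweight i (hIoc.1 (sdiff_subset hi)))
      (hweight j (hIoc.2 (heven ▸ hj)))
  · have hi' := mem_Ioc.1 (hIoc.1 (sdiff_subset hi))
    rw [heven]
    exact abs_sum_coprimeKernel_sub_one_le hi'.1.ne' hi'.2
      (fun j _ ↦ Or.inl (mem_filter.1 (sdiff_subset hi)).2)
      (fun d ↦ abs_card_filter_dvd_evenClass_sub_le n) (hG i (mem_Ioc.2 hi'))
  · rw [heven] at hj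
    have hj' := mem_Ioc.1 (hIoc.2 hj)
    rw [hodd]
    simp_rw [coprimeKernel_comm n _ j]
    exact abs_sum_coprimeKernel_sub_one_le hj'.1.ne' hj'.2
      (fun i hi ↦ Or.inr (mem_filter.1 hi).2)
      (fun d ↦ abs_card_filter_dvd_oddClass_sub_le n) (hG j (mem_Ioc.2 hj'))

theorem IsBistochasticOn.mul_sum_sub_sum_log_coprimeWeight_le {W : ℕ → ℕ → ℝ}
    (hW : IsBistochasticOn (oddClass n) (evenClass n) W) (hn : n ≠ 0) {S E : Finset ℕ}
    (hS : S ⊆ oddClass n) (hE : E ⊆ evenClass n) {τ η : ℝ} (hτ : 0 < τ) (hτη : τ ≤ 1 + 4 * η)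
    (hWS : ∀ i ∈ S, ∀ j ∈ E, W i j = τ * coprimeKernel n i j) :
    (log (n / (2 * coprimeDensity n)) - 4 * η) * ∑ i ∈ S, ∑ j ∈ E, W i j -
      ∑ m ∈ Ioc 0 n, log (coprimeWeight n m) ≤ ∑ i ∈ S, ∑ j ∈ E, negMulLog (W i j) := by
  have hlog : ∀ m, 0 ≤ log (coprimeWeight n m) := fun m ↦ log_nonneg (one_le_coprimeWeight n m)
  have hentropy := mul_sum_sub_sum_le_sum_negMulLog (S := S) (E := E) (w := W)
    (L := log (n / (2 * coprimeDensity n)) - 4 * η)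
    (fun i hi ↦ (sum_le_sum_of_subset_of_nonneg hE fun j _ _ ↦ hW.nonneg i j).trans_eq
      (hW.sum_row i (hS hi)))
    (fun j hj ↦ (sum_le_sum_of_subset_of_nonneg hS fun i _ _ ↦ hW.nonneg i j).trans_eq
      (hW.sum_col j (hE hj)))
    (fun i _ ↦ hlog i) (fun j _ ↦ hlog j) fun i hi j hj ↦ by
      rw [hWS i hi j hj]
      exact mul_le_negMulLog_mul_coprimeKernel hn hτ hτη i j
  have hweights : ∑ i ∈ S, log (coprimeWeight n i) + ∑ j ∈ E, log (coprimeWeight n j) ≤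
      ∑ m ∈ Ioc 0 n, log (coprimeWeight n m) := by
    rw [← sum_union ((disjoint_oddClass_evenClass n).mono hS hE)]
    exact sum_le_sum_of_subset_of_nonneg
      ((union_subset_union hS hE).trans (oddClass_union_evenClass_subset n)) fun m _ _ ↦ hlog m
  linarith

theorem le_two_mul_card_core (hn : 8 ≤ n) (hQ : Q ⊆ middlePrimes n) :
    n ≤ 2 * #((oddClass n \ Q) \ oddMultiples n Q) + 4 * #Q + 1 := by
  have hcard : #((oddClass n \ Q) \ oddMultiples n Q) + #(oddMultiples n Q) + #Q = n / 2 := by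
    rw [card_sdiff_add_card_eq_card (show oddMultiples n Q ⊆ _ from filter_subset _ _),
      card_sdiff_add_card_eq_card (subset_oddClass hn hQ), card_oddClass]
  have := card_oddMultiples_le hQ
  lia

theorem log_div_coprimeDensity_nonneg (hn : 2 ≤ n) : 0 ≤ log (n / (2 * coprimeDensity n)) := by
  have hd := coprimeDensity_pos n
  have hn' : (2 : ℝ) ≤ n := by exact_mod_cast hn
  refine log_nonneg ?_
  rw [le_div_iff₀ (by positivity)]
  linarith [coprimeDensity_le_one n]

theorem log_div_coprimeDensity_le_log (hn : n ≠ 0) :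
    log (n / (2 * coprimeDensity n)) ≤ log n := by
  have hd := half_le_coprimeDensity n
  exact log_le_log (by positivity) (div_le_self (by positivity) (by linarith))

theorem exp_le_coprimePermCount (hQ : Q ⊆ middlePrimes n) (hQ0 : Q.Nonempty)
    (hQn : 5 * #Q ≤ n / 2) {G η : ℝ} (hG : ∀ m ∈ Ioc 0 n, 2 ^ #{p ∈ oddPrimes n | p ∣ m} ≤ G)
    (hηG : η = 8 * G ^ 2 / √n) (hη : η ≤ 1 / 4) (hηb : η + #Q * (2 * G ^ 2 / n) ≤ 1 / 2)
    (hν : 6 * η + 2 * (#Q * (2 * G ^ 2 / n)) ^ 2 ≤ #Q * (1 / n)) :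
    exp (n * log (n / (2 * coprimeDensity n)) - 8 * #Q * log n - 4 * η * n -
      2 * ∑ m ∈ Ioc 0 n, log (coprimeWeight n m) - n) ≤ coprimePermCount n := by
  have hQpos := hQ0.card_pos
  have hQodd := subset_oddClass (by lia) hQ
  have hS : (oddClass n \ Q) \ oddMultiples n Q ⊆ oddClass n := sdiff_subset.trans sdiff_subset
  have hE : evenClass n \ doubles Q ⊆ evenClass n := sdiff_subset
  have hB := isNearlyBistochastic_coprimeKernel hQ hQ0 hQn hG
  rw [← hηG] at hB
  have hn : 2 ≤ n := by lia
  obtain ⟨W, hW, hWS, hWB⟩ := hB.exists_isBistochasticOn (by positivity) hη hηb hν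
  rw [sdiff_union_of_subset hQodd, sdiff_union_of_subset (doubles_subset_evenClass hQ)] at hW
  have hmass : ∑ i ∈ (oddClass n \ Q) \ oddMultiples n Q, ∑ j ∈ evenClass n \ doubles Q, W i j =
      #((oddClass n \ Q) \ oddMultiples n Q) - #Q := by
    rw [← hB.coreScale_mul_sum hη, sum_congr rfl fun i hi ↦ sum_congr rfl (hWS i hi)]
    simp_rw [mul_sum]
  have hentropy := hW.mul_sum_sub_sum_log_coprimeWeight_le (by lia) hS hE (hB.coreScale_pos hη)
    (hB.coreScale_le hη) hWS
  refine (exp_le_exp.2 (sub_le_sub_right ?_ _)).trans (exp_sum_negMulLog_sub_le_coprimePermCount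
    hW (fun i j h ↦ coprime_of_coprimeKernel_ne_zero (hWB i j h)) hS hE)
  rw [hmass] at hentropy
  set s := #((oddClass n \ Q) \ oddMultiples n Q)
  have hle : 2 * (s : ℝ) ≤ n := by
    exact_mod_cast (by have := card_le_card hS; rw [card_oddClass] at this; lia : 2 * s ≤ n)
  have hge : (n : ℝ) ≤ 2 * s + 6 * #Q := by
    exact_mod_cast (le_two_mul_card_core (by lia) hQ).trans (by lia)
  linarith [mul_le_mul_of_nonneg_right hge (log_div_coprimeDensity_nonneg hn),
    mul_le_mul_of_nonneg_left (log_div_coprimeDensity_le_log (by lia : n ≠ 0))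
      (#Q).cast_nonneg,
    mul_le_mul_of_nonneg_right hle hB.tolerance_nonneg,
    mul_nonneg (#Q).cast_nonneg hB.tolerance_nonneg]

end PrimeBlocks

section CoprimeConst

open Finset

/-- The factor at `p` of the product `coprimeConst`. -/
noncomputable def constFactor (p : ℝ) : ℝ :=
  (p - 1) ^ (2 * (1 - 1 / p)) / (p * (p - 2) ^ (1 - 2 / p))

theorem constFactor_two : constFactor 2 = 1 / 2 := by
  norm_num [constFactor]

theorem constFactor_pos {p : ℝ} (hp : 3 ≤ p) : 0 < constFactor p := by
  have h1 : 0 < p - 1 := by linarith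
  have h2 : 0 < p - 2 := by linarith
  unfold constFactor
  positivity

theorem log_constFactor {p : ℝ} (hp : 3 ≤ p) :
    log (constFactor p) = -log (p * (p - 2) / (p - 1) ^ 2) - 2 / p * log ((p - 1) / (p - 2)) := by
  have h0 : 0 < p := by linarith
  have h1 : 0 < p - 1 := by linarith
  have h2 : 0 < p - 2 := by linarith
  rw [constFactor, log_div (by positivity) (by positivity), log_mul h0.ne' (by positivity),
    log_rpow h1, log_rpow h2, log_div (by positivity) (by positivity), log_mul h0.ne' h2.ne',
    log_pow, log_div h1.ne' h2.ne']
  push_cast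
  ring

theorem constFactor_le_one {p : ℝ} (hp : 3 ≤ p) : constFactor p ≤ 1 := by
  have h1 : 0 < p - 1 := by linarith
  have h2 : 0 < p - 2 := by linarith
  rw [← log_nonpos_iff (constFactor_pos hp).le, log_constFactor hp, sub_nonpos, ← log_inv]
  calc log (p * (p - 2) / (p - 1) ^ 2)⁻¹ ≤ (p * (p - 2) / (p - 1) ^ 2)⁻¹ - 1 :=
        log_le_sub_one_of_pos (by positivity)
    _ = 1 / (p * (p - 2)) := by field_simp; ring
    _ ≤ 2 / (p * (p - 1)) := by
        rw [div_le_div_iff₀ (by positivity) (by positivity)]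
        nlinarith
    _ = 2 / p * (1 - ((p - 1) / (p - 2))⁻¹) := by field_simp; ring
    _ ≤ 2 / p * log ((p - 1) / (p - 2)) := by
        gcongr
        exact one_sub_inv_le_log_of_pos (by positivity)

theorem pow_three_le_constFactor {p : ℝ} (hp : 3 ≤ p) :
    (p * (p - 2) / (p - 1) ^ 2) ^ 3 ≤ constFactor p := by
  have h1 : 0 < p - 1 := by linarith
  have h2 : 0 < p - 2 := by linarith
  have hcorrection : 2 / p * log ((p - 1) / (p - 2)) ≤ -4 * log (p * (p - 2) / (p - 1) ^ 2) := by
    calc 2 / p * log ((p - 1) / (p - 2)) ≤ 2 / p * ((p - 1) / (p - 2) - 1) := by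
          gcongr
          exact log_le_sub_one_of_pos (by positivity)
      _ = 2 / (p * (p - 2)) := by field_simp; ring
      _ ≤ 4 / (p - 1) ^ 2 := by
          rw [div_le_div_iff₀ (by positivity) (by positivity)]
          nlinarith
      _ = -4 * (p * (p - 2) / (p - 1) ^ 2 - 1) := by field_simp; ring
      _ ≤ -4 * log (p * (p - 2) / (p - 1) ^ 2) := by
          linarith [log_le_sub_one_of_pos (x := p * (p - 2) / (p - 1) ^ 2) (by positivity)]
  rw [← log_le_log_iff (by positivity) (constFactor_pos hp), log_constFactor hp, log_pow]
  push_cast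
  linarith

theorem constFactor_mem_Icc {p : ℕ} (hp : p.Prime) : constFactor p ∈ Set.Icc 0 1 := by
  rcases hp.two_le.eq_or_lt with rfl | h
  · norm_num [constFactor_two]
  · have : (3 : ℝ) ≤ p := by exact_mod_cast h
    exact ⟨(constFactor_pos this).le, constFactor_le_one this⟩

theorem prime_of_mem_insert_two_oddPrimes {n p : ℕ} (hp : p ∈ insert 2 (oddPrimes n)) :
    p.Prime := by
  rcases mem_insert.1 hp with rfl | hp
  exacts [Nat.prime_two, (mem_oddPrimes.1 hp).2]

theorem prod_insert_two_constFactor (n : ℕ) :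
    ∏ p ∈ insert 2 (oddPrimes n), constFactor p = 1 / 2 * ∏ p ∈ oddPrimes n, constFactor p := by
  rw [prod_insert (by simp [mem_oddPrimes])]
  norm_num [constFactor_two]

theorem le_prod_insert_two_constFactor (n : ℕ) :
    1 / 16 ≤ ∏ p ∈ insert 2 (oddPrimes n), constFactor p := by
  calc (1 : ℝ) / 16 = 1 / 2 * (1 / 2) ^ 3 := by norm_num
    _ ≤ 1 / 2 * coprimeDensity n ^ 3 := by
        gcongr
        exact half_le_coprimeDensity n
    _ = 1 / 2 * ∏ p ∈ oddPrimes n, ((p : ℝ) * (p - 2) / (p - 1) ^ 2) ^ 3 := by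
        rw [coprimeDensity, prod_pow]
    _ ≤ 1 / 2 * ∏ p ∈ oddPrimes n, constFactor p := by
        gcongr with p hp
        · intro p hp
          have := three_le_of_mem_oddPrimes hp
          have : 0 ≤ (p : ℝ) - 2 := by linarith
          positivity
        · exact pow_three_le_constFactor (three_le_of_mem_oddPrimes hp)
    _ = _ := (prod_insert_two_constFactor n).symm

theorem le_prod_primes_constFactor (s : Finset Nat.Primes) :
    1 / 16 ≤ ∏ p ∈ s, constFactor (p : ℕ) := by
  obtain ⟨N, hN⟩ := (s.map ⟨_, Nat.Primes.coe_nat_injective⟩).exists_nat_subset_range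
  calc (1 : ℝ) / 16 ≤ ∏ p ∈ insert 2 (oddPrimes N), constFactor p :=
        le_prod_insert_two_constFactor N
    _ ≤ ∏ p ∈ s.map ⟨_, Nat.Primes.coe_nat_injective⟩, constFactor p := by
        refine prod_le_prod_of_subset_of_le_one (fun q hq ↦ ?_)
          (fun p hp ↦ (constFactor_mem_Icc (prime_of_mem_insert_two_oddPrimes hp)).1)
          fun p hp _ ↦ (constFactor_mem_Icc (prime_of_mem_insert_two_oddPrimes hp)).2
        have hqN := mem_range.1 (hN hq)
        obtain ⟨p, -, rfl⟩ := mem_map.1 hq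
        have hp2 := p.2.two_le
        simp only [mem_insert, mem_oddPrimes, Function.Embedding.coeFn_mk, p.2] at hqN ⊢
        lia
    _ = _ := prod_map ..

theorem bddBelow_prod_primes_constFactor :
    BddBelow (Set.range fun s : Finset Nat.Primes ↦ ∏ p ∈ s, constFactor (p : ℕ)) :=
  ⟨1 / 16, by rintro _ ⟨s, rfl⟩; exact le_prod_primes_constFactor s⟩

theorem coprimeConst_eq_iInf :
    coprimeConst = ⨅ s : Finset Nat.Primes, ∏ p ∈ s, constFactor (p : ℕ) :=
  HasProd.tprod_eq <| tendsto_atTop_ciInf (fun _ _ hst ↦ prod_le_prod_of_subset_of_le_one hst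
    (fun p _ ↦ (constFactor_mem_Icc p.2).1) fun p _ _ ↦ (constFactor_mem_Icc p.2).2)
    bddBelow_prod_primes_constFactor

theorem le_coprimeConst : 1 / 16 ≤ coprimeConst :=
  coprimeConst_eq_iInf ▸ le_ciInf le_prod_primes_constFactor

theorem coprimeConst_pos : 0 < coprimeConst :=
  lt_of_lt_of_le (by norm_num) le_coprimeConst

theorem coprimeConst_le_prod (s : Finset Nat.Primes) :
    coprimeConst ≤ ∏ p ∈ s, constFactor (p : ℕ) :=
  coprimeConst_eq_iInf ▸ ciInf_le bddBelow_prod_primes_constFactor s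

theorem coprimeConst_le_one : coprimeConst ≤ 1 := by
  simpa using coprimeConst_le_prod ∅

theorem coprimeConst_le_half_mul_prod_oddPrimes (n : ℕ) :
    coprimeConst ≤ 1 / 2 * ∏ p ∈ oddPrimes n, constFactor p := by
  rw [← prod_insert_two_constFactor, ← prod_subtype_of_mem (p := Nat.Prime)
    (fun q : ℕ ↦ constFactor q) fun _ ↦ prime_of_mem_insert_two_oddPrimes]
  exact coprimeConst_le_prod _

theorem sum_log_coprimeWeight_le (n : ℕ) :
    ∑ m ∈ Ioc 0 n, log (coprimeWeight n m) ≤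
      n * ∑ p ∈ oddPrimes n, 1 / (p : ℝ) * log (((p : ℝ) - 1) / (p - 2)) := by
  have hlog (m : ℕ) : log (coprimeWeight n m) = ∑ p ∈ oddPrimes n,
      if p ∣ m then log (((p : ℝ) - 1) / (p - 2)) else 0 := by
    rw [coprimeWeight, log_prod, sum_filter]
    intro p hp
    have hp3 := three_le_of_mem_oddPrimes (mem_filter.1 hp).1
    exact (div_pos (by linarith) (by linarith)).ne'
  simp_rw [hlog]
  rw [sum_comm, mul_sum]
  refine sum_le_sum fun p hp ↦ ?_
  have hp3 := three_le_of_mem_oddPrimes hp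
  rw [← sum_filter, sum_const, Nat.Ioc_filter_dvd_card_eq_div, nsmul_eq_mul, ← mul_assoc,
    mul_one_div]
  refine mul_le_mul_of_nonneg_right Nat.cast_div_le (log_nonneg ?_)
  rw [le_div_iff₀] <;> linarith

theorem log_prod_oddPrimes_constFactor (n : ℕ) :
    log (∏ p ∈ oddPrimes n, constFactor p) = -log (coprimeDensity n) -
      2 * ∑ p ∈ oddPrimes n, 1 / (p : ℝ) * log (((p : ℝ) - 1) / (p - 2)) := by
  rw [coprimeDensity, log_prod, log_prod, mul_sum, ← sum_neg_distrib, ← sum_sub_distrib]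
  · refine sum_congr rfl fun p hp ↦ ?_
    rw [log_constFactor (three_le_of_mem_oddPrimes hp)]
    ring
  · intro p hp
    have hp3 := three_le_of_mem_oddPrimes hp
    have h2 : 0 < (p : ℝ) - 2 := by linarith
    have h1 : 0 < (p : ℝ) - 1 := by linarith
    positivity
  · exact fun p hp ↦ (constFactor_pos (three_le_of_mem_oddPrimes hp)).ne'

theorem log_add_log_coprimeConst_le {n : ℕ} (hn : n ≠ 0) :
    n * log n + n * log coprimeConst ≤
      n * log (n / (2 * coprimeDensity n)) - 2 * ∑ m ∈ Ioc 0 n, log (coprimeWeight n m) := by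
  have hprod : 0 < ∏ p ∈ oddPrimes n, constFactor p :=
    prod_pos fun p hp ↦ constFactor_pos (three_le_of_mem_oddPrimes hp)
  have hconst : log coprimeConst ≤ -log 2 - log (coprimeDensity n) -
      2 * ∑ p ∈ oddPrimes n, 1 / (p : ℝ) * log (((p : ℝ) - 1) / (p - 2)) := by
    refine (log_le_log coprimeConst_pos (coprimeConst_le_half_mul_prod_oddPrimes n)).trans_eq ?_
    rw [log_mul (by norm_num) hprod.ne', log_prod_oddPrimes_constFactor, one_div, log_inv]
    ring
  rw [log_div (by positivity) (by linarith [coprimeDensity_pos n]),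
    log_mul (by norm_num) (coprimeDensity_pos n).ne']
  linarith [sum_log_coprimeWeight_le n,
    mul_le_mul_of_nonneg_left hconst (Nat.cast_nonneg (α := ℝ) n)]

end CoprimeConst

section PowerGrowth

theorem eventually_mul_rpow_mul_log_le {s t : ℝ} (hst : s < t) (K : ℝ) :
    ∀ᶠ n : ℕ in atTop, K * (n : ℝ) ^ s * log n ≤ (n : ℝ) ^ t := by
  have hlog := (isLittleO_log_rpow_atTop (sub_pos.2 hst)).const_mul_left K |>.comp_tendsto
    tendsto_natCast_atTop_atTop |>.bound one_pos
  filter_upwards [hlog, eventually_gt_atTop 0] with n hn hn0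
  have hn0' : (0 : ℝ) < n := by exact_mod_cast hn0
  simp only [Function.comp, norm_eq_abs, one_mul, abs_of_pos (rpow_pos_of_pos hn0' _)] at hn
  calc K * (n : ℝ) ^ s * log n = n ^ s * (K * log n) := by ring
    _ ≤ n ^ s * n ^ (t - s) := by gcongr; exact (le_abs_self _).trans hn
    _ = n ^ t := by rw [← rpow_add hn0', add_sub_cancel]

theorem eventually_mul_rpow_le {s t : ℝ} (hst : s < t) (K : ℝ) :
    ∀ᶠ n : ℕ in atTop, K * (n : ℝ) ^ s ≤ (n : ℝ) ^ t := by
  filter_upwards [(tendsto_rpow_atTop (sub_pos.2 hst)).comp tendsto_natCast_atTop_atTop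
    |>.eventually_ge_atTop K, eventually_gt_atTop 0] with n hn hn0
  have hn0' : (0 : ℝ) < n := by exact_mod_cast hn0
  calc K * (n : ℝ) ^ s ≤ n ^ (t - s) * n ^ s := by gcongr; exact hn
    _ = n ^ t := by rw [← rpow_add hn0', sub_add_cancel]

end PowerGrowth

section PrimeSupply

open Finset

theorem pow_factorization_centralBinom_le {M p : ℕ} (hM : 2 < M) (hp : p.Prime) :
    p ^ M.centralBinom.factorization p ≤ (if p ≤ (2 * M).sqrt then 2 * M else 1) *
      (if p ≤ 2 * M / 3 then p else 1) * (if M < p then 2 * M else 1) := by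
  have hle : p ^ M.centralBinom.factorization p ≤ 2 * M :=
    Nat.pow_factorization_choose_le (by lia)
  have hone : ∀ {P : Prop} [Decidable P] {m : ℕ}, 1 ≤ m → 1 ≤ if P then m else 1 := by
    intros; split_ifs <;> lia
  by_cases hsqrt : p ≤ (2 * M).sqrt
  · rw [if_pos hsqrt, mul_assoc]
    exact hle.trans (Nat.le_mul_of_pos_right _ (Nat.mul_pos (hone hp.one_le) (hone (by lia))))
  rw [if_neg hsqrt, one_mul]
  by_cases hlarge : M < p
  · rw [if_pos hlarge]
    exact hle.trans (Nat.le_mul_of_pos_left _ (hone hp.one_le))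
  rw [if_neg hlarge, mul_one]
  split_ifs with hthird
  · exact (Nat.pow_le_pow_right hp.pos
      (Nat.factorization_choose_le_one (Nat.sqrt_lt'.1 (not_le.1 hsqrt)))).trans_eq (pow_one p)
  · rw [Nat.factorization_centralBinom_of_two_mul_self_lt_three_mul hM (by lia) (by lia), pow_zero]

/-- Erdős's estimate in the proof of Bertrand's postulate, without assuming that `(M, 2 * M]`
contains no primes. -/
theorem centralBinom_le_mul_pow_card_primes {M : ℕ} (hM : 2 < M) :
    M.centralBinom ≤ (2 * M) ^ (2 * M).sqrt * 4 ^ (2 * M / 3) *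
      (2 * M) ^ #{p ∈ Ioc M (2 * M) | p.Prime} := by
  let primes : Finset ℕ := {p ∈ range (2 * M + 1) | p.Prime}
  have hM0 : 0 < 2 * M := by lia
  calc M.centralBinom = ∏ p ∈ primes, p ^ M.centralBinom.factorization p := by
        rw [prod_filter_of_ne, Nat.prod_pow_factorization_centralBinom]
        intro p _ hne
        contrapose! hne
        rw [Nat.factorization_eq_zero_of_not_prime _ hne, pow_zero]
    _ ≤ ∏ p ∈ primes, (if p ≤ (2 * M).sqrt then 2 * M else 1) *
          (if p ≤ 2 * M / 3 then p else 1) * (if M < p then 2 * M else 1) :=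
        prod_le_prod' fun p hp ↦ pow_factorization_centralBinom_le hM (mem_filter.1 hp).2
    _ = (2 * M) ^ #{p ∈ primes | p ≤ (2 * M).sqrt} * (∏ p ∈ primes with p ≤ 2 * M / 3, p) *
          (2 * M) ^ #{p ∈ primes | M < p} := by
        rw [prod_mul_distrib, prod_mul_distrib]
        simp only [← prod_filter, prod_const]
    _ ≤ _ := by
        gcongr
        · calc #{p ∈ primes | p ≤ (2 * M).sqrt} ≤ #(Icc 1 (2 * M).sqrt) :=
                card_le_card fun p hp ↦ by
                  obtain ⟨hp, hps⟩ := mem_filter.1 hp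
                  exact mem_Icc.2 ⟨(mem_filter.1 hp).2.one_le, hps⟩
            _ = (2 * M).sqrt := Nat.card_Icc 1 _
        · refine (primorial_le_four_pow (2 * M / 3)).trans' (prod_le_prod_of_subset_of_one_le'
            (fun p hp ↦ ?_) fun p hp _ ↦ (mem_filter.1 hp).2.one_le)
          obtain ⟨hp, hp3⟩ := mem_filter.1 hp
          exact mem_filter.2 ⟨by simpa [Nat.lt_succ_iff] using hp3, (mem_filter.1 hp).2⟩
        · intro p hp
          simp only [primes, mem_filter, mem_range, mem_Ioc] at hp ⊢
          lia

theorem le_card_primes_mul_log {M : ℕ} (hM : 4 ≤ M) :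
    M * log 4 / 3 ≤ (√(2 * M) + 1 + #{p ∈ Ioc M (2 * M) | p.Prime}) * log (2 * M) := by
  set k := #{p ∈ Ioc M (2 * M) | p.Prime}
  have hM4 : (4 : ℝ) ≤ M := by exact_mod_cast hM
  have hpow : (4 : ℝ) ^ M ≤
      M * ((2 * M) ^ (2 * M).sqrt * 4 ^ (2 * M / 3) * (2 * M) ^ k) := by
    exact_mod_cast (Nat.four_pow_lt_mul_centralBinom M hM).le.trans
      (Nat.mul_le_mul_left M (centralBinom_le_mul_pow_card_primes (by lia)))
  have hlog : M * log 4 ≤ log M + ((2 * M).sqrt * log (2 * M) + (2 * M / 3 : ℕ) * log 4 +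
      k * log (2 * M)) := by
    have := log_le_log (by positivity) hpow
    rwa [log_mul (by positivity) (by positivity), log_mul (by positivity) (by positivity),
      log_mul (by positivity) (by positivity), log_pow, log_pow, log_pow, log_pow] at this
  have hthird : ((2 * M / 3 : ℕ) : ℝ) * log 4 ≤ 2 * M / 3 * log 4 :=
    mul_le_mul_of_nonneg_right (by simpa using Nat.cast_div_le (m := 2 * M) (n := 3) (α := ℝ))
      (log_nonneg (by norm_num))
  have hsqrt : ((2 * M).sqrt : ℝ) * log (2 * M) ≤ √(2 * M) * log (2 * M) := by
    gcongr
    · exact log_nonneg (by linarith)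
    · simpa using nat_sqrt_le_real_sqrt (a := 2 * M)
  have hlogM : log M ≤ log (2 * M) := by gcongr; linarith
  linarith

theorem le_card_middlePrimes_mul_log {n : ℕ} (hn : 16 ≤ n) :
    n ≤ 16 * (√n + 1 + #(middlePrimes n)) * log n := by
  have hdouble : 2 * ((n / 4 : ℕ) : ℝ) ≤ n := by
    have : 2 * (n / 4) ≤ n := by lia
    exact_mod_cast this
  have hquarter : (n : ℝ) ≤ 4 * (n / 4 : ℕ) + 3 := by
    have : n ≤ 4 * (n / 4) + 3 := by lia
    exact_mod_cast this
  have hquarter0 : (4 : ℝ) ≤ (n / 4 : ℕ) := by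
    have : 4 ≤ n / 4 := by lia
    exact_mod_cast this
  have hsub : {p ∈ Ioc (n / 4) (2 * (n / 4)) | p.Prime} ⊆ middlePrimes n :=
    filter_subset_filter _ (Ioc_subset_Ioc_right (by lia))
  have hlog4 : 1 ≤ log 4 := by
    rw [le_log_iff_exp_le (by norm_num)]
    linarith [exp_one_lt_d9]
  have hchebyshev : (n / 4 : ℕ) * log 4 / 3 ≤ (√n + 1 + #(middlePrimes n)) * log n := by
    refine (le_card_primes_mul_log (by lia)).trans ?_
    gcongr
    exact log_nonneg (by linarith)
  nlinarith

theorem eventually_ceil_rpow_le_card_middlePrimes {a : ℝ} (ha : a < 1) :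
    ∀ᶠ n : ℕ in atTop, ⌈(n : ℝ) ^ a⌉₊ ≤ #(middlePrimes n) := by
  have hb : max a (1 / 2) < 1 := max_lt ha (by norm_num)
  filter_upwards [eventually_mul_rpow_mul_log_le hb 49, eventually_ge_atTop 16] with n hlog hn
  by_contra! hlt
  have hn16 : (16 : ℝ) ≤ n := by exact_mod_cast hn
  have hcard : (#(middlePrimes n) : ℝ) ≤ n ^ max a (1 / 2) :=
    (Nat.lt_ceil.1 hlt).le.trans (rpow_le_rpow_of_exponent_le (by linarith) (le_max_left ..))
  have hsqrt : √n ≤ (n : ℝ) ^ max a (1 / 2) := by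
    rw [sqrt_eq_rpow]
    exact rpow_le_rpow_of_exponent_le (by linarith) (le_max_right ..)
  have hone : 1 ≤ (n : ℝ) ^ max a (1 / 2) := one_le_rpow (by linarith) (by positivity)
  have hlog0 : 0 < log n := log_pos (by linarith)
  rw [rpow_one] at hlog
  have := calc (n : ℝ) ≤ 16 * (√n + 1 + #(middlePrimes n)) * log n :=
        le_card_middlePrimes_mul_log hn
    _ ≤ 16 * (n ^ max a (1 / 2) + n ^ max a (1 / 2) + n ^ max a (1 / 2)) * log n := by gcongr
    _ = 48 * n ^ max a (1 / 2) * log n := by ring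
    _ < 49 * n ^ max a (1 / 2) * log n := by gcongr; norm_num
  linarith

end PrimeSupply

section Asymptotics

open Finset

theorem exists_two_pow_card_oddPrimes_dvd_le {κ : ℝ} (hκ : 0 < κ) : ∃ C : ℝ, ∀ n : ℕ,
    ∀ m ∈ Ioc 0 n, (2 : ℝ) ^ #{p ∈ oddPrimes n | p ∣ m} ≤ C * (n : ℝ) ^ κ := by
  obtain ⟨K, hK⟩ := eventually_atTop.1
    ((tendsto_rpow_atTop hκ).comp tendsto_natCast_atTop_atTop |>.eventually_ge_atTop (2 : ℝ))
  refine ⟨2 ^ K, fun n m hm ↦ ?_⟩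
  obtain ⟨hm0, hmn⟩ := mem_Ioc.1 hm
  set T : Finset ℕ := {p ∈ oddPrimes n | p ∣ m}
  have hprime : ∀ p ∈ T, p.Prime := fun p hp ↦ (mem_oddPrimes.1 (mem_filter.1 hp).1).2
  have hprod : (∏ p ∈ T, (p : ℝ)) ≤ n := by
    have hdvd : ∏ p ∈ T, p ∣ m :=
      (prod_oddPrimes_dvd_iff (filter_subset ..)).2 fun p hp ↦ (mem_filter.1 hp).2
    rw [← Nat.cast_prod]
    exact_mod_cast (Nat.le_of_dvd hm0 hdvd).trans hmn
  have hsmall : #{p ∈ T | p < K} ≤ K := by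
    simpa using card_le_card (t := range K) fun p hp ↦ mem_range.2 (mem_filter.1 hp).2
  calc (2 : ℝ) ^ #T = ∏ p ∈ T, 2 := (prod_const 2).symm
    _ ≤ ∏ p ∈ T, ((if p < K then 2 else 1) * (p : ℝ) ^ κ) := by
        gcongr with p hp
        split_ifs with h
        · have := one_le_rpow (by exact_mod_cast (hprime p hp).one_le : (1 : ℝ) ≤ p) hκ.le
          linarith
        · rw [one_mul]
          exact hK p (not_lt.1 h)
    _ = 2 ^ #{p ∈ T | p < K} * (∏ p ∈ T, (p : ℝ)) ^ κ := by
        rw [prod_mul_distrib, finsetProd_rpow _ _ fun p _ ↦ p.cast_nonneg, ← prod_filter,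
          prod_const]
    _ ≤ 2 ^ K * (n : ℝ) ^ κ := by
        gcongr
        norm_num

theorem eventually_div_sqrt_le {a κ : ℝ} (h : 2 * κ + 1 / 2 < a) (C : ℝ) :
    ∀ᶠ n : ℕ in atTop, 8 * (C * (n : ℝ) ^ κ) ^ 2 / √n ≤ (n : ℝ) ^ (a - 1) / 12 := by
  filter_upwards [eventually_mul_rpow_le (s := κ * 2 - 1 / 2) (t := a - 1) (by linarith)
    (96 * C ^ 2), eventually_gt_atTop 0] with n hn hn0
  have hn0' : (0 : ℝ) < n := by exact_mod_cast hn0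
  rw [rpow_sub hn0', rpow_mul hn0'.le, rpow_ofNat, ← sqrt_eq_rpow] at hn
  calc 8 * (C * (n : ℝ) ^ κ) ^ 2 / √n = 96 * C ^ 2 * (((n : ℝ) ^ κ) ^ 2 / √n) / 12 := by ring
    _ ≤ (n : ℝ) ^ (a - 1) / 12 := by gcongr

theorem eventually_sq_mul_div_le {a κ : ℝ} (h : a + 4 * κ < 1) (C : ℝ) :
    ∀ᶠ n : ℕ in atTop, (2 * (n : ℝ) ^ a * (2 * (C * (n : ℝ) ^ κ) ^ 2 / n)) ^ 2 ≤
      (n : ℝ) ^ (a - 1) / 4 := by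
  filter_upwards [eventually_mul_rpow_le (s := a * 2 + κ * 4 - 2) (t := a - 1) (by linarith)
    (64 * C ^ 4), eventually_gt_atTop 0] with n hn hn0
  have hn0' : (0 : ℝ) < n := by exact_mod_cast hn0
  rw [rpow_sub hn0', rpow_add hn0', rpow_mul hn0'.le, rpow_mul hn0'.le, rpow_ofNat, rpow_ofNat,
    rpow_ofNat] at hn
  calc (2 * (n : ℝ) ^ a * (2 * (C * (n : ℝ) ^ κ) ^ 2 / n)) ^ 2
      = 64 * C ^ 4 * (((n : ℝ) ^ a) ^ 2 * ((n : ℝ) ^ κ) ^ 4 / n ^ 2) / 4 := by ring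
    _ ≤ (n : ℝ) ^ (a - 1) / 4 := by gcongr

theorem one_le_log_natCast {n : ℕ} (hn : 3 ≤ n) : 1 ≤ log n := by
  rw [le_log_iff_exp_le (by positivity)]
  exact exp_one_lt_three.le.trans (by exact_mod_cast hn)

theorem exp_le_coprimePermCount_of_card_le {n : ℕ} (hn : 3 ≤ n) {Q : Finset ℕ}
    (hQ : Q ⊆ middlePrimes n) {x G : ℝ} (hx0 : 0 < x) (hx : 20 * x ≤ 1) (hlower : n * x ≤ #Q)
    (hupper : #Q ≤ 2 * (n * x)) (hG : ∀ m ∈ Ioc 0 n, 2 ^ #{p ∈ oddPrimes n | p ∣ m} ≤ G)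
    (hη : 8 * G ^ 2 / √n ≤ x / 12) (hρ : (2 * (n * x) * (2 * G ^ 2 / n)) ^ 2 ≤ x / 4) :
    exp (n * log n + n * log coprimeConst - n - 17 * (n * x) * log n) ≤ coprimePermCount n := by
  have hn0 : (0 : ℝ) < n := by positivity
  have hρx : (#Q * (2 * G ^ 2 / n)) ^ 2 ≤ x / 4 := hρ.trans' (by gcongr)
  have hmass : x ≤ #Q * (1 / n) := by rwa [mul_one_div, le_div_iff₀' hn0]
  have hcard : 5 * #Q ≤ n / 2 := by
    have : (10 * #Q : ℝ) ≤ n := by nlinarith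
    have : 10 * #Q ≤ n := by exact_mod_cast this
    lia
  have hlog : 1 ≤ log n := one_le_log_natCast hn
  have hρ4 : #Q * (2 * G ^ 2 / n) ≤ 1 / 4 :=
    (sq_le_sq₀ (by positivity) (by norm_num)).1 (by linarith)
  refine (exp_le_exp.2 ?_).trans (exp_le_coprimePermCount hQ
    (card_pos.1 (by exact_mod_cast (by positivity : 0 < n * x).trans_le hlower)) hcard hG rfl
    (by linarith) (by linarith) (by linarith))
  have hcardlog : 8 * #Q * log n ≤ 16 * (n * x) * log n := by
    gcongr ?_ * log n
    linarith
  have hηlog : 4 * (8 * G ^ 2 / √n) * n ≤ n * x * log n := by nlinarith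
  linarith [log_add_log_coprimeConst_le (n := n) (by lia)]

/-- The kernel is doubly stochastic up to an error of order `n ^ (2κ - 1/2)`, while `n ^ a` primes
can correct a defect of order `n ^ (a - 1)` per row; hence the restriction `a > 1/2`. -/
theorem eventually_exp_le_coprimePermCount {a : ℝ} (ha : 1 / 2 < a) (ha1 : a < 1) :
    ∀ᶠ n : ℕ in atTop, exp (n * log n + n * log coprimeConst - n -
      17 * (n : ℝ) ^ a * log n) ≤ coprimePermCount n := by
  obtain ⟨κ, hκ0, hκ⟩ := exists_between (lt_min (by linarith : 0 < (a - 1 / 2) / 2)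
    (by linarith : 0 < (1 - a) / 4))
  obtain ⟨hκa, hκ1⟩ := lt_min_iff.1 hκ
  obtain ⟨C, hC⟩ := exists_two_pow_card_oddPrimes_dvd_le hκ0
  filter_upwards [eventually_ceil_rpow_le_card_middlePrimes ha1,
    eventually_div_sqrt_le (by linarith : 2 * κ + 1 / 2 < a) C,
    eventually_sq_mul_div_le (by linarith : a + 4 * κ < 1) C,
    eventually_mul_rpow_le (by linarith : a - 1 < 0) 20, eventually_ge_atTop 3]
    with n hprimes hη hρ hsmall hn
  obtain ⟨Q, hQ, hQcard⟩ := exists_subset_card_eq hprimes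
  have hn0 : (0 : ℝ) < n := by positivity
  have hn1 : (1 : ℝ) ≤ n := by exact_mod_cast (by lia : 1 ≤ n)
  have hceil : (#Q : ℝ) < (n : ℝ) ^ a + 1 := hQcard ▸ Nat.ceil_lt_add_one (by positivity)
  have hone : 1 ≤ (n : ℝ) ^ a := one_le_rpow hn1 (by linarith)
  have hpow : (n : ℝ) ^ a = n * (n : ℝ) ^ (a - 1) := by rw [rpow_sub_one hn0.ne']; field_simp
  have hlower : (n : ℝ) ^ a ≤ #Q := hQcard ▸ Nat.le_ceil _
  rw [rpow_zero] at hsmall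
  rw [hpow] at hρ hceil hone hlower ⊢
  exact exp_le_coprimePermCount_of_card_le hn hQ (by positivity) hsmall hlower (by linarith)
    (hC n) hη hρ

theorem log_factorial_le {n : ℕ} (hn : n ≠ 0) :
    log n.factorial ≤ n * log n - n + log n / 2 + 1 := by
  obtain ⟨k, rfl⟩ := Nat.exists_eq_succ_of_ne_zero hn
  have hle : log (Stirling.stirlingSeq (k + 1)) ≤ log (Stirling.stirlingSeq 1) :=
    log_le_log (Stirling.stirlingSeq'_pos k) (Stirling.stirlingSeq'_antitone k.zero_le)
  rw [Stirling.log_stirlingSeq_formula, Stirling.log_stirlingSeq_formula] at hle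
  rw [Nat.cast_add_one, log_mul two_ne_zero (by positivity),
    log_div (by positivity) (exp_ne_zero 1), log_exp] at hle
  simp only [Nat.factorial_one, Nat.cast_one, log_one, mul_one, one_div, log_inv, log_exp] at hle
  push_cast
  linarith

theorem factorial_mul_coprimeConst_sub_pow_le {n : ℕ} (hn : n ≠ 0) {ε : ℝ} (hε0 : 0 ≤ ε)
    (hε : ε ≤ coprimeConst) : n.factorial * (coprimeConst - ε) ^ n ≤
      exp (n * log n + n * log coprimeConst - n + log n / 2 + 1 - n * ε) := by
  have hbase : coprimeConst - ε ≤ coprimeConst * exp (-ε) := by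
    linarith [mul_le_mul_of_nonneg_left (add_one_le_exp (-ε)) coprimeConst_pos.le,
      mul_le_of_le_one_left hε0 coprimeConst_le_one]
  calc n.factorial * (coprimeConst - ε) ^ n
      ≤ exp (n * log n - n + log n / 2 + 1) * (coprimeConst * exp (-ε)) ^ n := by
        gcongr
        exact (log_le_iff_le_exp (by positivity)).1 (log_factorial_le hn)
    _ = _ := by
        rw [← exp_log coprimeConst_pos, ← exp_add, ← exp_nat_mul, ← exp_add, log_exp]
        ring_nf

theorem eventually_exp_neg_mul_sqrt_mem_Icc {δ θ : ℝ} (hδ : 0 < δ) (hθ : 0 < θ) :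
    ∀ᶠ n : ℕ in atTop, exp (-δ * √(log n * log (log n))) ∈
      Set.Icc ((n : ℝ) ^ (-θ)) coprimeConst := by
  have hlog : Tendsto (fun n : ℕ ↦ log n) atTop atTop :=
    tendsto_log_atTop.comp tendsto_natCast_atTop_atTop
  have hsqrt : Tendsto (fun n : ℕ ↦ √(log n * log (log n))) atTop atTop :=
    tendsto_sqrt_atTop.comp (hlog.atTop_mul_atTop₀ (tendsto_log_atTop.comp hlog))
  have hexp := tendsto_exp_atBot.comp (hsqrt.const_mul_atTop_of_neg (neg_neg_of_pos hδ))
  filter_upwards [hexp.eventually_le_const coprimeConst_pos,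
    hlog.eventually (isLittleO_log_id_atTop.bound (c := (θ / δ) ^ 2) (by positivity)),
    hlog.eventually_ge_atTop 0, eventually_gt_atTop 0] with n hconst hloglog hlog0 hn
  refine ⟨?_, hconst⟩
  have hn0 : (0 : ℝ) < n := by exact_mod_cast hn
  have hle : √(log n * log (log n)) ≤ θ / δ * log n := by
    rw [sqrt_le_iff]
    refine ⟨by positivity, ?_⟩
    rw [norm_eq_abs, id, norm_of_nonneg hlog0] at hloglog
    calc log n * log (log n) ≤ log n * ((θ / δ) ^ 2 * log n) := by
          gcongr
          exact (le_abs_self _).trans hloglog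
      _ = (θ / δ * log n) ^ 2 := by ring
  rw [rpow_def_of_pos hn0, exp_le_exp]
  calc log n * -θ = -δ * (θ / δ * log n) := by field_simp
    _ ≤ -δ * √(log n * log (log n)) := mul_le_mul_of_nonpos_left hle (by linarith)

theorem coprimePermCount_lower_general {θ : ℝ} (hθ0 : 0 < θ) (hθ : θ < 1 / 2) :
    ∀ᶠ n : ℕ in atTop,
      (n.factorial : ℝ) * (coprimeConst - (n : ℝ) ^ (-θ)) ^ n ≤ coprimePermCount n := by
  obtain ⟨a, ha, haθ⟩ := exists_between (by linarith : 1 / 2 < 1 - θ)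
  filter_upwards [eventually_exp_le_coprimePermCount ha (by linarith),
    eventually_mul_rpow_mul_log_le haθ 20,
    (tendsto_rpow_neg_atTop hθ0).comp tendsto_natCast_atTop_atTop
      |>.eventually_le_const coprimeConst_pos,
    eventually_ge_atTop 3] with n hcount hlog hconst hn
  have hn1 : (1 : ℝ) ≤ n := by exact_mod_cast (by lia : 1 ≤ n)
  have hlog1 : 1 ≤ log n := one_le_log_natCast hn
  have hone : 1 ≤ (n : ℝ) ^ a := one_le_rpow hn1 (by linarith)
  have hpow : n * (n : ℝ) ^ (-θ) = (n : ℝ) ^ (1 - θ) := by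
    rw [sub_eq_add_neg, rpow_add (by linarith), rpow_one]
  have herror : 0 ≤ (n : ℝ) ^ (-θ) := by positivity
  refine (factorial_mul_coprimeConst_sub_pow_le (by lia) herror hconst).trans
    ((exp_le_exp.2 ?_).trans hcount)
  rw [hpow]
  nlinarith

end Asymptotics

/-- Lower bound: there are `δ > 0` and `N` such that for all `n ≥ N`,
`C(n) ≥ n!·(c − exp(−δ√(log n log log n)))^n`. -/
theorem coprimePermCount_lower :
    ∃ δ : ℝ, 0 < δ ∧ ∃ N : ℕ, ∀ n : ℕ, N ≤ n →
      (n.factorial : ℝ) *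
          (coprimeConst - Real.exp (-δ * Real.sqrt (Real.log n * Real.log (Real.log n)))) ^ n
        ≤ (coprimePermCount n : ℝ) := by
  refine ⟨1, one_pos, eventually_atTop.1 ?_⟩
  filter_upwards [coprimePermCount_lower_general (θ := 1 / 4) (by norm_num) (by norm_num),
    eventually_exp_neg_mul_sqrt_mem_Icc one_pos (by norm_num : (0 : ℝ) < 1 / 4)]
    with n hn ⟨hpow, hconst⟩
  exact hn.trans' (by gcongr)
end
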